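/- arXiv:2209.09523 — 4 statements merged into one kernel-verified Lean document; each statement's English description precedes it below -/
import Mathlib

section
/- Let H be a complex separable Hilbert space, let ℒ = {0, M, N, H} be a subspace lattice with two atoms on H, and let ℬ be a faithful complex Banach algebra satisfying ℬ² = ℬ. Then every surjective continuous linear map φ : Alg ℒ → ℬ which preserves zero products (xy = 0 implies φ(x)φ(y) = 0) is a weighted homomorphism. -/
open scoped Topology


/-- closure properties -/
structure ZPGood {A : Type*} [NormedRing A] [NormedAlgebra ℂ A] (S : Subalgebra ℂ A)
    (G : A → Prop) : Prop where
  add : ∀ a b, G a → G b → G (a + b)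
  smul : ∀ (c : ℂ) a, G a → G (c • a)
  mul : ∀ a b, G a → G b → G (a * b)
  idem : ∀ q, q ∈ S → q * q = q → G q
  closed : ∀ t, t ∈ S → (∀ ε > 0, ∃ t', G t' ∧ ‖t - t'‖ < ε) → G t

/-- the ideal part -/
def ZPJ {A : Type*} [NormedRing A] [NormedAlgebra ℂ A] (S : Subalgebra ℂ A)
    (G : A → Prop) (t : A) : Prop := t ∈ S ∧ ∀ x ∈ S, ∀ y ∈ S, G (x * t * y)

section
variable {A : Type*} [NormedRing A] [NormedAlgebra ℂ A] {S : Subalgebra ℂ A} {G : A → Prop}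

theorem ZPGood.sub (h : ZPGood S G) {a b : A} (ha : G a) (hb : G b) : G (a - b) := by
  have := h.add a _ ha (h.smul (-1) b hb)
  simpa [sub_eq_add_neg] using this

theorem ZPGood.sum (h : ZPGood S G) {ι : Type*} (s : Finset ι) (f : ι → A)
    (hf : ∀ i ∈ s, G (f i)) : G (∑ i ∈ s, f i) := by
  classical
  induction s using Finset.induction_on with
  | empty => simpa using h.idem 0 S.zero_mem (by simp)
  | insert i s hi ih =>
    rw [Finset.sum_insert hi]
    exact h.add _ _ (hf i (by simp)) (ih fun j hj => hf j (by simp [hj]))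

theorem ZPGood.off (h : ZPGood S G) {q a : A} (hq : q ∈ S) (hqq : q * q = q) (ha : a ∈ S) :
    G (q * a * (1 - q)) := by
  have h1 : (1 - q) * q = 0 := by rw [sub_mul, hqq, one_mul, sub_self]
  have h2 : G (q + q * a * (1 - q)) := by
    apply h.idem
    · exact S.add_mem hq (S.mul_mem (S.mul_mem hq ha) (S.sub_mem S.one_mem hq))
    · have e1 : q * (q * a * (1 - q)) = q * a * (1 - q) := by simp only [← mul_assoc, hqq]
      have e2 : (q * a * (1 - q)) * q = 0 := by rw [mul_assoc, h1, mul_zero]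
      have e3 : (q * a * (1 - q)) * (q * a * (1 - q)) = 0 := by
        rw [← mul_assoc, ← mul_assoc, e2, zero_mul, zero_mul]
      rw [add_mul, mul_add, mul_add, hqq, e1, e2, e3, add_zero, add_zero]
  have := h.sub h2 (h.idem q hq hqq)
  simpa using this

theorem ZPGood.J_off (h : ZPGood S G) {q a : A} (hq : q ∈ S) (hqq : q * q = q) (ha : a ∈ S) :
    ZPJ S G (q * a * (1 - q)) := by
  set p := 1 - q with hp
  have hpS : p ∈ S := S.sub_mem S.one_mem hq
  have hpp : p * p = p := by rw [hp]; noncomm_ring; rw [hqq]; abel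
  have hq1 : q = 1 - p := by rw [hp]; abel
  have hsum : q + p = 1 := by rw [hp]; abel
  -- type one
  have key : ∀ b ∈ S, ∀ y ∈ S, G (q * b * p * y) := by
    intro b hb y hy
    have e : q * b * p * y = q * (b * p * y) * p + (q * b * p) * (p * y * q) := by
      calc q * b * p * y = q * b * p * y * (q + p) := by rw [hsum, mul_one]
        _ = q * (b * p * y) * p + (q * b * p) * (y * q) := by noncomm_ring
        _ = q * (b * p * y) * p + (q * b * (p * p)) * (y * q) := by rw [hpp]
        _ = _ := by noncomm_ring
    rw [e]
    refine h.add _ _ (h.off hq hqq (S.mul_mem (S.mul_mem hb hpS) hy)) (h.mul _ _ (h.off hq hqq hb) ?_)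
    have := h.off hpS hpp hy
    rwa [← hq1] at this
  refine ⟨S.mul_mem (S.mul_mem hq ha) hpS, fun x hx y hy => ?_⟩
  have e : x * (q * a * p) * y = q * (x * q * a) * p * y + (p * x * q) * (q * a * p * y) := by
    calc x * (q * a * p) * y = (q + p) * (x * ((q * q) * a * p) * y) := by
          rw [hsum, one_mul, hqq]
      _ = q * (x * (q * q) * a) * p * y + (p * x * q) * (q * a * p * y) := by noncomm_ring
      _ = _ := by rw [hqq]
  rw [e]
  refine h.add _ _ (key _ (S.mul_mem (S.mul_mem hx hq) ha) y hy) (h.mul _ _ ?_ (key a ha y hy))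
  have := h.off hpS hpp hx
  rwa [← hq1] at this

theorem ZPGood.J_off' (h : ZPGood S G) {q a : A} (hq : q ∈ S) (hqq : q * q = q) (ha : a ∈ S) :
    ZPJ S G ((1 - q) * a * q) := by
  have := h.J_off (q := 1 - q) (S.sub_mem S.one_mem hq) (by noncomm_ring; rw [hqq]; abel) ha
  simpa using this

theorem ZPJ.good {t : A} (h : ZPJ S G t) : G t := by
  simpa using h.2 1 S.one_mem 1 S.one_mem

theorem ZPJ.mul_left {t x : A} (h : ZPJ S G t) (hx : x ∈ S) : ZPJ S G (x * t) := by
  refine ⟨S.mul_mem hx h.1, fun a ha b hb => ?_⟩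
  have := h.2 (a * x) (S.mul_mem ha hx) b hb
  simpa only [mul_assoc] using this

theorem ZPJ.mul_right {t x : A} (h : ZPJ S G t) (hx : x ∈ S) : ZPJ S G (t * x) := by
  refine ⟨S.mul_mem h.1 hx, fun a ha b hb => ?_⟩
  have := h.2 a ha (x * b) (S.mul_mem hx hb)
  simpa only [mul_assoc] using this

theorem ZPJ.add (hG : ZPGood S G) {t u : A} (h : ZPJ S G t) (h' : ZPJ S G u) :
    ZPJ S G (t + u) := by
  refine ⟨S.add_mem h.1 h'.1, fun a ha b hb => ?_⟩
  rw [mul_add, add_mul]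
  exact hG.add _ _ (h.2 a ha b hb) (h'.2 a ha b hb)

/-- two orthogonal equivalent idempotents lie in the ideal -/
theorem ZPGood.J_half (h : ZPGood S G) {q r s : A} (hq : q ∈ S) (hr : r ∈ S) (hs : s ∈ S)
    (hqq : q * q = q) (hqr : r * q = 0) (he : q * s * r * s * q = q) : ZPJ S G q := by
  have h1 : ZPJ S G (q * (s * r) * (1 - q)) := h.J_off hq hqq (S.mul_mem hs hr)
  have h2 : q * (s * r) * (1 - q) = q * s * r := by
    rw [mul_sub, mul_one, mul_assoc q (s * r) q, mul_assoc s r q, hqr]; simp [mul_assoc]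
  rw [h2] at h1
  have := h1.mul_right (S.mul_mem hs hq)
  rw [← mul_assoc, he] at this
  exact this

/-- reduction to corners -/
theorem ZPGood.corner_two (h : ZPGood S G) {e f : A} (he : e ∈ S) (hee : e * e = e)
    (hf : f = 1 - e) {t : A} (ht : t ∈ S) (h1 : G (e * t * e)) (h2 : G (f * t * f)) : G t := by
  subst hf
  have e1 : t = e * t * e + (1 - e) * t * (1 - e) + (e * t * (1 - e) + (1 - e) * t * e) := by
    noncomm_ring
  rw [e1]
  exact h.add _ _ (h.add _ _ h1 h2) (h.add _ _ (h.off he hee ht) (h.J_off' he hee ht).good)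
end

section
open scoped ENNReal
variable {I : Type*}

/-- weighted substitution operators on `ℓ²` -/
theorem wop_aux (a : I → ℂ) (τ : I → I) (C : ℝ) (ha : ∀ i, ‖a i‖ ≤ C)
    (hτ : Set.InjOn τ {i | a i ≠ 0}) (x : lp (fun _ : I => ℂ) 2) (s : Finset I) :
    ∑ i ∈ s, ‖a i * x (τ i)‖ ^ (2:ℝ≥0∞).toReal ≤ (C * ‖x‖) ^ (2:ℝ≥0∞).toReal := by
  classical
  have hp : 0 < (2:ℝ≥0∞).toReal := by simp
  rcases s.eq_empty_or_nonempty with rfl | ⟨i₀, _⟩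
  · simp only [Finset.sum_empty]
    by_cases hI : Nonempty I
    · have : 0 ≤ C := (norm_nonneg _).trans (ha hI.some)
      positivity
    · have : x = 0 := by ext i; exact (hI ⟨i⟩).elim
      simp [this]
  have hC : 0 ≤ C := (norm_nonneg _).trans (ha i₀)
  calc ∑ i ∈ s, ‖a i * x (τ i)‖ ^ (2:ℝ≥0∞).toReal
      = ∑ i ∈ s.filter (fun i => a i ≠ 0), ‖a i * x (τ i)‖ ^ (2:ℝ≥0∞).toReal := by
        symm
        apply Finset.sum_filter_of_ne
        intro i _ hi h0
        apply hi; simp [h0]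
    _ ≤ ∑ i ∈ s.filter (fun i => a i ≠ 0), C ^ (2:ℝ≥0∞).toReal * ‖x (τ i)‖ ^ (2:ℝ≥0∞).toReal := by
        apply Finset.sum_le_sum
        intro i _
        rw [norm_mul, Real.mul_rpow (norm_nonneg _) (norm_nonneg _)]
        gcongr
        exact ha i
    _ = C ^ (2:ℝ≥0∞).toReal * ∑ j ∈ (s.filter (fun i => a i ≠ 0)).image τ,
          ‖x j‖ ^ (2:ℝ≥0∞).toReal := by
        rw [Finset.sum_image, Finset.mul_sum]
        intro i hi j hj hij
        simp only [Finset.coe_filter, Set.mem_ofPred_eq] at hi hj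
        exact hτ hi.2 hj.2 hij
    _ ≤ C ^ (2:ℝ≥0∞).toReal * ‖x‖ ^ (2:ℝ≥0∞).toReal := by
        gcongr
        exact lp.sum_rpow_le_norm_rpow hp x _
    _ = _ := by rw [Real.mul_rpow hC (norm_nonneg _)]

theorem wop_exists (a : I → ℂ) (τ : I → I) (C : ℝ) (hC : 0 ≤ C) (ha : ∀ i, ‖a i‖ ≤ C)
    (hτ : Set.InjOn τ {i | a i ≠ 0}) :
    ∃ T : lp (fun _ : I => ℂ) 2 →L[ℂ] lp (fun _ : I => ℂ) 2,
      (∀ x i, T x i = a i * x (τ i)) ∧ ‖T‖ ≤ C := by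
  have hp : 0 < (2:ℝ≥0∞).toReal := by simp
  let L : lp (fun _ : I => ℂ) 2 →ₗ[ℂ] lp (fun _ : I => ℂ) 2 :=
    { toFun := fun x => ⟨fun i => a i * x (τ i), memℓp_gen' (wop_aux a τ C ha hτ x)⟩
      map_add' := by
        intro x y; ext i
        change a i * (x (τ i) + y (τ i)) = a i * x (τ i) + a i * y (τ i)
        ring
      map_smul' := by
        intro c x; ext i
        change a i * (c * x (τ i)) = c * (a i * x (τ i))
        ring }
  have hL : ∀ x, ‖L x‖ ≤ C * ‖x‖ := fun x =>
    lp.norm_le_of_forall_sum_le hp (by positivity) (wop_aux a τ C ha hτ x)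
  exact ⟨L.mkContinuous C hL, fun x i => rfl, LinearMap.mkContinuous_norm_le _ hC _⟩

/-- basis vectors -/
noncomputable def eb [DecidableEq I] (j : I) : lp (fun _ : I => ℂ) 2 := lp.single 2 j (1:ℂ)

theorem eb_apply [DecidableEq I] (i j : I) : (eb j : lp (fun _ : I => ℂ) 2) i = if i = j then 1 else 0 := by
  simp only [eb, lp.single_apply, Pi.single_apply]

theorem norm_eb [DecidableEq I] (j : I) : ‖(eb j : lp (fun _ : I => ℂ) 2)‖ = 1 := by
  simp [eb, lp.norm_single]

theorem ext_eb [DecidableEq I] {E : Type*} [NormedAddCommGroup E] [NormedSpace ℂ E]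
    {T U : lp (fun _ : I => ℂ) 2 →L[ℂ] E}
    (h : ∀ j, T (eb j) = U (eb j)) : T = U := by
  ext x
  have hx := lp.hasSum_single (p := 2) (by simp) x
  have e : ∀ j, lp.single 2 j (x j) = (x j) • (eb j : lp (fun _ : I => ℂ) 2) := by
    intro j
    rw [eb, ← lp.single_smul]; simp
  have h1 := hx.mapL T
  have h2 := hx.mapL U
  have : (fun j => T (lp.single 2 j (x j))) = fun j => U (lp.single 2 j (x j)) := by
    funext j; rw [e, map_smul, map_smul, h]
  rw [this] at h1
  exact h1.unique h2

theorem ext_entry [DecidableEq I] {T U : lp (fun _ : I => ℂ) 2 →L[ℂ] lp (fun _ : I => ℂ) 2}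
    (h : ∀ i j, T (eb j) i = U (eb j) i) : T = U :=
  ext_eb fun j => by ext i; exact h i j

theorem entry_le [DecidableEq I] (T : lp (fun _ : I => ℂ) 2 →L[ℂ] lp (fun _ : I => ℂ) 2) (i j : I) :
    ‖T (eb j) i‖ ≤ ‖T‖ := by
  refine (lp.norm_apply_le_norm (by simp) _ i).trans ?_
  have := T.le_opNorm (eb j)
  rwa [norm_eb, mul_one] at this
end
section
variable {I : Type*}

/-- l2 -/
noncomputable abbrev L2 (I : Type*) := lp (fun _ : I => ℂ) 2

open Classical in
/-- weighted substitution -/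
noncomputable def wop (a : I → ℂ) (τ : I → I) : L2 I →L[ℂ] L2 I :=
  if h : ∃ T : L2 I →L[ℂ] L2 I, (∀ x i, T x i = a i * x (τ i)) then h.choose else 0

theorem wop_apply {a : I → ℂ} {τ : I → I} (C : ℝ) (ha : ∀ i, ‖a i‖ ≤ C)
    (hτ : Set.InjOn τ {i | a i ≠ 0}) (x : L2 I) (i : I) : wop a τ x i = a i * x (τ i) := by
  have h : ∃ T : L2 I →L[ℂ] L2 I, (∀ x i, T x i = a i * x (τ i)) := by
    have hC : 0 ≤ C := (norm_nonneg _).trans (ha i)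
    obtain ⟨T, hT, _⟩ := wop_exists a τ C hC ha hτ
    exact ⟨T, hT⟩
  rw [wop, dif_pos h]
  exact h.choose_spec x i

open Classical in
/-- coordinate projection -/
noncomputable def dg (p : I → Prop) : L2 I →L[ℂ] L2 I := wop (fun i => if p i then 1 else 0) id

open Classical in
theorem dg_apply (p : I → Prop) (x : L2 I) (i : I) : dg p x i = if p i then x i else 0 := by
  rw [dg, wop_apply 1 _ (Function.injective_id.injOn)]
  · simp
  · intro i; split_ifs <;> simp

theorem dg_mul_dg (p q : I → Prop) : dg p * dg q = dg (fun i => p i ∧ q i) := by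
  classical
  ext x i
  rw [mul_apply_eq_comp, dg_apply, dg_apply, dg_apply]
  by_cases h : p i <;> by_cases h' : q i <;> simp [h, h']

theorem dg_idem (p : I → Prop) : dg p * dg p = dg p := by
  rw [dg_mul_dg]; simp

theorem dg_eb [DecidableEq I] (p : I → Prop) [DecidablePred p] (j : I) :
    dg p (eb j) = if p j then eb j else 0 := by
  ext i
  rw [dg_apply, eb_apply]
  by_cases h : i = j
  · subst h; by_cases h' : p i <;> simp [h', eb_apply]
  · by_cases h' : p j <;> simp [h', h, eb_apply]

theorem dg_rank_one (p : I → Prop) (hp : ∀ i j, p i → p j → i = j) (X : L2 I →L[ℂ] L2 I) :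
    ∃ c : ℂ, dg p * X * dg p = c • dg p := by
  classical
  by_cases h : ∃ i, p i
  · obtain ⟨i, hi⟩ := h
    refine ⟨X (eb i) i, ext_entry fun k j => ?_⟩
    rw [mul_assoc, mul_apply_eq_comp, mul_apply_eq_comp, dg_apply,
      smul_apply, dg_eb]
    by_cases hj : p j
    · obtain rfl := hp _ _ hi hj
      simp only [hj, if_true]
      by_cases hk : p k
      · obtain rfl := hp _ _ hi hk
        simp [hk, eb_apply]
      · have : k ≠ i := fun h => hk (h ▸ hi)
        simp [hk, eb_apply, this]
    · simp [hj]
  · have : dg p = 0 := by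
      ext x i
      rw [dg_apply, if_neg (fun hi => h ⟨i, hi⟩)]; rfl
    exact ⟨0, by simp [this]⟩

theorem halve_type (X : Type*) : ∃ (f : X → X) (P : X → Prop), (∀ x, f (f x) = x) ∧
    (∀ x, P x → ¬ P (f x)) ∧ (∀ x, f x ≠ x → P x ∨ P (f x)) ∧
    (∀ x y, f x = x → f y = y → x = y) := by
  classical
  -- transport
  have tr : ∀ {Y : Type _} (_ : X ≃ Y), (∃ (f : Y → Y) (P : Y → Prop), (∀ x, f (f x) = x) ∧
    (∀ x, P x → ¬ P (f x)) ∧ (∀ x, f x ≠ x → P x ∨ P (f x)) ∧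
    (∀ x y, f x = x → f y = y → x = y)) → ∃ (f : X → X) (P : X → Prop), (∀ x, f (f x) = x) ∧
    (∀ x, P x → ¬ P (f x)) ∧ (∀ x, f x ≠ x → P x ∨ P (f x)) ∧
    (∀ x y, f x = x → f y = y → x = y) := by
    rintro Y e ⟨f, P, h1, h2, h3, h4⟩
    refine ⟨fun x => e.symm (f (e x)), fun x => P (e x), ?_, ?_, ?_, ?_⟩
    · intro x; simp [h1]
    · intro x hx; simpa using h2 _ hx
    · intro x hx
      simp only [Equiv.apply_symm_apply]
      apply h3
      intro h; apply hx; simp [h]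
    · intro x y hx hy
      have hx' : f (e x) = e x := by rw [Equiv.symm_apply_eq] at hx; exact hx
      have hy' : f (e y) = e y := by rw [Equiv.symm_apply_eq] at hy; exact hy
      exact e.injective (h4 _ _ hx' hy')
  cases finite_or_infinite X
  · obtain ⟨n, ⟨e⟩⟩ := Finite.exists_equiv_fin X
    rcases Nat.even_or_odd' n with ⟨k, rfl | rfl⟩
    · let e2 : X ≃ Fin k ⊕ Fin k := e.trans ((finCongr (by ring)).trans finSumFinEquiv.symm)
      have := tr (Y := ULift (Fin k ⊕ Fin k)) (e2.trans Equiv.ulift.symm)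
      apply this
      refine ⟨fun x => ⟨x.down.swap⟩, fun x => x.down.isLeft = true, ?_, ?_, ?_, ?_⟩
      · rintro ⟨x | x⟩ <;> rfl
      · rintro ⟨x | x⟩ <;> simp
      · rintro ⟨x | x⟩ <;> simp
      · rintro ⟨x | x⟩ <;> simp
    · let e2 : X ≃ Option (Fin k ⊕ Fin k) :=
        e.trans ((finCongr (by ring)).trans ((finSuccEquiv (k + k)).trans
          (Equiv.optionCongr finSumFinEquiv.symm)))
      have := tr (Y := ULift (Option (Fin k ⊕ Fin k))) (e2.trans Equiv.ulift.symm)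
      apply this
      refine ⟨fun x => ⟨x.down.map Sum.swap⟩, fun x => ∃ y, x.down = some (Sum.inl y), ?_, ?_, ?_, ?_⟩
      · rintro ⟨_ | x | x⟩ <;> rfl
      · rintro ⟨_ | x | x⟩ <;> simp
      · rintro ⟨_ | x | x⟩ <;> simp
      · rintro ⟨_ | x | x⟩ ⟨_ | y | y⟩ <;> simp
  · have e : Nonempty (X ≃ X ⊕ X) := by
      rw [← Cardinal.eq, Cardinal.mk_sum, Cardinal.lift_id, Cardinal.add_eq_self]
      exact Cardinal.aleph0_le_mk X
    obtain ⟨e⟩ := e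
    apply tr e
    refine ⟨Sum.swap, fun x => x.isLeft = true, ?_, ?_, ?_, ?_⟩
    · rintro (x | x) <;> rfl
    · rintro (x | x) <;> simp
    · rintro (x | x) <;> simp
    · rintro (x | x) <;> simp

theorem halve_fiber (n : I → ℕ) : ∃ (f : I → I) (P : I → Prop), (∀ x, f (f x) = x) ∧
    (∀ x, P x → ¬ P (f x)) ∧ (∀ x, f x ≠ x → P x ∨ P (f x)) ∧
    (∀ x y, f x = x → f y = y → n x = n y → x = y) ∧ (∀ x, n (f x) = n x) := by
  choose f P h1 h2 h3 h4 using fun k => halve_type {i : I // n i = k}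
  have hn : ∀ x : I, n (f (n x) ⟨x, rfl⟩).1 = n x := fun x => (f (n x) ⟨x, rfl⟩).2
  -- rewriting tool
  have hf : ∀ k (y : {i : I // n i = k}), (f (n y.1) ⟨y.1, rfl⟩).1 = (f k y).1 := by
    rintro _ ⟨y, rfl⟩; rfl
  have hP : ∀ k (y : {i : I // n i = k}), P (n y.1) ⟨y.1, rfl⟩ = P k y := by
    rintro _ ⟨y, rfl⟩; rfl
  refine ⟨fun x => (f (n x) ⟨x, rfl⟩).1, fun x => P (n x) ⟨x, rfl⟩, ?_, ?_, ?_, ?_, hn⟩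
  · intro x
    dsimp only
    rw [hf, h1]
  · intro x hx
    dsimp only at hx ⊢
    rw [hP]; exact h2 _ _ hx
  · intro x hx
    dsimp only at hx ⊢
    rw [hP]
    apply h3
    intro h; exact hx (congrArg Subtype.val h)
  · intro x y hx hy hxy
    have hx' : f (n x) ⟨x, rfl⟩ = ⟨x, rfl⟩ := Subtype.ext hx
    have hy' : f (n x) ⟨y, hxy.symm⟩ = ⟨y, hxy.symm⟩ := by
      apply Subtype.ext
      rw [← hf]; exact hy
    exact congrArg Subtype.val (h4 _ _ _ hx' hy')

theorem count_aux (p : ℕ → Prop) [DecidablePred p] (N m : ℕ) (h : m < Nat.count p N) :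
    ∃ k < N, p k ∧ Nat.count p k = m := by
  induction N with
  | zero => simp at h
  | succ N ih =>
    rw [Nat.count_succ] at h
    by_cases hm : m < Nat.count p N
    · obtain ⟨k, hk, h1⟩ := ih hm
      exact ⟨k, by omega, h1⟩
    · by_cases hp : p N
      · rw [if_pos hp] at h
        exact ⟨N, by omega, hp, by omega⟩
      · rw [if_neg hp] at h; omega

theorem rank_exists (Z : I → Prop) (n : I → ℕ) (hn : ∀ i j, Z i → Z j → n i = n j → i = j) :
    ∃ r : I → ℕ, (∀ i j, Z i → Z j → r i = r j → i = j) ∧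
      (∀ i j, Z i → Z j → r i ≤ r j → r j + n i ≤ n j + r i) ∧
      (∀ i m, Z i → m < r i → ∃ j, Z j ∧ r j = m) := by
  classical
  let p : ℕ → Prop := fun m => ∃ j, Z j ∧ n j = m
  have hlt : ∀ i j, Z i → n i < n j → Nat.count p (n i) < Nat.count p (n j) := by
    intro i j hi hij
    exact Nat.count_strict_mono (⟨i, hi, rfl⟩ : p (n i)) hij
  refine ⟨fun i => Nat.count p (n i), ?_, ?_, ?_⟩
  · intro i j hi hj h
    apply hn i j hi hj
    rcases lt_trichotomy (n i) (n j) with h1 | h1 | h1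
    · have := hlt i j hi h1; dsimp only at h; omega
    · exact h1
    · have := hlt j i hj h1; dsimp only at h; omega
  · intro i j hi hj h
    have hle : n i ≤ n j := by
      by_contra h1
      have := hlt j i hj (by omega); dsimp only at h; omega
    obtain ⟨d, hd⟩ := Nat.exists_eq_add_of_le hle
    dsimp only
    rw [hd, Nat.count_add]
    have := Nat.count_le (p := fun k => p (n i + k)) (n := d)
    omega
  · intro i m hi hm
    obtain ⟨k, _, ⟨j, hj, rfl⟩, h2⟩ := count_aux p _ _ hm
    exact ⟨j, hj, h2⟩

theorem schur_aux [DecidableEq I] (Z : I → Prop) (r : I → ℕ)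
    (hr : ∀ i j, Z i → Z j → r i = r j → i = j)
    (X : L2 I →L[ℂ] L2 I) (ρ : I → I → ℂ) (h0 : ∀ i j, ρ i j ≠ 0 → Z i ∧ Z j)
    (hρ : ∀ i j, ‖ρ i j‖ ≤ (1/2 : ℝ) ^ ((r j : ℤ) - r i).natAbs) (d : ℤ) :
    ∃ V : L2 I →L[ℂ] L2 I, (∀ i j, V (eb j) i = if (r j : ℤ) - r i = d then ρ i j * X (eb j) i else 0)
      ∧ ‖V‖ ≤ (1/2 : ℝ) ^ d.natAbs * ‖X‖ := by
  classical
  let τ : I → I := fun i => if h : ∃ j, Z j ∧ (r j : ℤ) - r i = d then h.choose else i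
  have hτ : ∀ i, (∃ j, Z j ∧ (r j : ℤ) - r i = d) → Z (τ i) ∧ (r (τ i) : ℤ) - r i = d := by
    intro i h
    simp only [τ, dif_pos h]
    exact h.choose_spec
  let a : I → ℂ := fun i => if (∃ j, Z j ∧ (r j : ℤ) - r i = d) then
    ρ i (τ i) * X (eb (τ i)) i else 0
  have ha : ∀ i, ‖a i‖ ≤ (1/2 : ℝ) ^ d.natAbs * ‖X‖ := by
    intro i
    by_cases h : ∃ j, Z j ∧ (r j : ℤ) - r i = d
    · simp only [a, if_pos h, norm_mul]
      have h1 := hρ i (τ i)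
      rw [(hτ i h).2] at h1
      gcongr
      exact entry_le X i _
    · simp only [a, if_neg h, norm_zero]; positivity
  have ha0 : ∀ i, a i ≠ 0 → (∃ j, Z j ∧ (r j : ℤ) - r i = d) ∧ Z i := by
    intro i hi
    by_cases h : ∃ j, Z j ∧ (r j : ℤ) - r i = d
    · refine ⟨h, ?_⟩
      simp only [a, if_pos h] at hi
      exact (h0 i (τ i) (left_ne_zero_of_mul hi)).1
    · simp [a, if_neg h] at hi
  obtain ⟨V, hV, hVn⟩ := wop_exists a τ _ (by positivity) ha (by
    intro i hi j hj hij
    obtain ⟨hi1, hi2⟩ := ha0 i hi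
    obtain ⟨hj1, hj2⟩ := ha0 j hj
    have e1 := (hτ i hi1).2
    have e2 := (hτ j hj1).2
    rw [hij] at e1
    exact hr i j hi2 hj2 (by omega))
  refine ⟨V, ?_, hVn⟩
  intro i j
  rw [hV, eb_apply]
  by_cases hd : (r j : ℤ) - r i = d
  · rw [if_pos hd]
    by_cases hz : Z i ∧ Z j
    · have hex : ∃ j, Z j ∧ (r j : ℤ) - r i = d := ⟨j, hz.2, hd⟩
      have : τ i = j := hr _ _ (hτ i hex).1 hz.2 (by have := (hτ i hex).2; omega)
      simp only [a, if_pos hex, this]; simp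
    · have : ρ i j = 0 := by by_contra h; exact hz (h0 i j h)
      rw [this, zero_mul]
      by_cases hij : τ i = j
      · by_cases hex : ∃ j, Z j ∧ (r j : ℤ) - r i = d
        · simp [a, if_pos hex, hij, this]
        · simp [a, if_neg hex]
      · simp [hij]
  · rw [if_neg hd]
    by_cases hij : τ i = j
    · have hex : ¬ ∃ j, Z j ∧ (r j : ℤ) - r i = d := by
        intro hex; apply hd; rw [← hij]; exact (hτ i hex).2
      simp [a, if_neg hex]
    · simp [hij]

theorem summable_half_natAbs (C : ℝ) : Summable fun d : ℤ => (1/2 : ℝ) ^ d.natAbs * C := by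
  apply Summable.mul_right
  apply Summable.of_nat_of_neg
  · simpa using! summable_geometric_two
  · simpa using! summable_geometric_two

theorem schur [DecidableEq I] (Z : I → Prop) (r : I → ℕ)
    (hr : ∀ i j, Z i → Z j → r i = r j → i = j)
    (X : L2 I →L[ℂ] L2 I) (ρ : I → I → ℂ) (h0 : ∀ i j, ρ i j ≠ 0 → Z i ∧ Z j)
    (hρ : ∀ i j, ‖ρ i j‖ ≤ (1/2 : ℝ) ^ ((r j : ℤ) - r i).natAbs) :
    ∃ V : L2 I →L[ℂ] L2 I, ∀ i j, V (eb j) i = ρ i j * X (eb j) i := by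
  choose V hV hVn using schur_aux Z r hr X ρ h0 hρ
  have hs : Summable V := Summable.of_norm_bounded (summable_half_natAbs ‖X‖) hVn
  refine ⟨∑' d, V d, fun i j => ?_⟩
  have h1 : HasSum (fun d => V d (eb j) i) ((∑' d, V d) (eb j) i) := by
    have h2 := hs.hasSum.mapL (ContinuousLinearMap.apply ℂ (L2 I) (eb j))
    exact h2.mapL (lp.evalCLM ℂ (fun _ : I => ℂ) 2 i)
  have h3 : HasSum (fun d => V d (eb j) i) (ρ i j * X (eb j) i) := by
    have := hasSum_single (f := fun d => V d (eb j) i) ((r j : ℤ) - r i) (by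
      intro d hd
      rw [hV, if_neg (Ne.symm hd)])
    rwa [hV, if_pos rfl] at this
  exact h1.unique h3
end
section
variable {H : Type*} [NormedAddCommGroup H] [InnerProductSpace ℂ H]
variable {I : Type*}

/-- model of the tail -/
structure TM (M N : Submodule ℂ H) (n : I → ℕ) (w : L2 I →L[ℂ] L2 I)
    (α β : L2 I →L[ℂ] H) (γ δ : H →L[ℂ] L2 I) : Prop where
  hw : ∀ x i, w x i = (2:ℂ)⁻¹ ^ (n i) * x i
  γα : ∀ k, γ (α k) = k
  γβ : ∀ k, γ (β k) = 0
  δα : ∀ k, δ (α k) = 0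
  δβ : ∀ k, δ (β k) = k
  αN : ∀ k, α k ∈ N
  αβM : ∀ k, α k + β (w k) ∈ M
  N0 : ∀ x ∈ N, δ x = 0
  Mw : ∀ x ∈ M, δ x = w (γ x)

/-- block operators -/
noncomputable def lft (α β : L2 I →L[ℂ] H) (γ δ : H →L[ℂ] L2 I) (A Y D : L2 I →L[ℂ] L2 I) : H →L[ℂ] H :=
  α ∘L A ∘L γ + α ∘L Y ∘L δ + β ∘L D ∘L δ

/-- couple pairs -/
def cp (w A D : L2 I →L[ℂ] L2 I) : Prop := w * A = D * w

variable {α β : L2 I →L[ℂ] H} {γ δ : H →L[ℂ] L2 I} {w : L2 I →L[ℂ] L2 I} {n : I → ℕ}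
  {M N : Submodule ℂ H}

theorem lft_apply (A Y D : L2 I →L[ℂ] L2 I) (x : H) : lft α β γ δ A Y D x =
    α (A (γ x)) + α (Y (δ x)) + β (D (δ x)) := rfl

theorem lft_add (A Y D A' Y' D' : L2 I →L[ℂ] L2 I) :
    lft α β γ δ A Y D + lft α β γ δ A' Y' D' = lft α β γ δ (A + A') (Y + Y') (D + D') := by
  ext x
  simp only [lft_apply, add_apply, map_add]
  abel

theorem lft_smul (c : ℂ) (A Y D : L2 I →L[ℂ] L2 I) :
    c • lft α β γ δ A Y D = lft α β γ δ (c • A) (c • Y) (c • D) := by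
  ext x
  simp only [lft_apply, smul_apply, map_smul, smul_add]

theorem lft_sub (A Y D A' Y' D' : L2 I →L[ℂ] L2 I) :
    lft α β γ δ A Y D - lft α β γ δ A' Y' D' = lft α β γ δ (A - A') (Y - Y') (D - D') := by
  ext x
  simp only [lft_apply, sub_apply, map_sub]
  abel

theorem lft_norm_le (A D : L2 I →L[ℂ] L2 I) :
    ‖lft α β γ δ A 0 D‖ ≤ ‖α‖ * (‖A‖ * ‖γ‖) + ‖β‖ * (‖D‖ * ‖δ‖) := by
  have : lft α β γ δ A 0 D = α ∘L A ∘L γ + β ∘L D ∘L δ := by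
    simp [lft]
  rw [this]
  refine (norm_add_le _ _).trans (add_le_add ?_ ?_)
  · refine (ContinuousLinearMap.opNorm_comp_le _ _).trans ?_
    gcongr; exact ContinuousLinearMap.opNorm_comp_le _ _
  · refine (ContinuousLinearMap.opNorm_comp_le _ _).trans ?_
    gcongr; exact ContinuousLinearMap.opNorm_comp_le _ _

theorem TM.lft_mul (h : TM M N n w α β γ δ) (A Y D A' Y' D' : L2 I →L[ℂ] L2 I) :
    lft α β γ δ A Y D * lft α β γ δ A' Y' D' = lft α β γ δ (A * A') (A * Y' + Y * D') (D * D') := by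
  ext x
  simp only [mul_apply_eq_comp, lft_apply, add_apply, map_add, h.γα, h.γβ, h.δα, h.δβ, map_zero,
    add_zero, zero_add]
  abel

theorem TM.lft_mul0 (h : TM M N n w α β γ δ) (A D A' D' : L2 I →L[ℂ] L2 I) :
    lft α β γ δ A 0 D * lft α β γ δ A' 0 D' = lft α β γ δ (A * A') 0 (D * D') := by
  rw [h.lft_mul]; simp

theorem TM.w_eb [DecidableEq I] (h : TM M N n w α β γ δ) (j : I) :
    w (eb j) = (2:ℂ)⁻¹ ^ (n j) • eb j := by
  ext i
  rw [h.hw, lp.coeFn_smul, Pi.smul_apply, eb_apply]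
  by_cases hi : i = j
  · subst hi; simp
  · simp [hi]

theorem TM.w_left (h : TM M N n w α β γ δ) {A A' : L2 I →L[ℂ] L2 I} (e : w * A = w * A') : A = A' := by
  ext x i
  have := congrArg (fun T : L2 I →L[ℂ] L2 I => T x i) e
  simp only [mul_apply_eq_comp, h.hw] at this
  exact mul_left_cancel₀ (by simp) this

theorem TM.w_right (h : TM M N n w α β γ δ) {A A' : L2 I →L[ℂ] L2 I} (e : A * w = A' * w) : A = A' := by
  classical
  apply ext_eb
  intro j
  have := congrArg (fun T : L2 I →L[ℂ] L2 I => T (eb j)) e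
  simp only [mul_apply_eq_comp, h.w_eb, map_smul] at this
  exact smul_right_injective _ (by simp) this

theorem cp.mul {A D A' D' : L2 I →L[ℂ] L2 I} (h : cp w A D) (h' : cp w A' D') :
    cp w (A * A') (D * D') := by
  unfold cp at *
  rw [← mul_assoc, h, mul_assoc, h', mul_assoc]

theorem cp.add {A D A' D' : L2 I →L[ℂ] L2 I} (h : cp w A D) (h' : cp w A' D') :
    cp w (A + A') (D + D') := by
  unfold cp at *
  rw [mul_add, h, h', add_mul]

theorem cp.sub {A D A' D' : L2 I →L[ℂ] L2 I} (h : cp w A D) (h' : cp w A' D') :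
    cp w (A - A') (D - D') := by
  unfold cp at *
  rw [mul_sub, h, h', sub_mul]

theorem TM.cp_D (h : TM M N n w α β γ δ) {A D A' D' : L2 I →L[ℂ] L2 I} (hc : cp w A D)
    (hc' : cp w A' D') (e : A = A') : D = D' := by
  subst e; exact h.w_right (hc.symm.trans hc')

theorem TM.cp_A (h : TM M N n w α β γ δ) {A D A' D' : L2 I →L[ℂ] L2 I} (hc : cp w A D)
    (hc' : cp w A' D') (e : D = D') : A = A' := by
  subst e; exact h.w_left (hc.trans hc'.symm)

theorem TM.cp_wop (h : TM M N n w α β γ δ) (a : I → ℂ) (τ : I → I) (C : ℝ) (ha : ∀ i, ‖a i‖ ≤ C)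
    (hτ : Set.InjOn τ {i | a i ≠ 0}) (hn : ∀ i, n (τ i) = n i) : cp w (wop a τ) (wop a τ) := by
  unfold cp
  ext x i
  simp only [mul_apply_eq_comp]
  rw [h.hw, wop_apply C ha hτ, wop_apply C ha hτ, h.hw, hn]
  ring

theorem TM.cp_dg (h : TM M N n w α β γ δ) (p : I → Prop) : cp w (dg p) (dg p) := by
  refine h.cp_wop _ _ 1 ?_ (Function.injective_id.injOn) (fun i => rfl)
  intro i; split_ifs <;> simp

variable {S : Subalgebra ℂ (H →L[ℂ] H)} {G : (H →L[ℂ] H) → Prop}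

theorem TM.lft_mem (h : TM M N n w α β γ δ)
    (hS : ∀ T : H →L[ℂ] H, T ∈ S ↔ (∀ x ∈ M, T x ∈ M) ∧ (∀ x ∈ N, T x ∈ N))
    {A Y D : L2 I →L[ℂ] L2 I} (hc : w * A + w * (Y * w) = D * w) : lft α β γ δ A Y D ∈ S := by
  rw [hS]
  constructor
  · intro x hx
    rw [lft_apply, h.Mw x hx]
    have e : D (w (γ x)) = w (A (γ x) + Y (w (γ x))) := by
      have := congrArg (fun T : L2 I →L[ℂ] L2 I => T (γ x)) hc
      simp only [mul_apply_eq_comp, add_apply] at this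
      rw [← this, map_add]
    rw [e, ← map_add]
    exact h.αβM _
  · intro x hx
    rw [lft_apply, h.N0 x hx]
    simp only [map_zero, add_zero]
    exact h.αN _

theorem TM.cp_mem (h : TM M N n w α β γ δ)
    (hS : ∀ T : H →L[ℂ] H, T ∈ S ↔ (∀ x ∈ M, T x ∈ M) ∧ (∀ x ∈ N, T x ∈ N))
    {A D : L2 I →L[ℂ] L2 I} (hc : cp w A D) : lft α β γ δ A 0 D ∈ S :=
  h.lft_mem hS (by rw [zero_mul, mul_zero, add_zero]; exact hc)

/-- eta elements -/
theorem TM.eta_mem (h : TM M N n w α β γ δ)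
    (hS : ∀ T : H →L[ℂ] H, T ∈ S ↔ (∀ x ∈ M, T x ∈ M) ∧ (∀ x ∈ N, T x ∈ N))
    (Y : L2 I →L[ℂ] L2 I) : lft α β γ δ (-(Y * w)) Y 0 ∈ S :=
  h.lft_mem hS (by rw [mul_neg, zero_mul, neg_add_cancel])

theorem TM.corner (h : TM M N n w α β γ δ)
    (hS : ∀ T : H →L[ℂ] H, T ∈ S ↔ (∀ x ∈ M, T x ∈ M) ∧ (∀ x ∈ N, T x ∈ N))
    {T : H →L[ℂ] H} (hT : T ∈ S) : ∃ Y E D : L2 I →L[ℂ] L2 I, cp w E D ∧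
      lft α β γ δ 1 0 1 * T * lft α β γ δ 1 0 1 =
        lft α β γ δ E 0 D + lft α β γ δ (-(Y * w)) Y 0 := by
  rw [hS] at hT
  have h0 : ∀ k, δ (T (α k)) = 0 := fun k => h.N0 _ (hT.2 _ (h.αN k))
  refine ⟨γ ∘L T ∘L β, γ ∘L T ∘L α + (γ ∘L T ∘L β) * w, δ ∘L T ∘L β, ?_, ?_⟩
  · unfold cp
    refine ContinuousLinearMap.ext fun k => ?_
    have h1 := h.Mw _ (hT.1 _ (h.αβM k))
    simp only [map_add, h0, zero_add] at h1
    simp only [mul_apply_eq_comp, add_apply, ContinuousLinearMap.comp_apply, map_add]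
    exact h1.symm
  · rw [lft_add]
    refine ContinuousLinearMap.ext fun k => ?_
    simp only [mul_apply_eq_comp, lft_apply, add_apply, neg_apply, one_apply_eq_self, zero_apply,
      ContinuousLinearMap.comp_apply, map_add, map_zero, add_zero, zero_add, h0, map_neg,
      ContinuousLinearMap.neg_apply]
    abel

theorem TM.diag_good (h : TM M N n w α β γ δ)
    (hS : ∀ T : H →L[ℂ] H, T ∈ S ↔ (∀ x ∈ M, T x ∈ M) ∧ (∀ x ∈ N, T x ∈ N))
    (hG : ZPGood S G) (a : I → ℂ) (C : ℝ) (ha : ∀ i, ‖a i‖ ≤ C) :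
    G (lft α β γ δ (wop a id) 0 (wop a id)) := by
  classical
  have hid : ∀ a : I → ℂ, Set.InjOn (id : I → I) {i | a i ≠ 0} :=
    fun a => Function.injective_id.injOn
  apply hG.closed _ (h.cp_mem hS (h.cp_wop a id C ha (hid a) (fun i => rfl)))
  intro ε hε
  set c := ‖α‖ * ‖γ‖ + ‖β‖ * ‖δ‖ with hc
  have hc0 : 0 ≤ c := by positivity
  set e := ε / (c + 1) with he
  have he0 : 0 < e := by positivity
  have htb : TotallyBounded (Metric.closedBall (0:ℂ) C) :=
    (isCompact_closedBall (0:ℂ) C).totallyBounded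
  obtain ⟨t, htf, ht⟩ := Metric.totallyBounded_iff.1 htb e he0
  have hex : ∀ i, ∃ y ∈ t, dist (a i) y < e := by
    intro i
    have := ht (show a i ∈ Metric.closedBall (0:ℂ) C by simpa using ha i)
    simpa using! this
  choose g hgt hg using hex
  have hgb : ∀ i, ‖g i‖ ≤ C + e := by
    intro i
    have h1 := hg i
    rw [dist_comm, dist_eq_norm] at h1
    calc ‖g i‖ = ‖a i + (g i - a i)‖ := by congr 1; ring
      _ ≤ _ := (norm_add_le _ _).trans (add_le_add (ha i) h1.le)
  have hsum : wop g id = ∑ c ∈ htf.toFinset, c • dg (fun i => g i = c) := by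
    refine ContinuousLinearMap.ext fun x => ?_
    ext i
    rw [wop_apply _ hgb (hid g)]
    have : (((∑ c ∈ htf.toFinset, c • dg (fun i => g i = c)) : L2 I →L[ℂ] L2 I) x) i =
        ∑ c ∈ htf.toFinset, c * (dg (fun i => g i = c) x i) := by
      rw [ContinuousLinearMap.sum_apply, lp.coeFn_sum, Finset.sum_apply]
      rfl
    rw [this]
    simp only [dg_apply, mul_ite, mul_zero, id]
    rw [Finset.sum_ite_eq, if_pos]
    simpa using hgt i
  refine ⟨lft α β γ δ (wop g id) 0 (wop g id), ?_, ?_⟩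
  · have : lft α β γ δ (wop g id) 0 (wop g id) =
        ∑ c ∈ htf.toFinset, c • lft α β γ δ (dg (fun i => g i = c)) 0 (dg (fun i => g i = c)) := by
      rw [hsum]
      refine ContinuousLinearMap.ext fun x => ?_
      simp only [ContinuousLinearMap.sum_apply, lft_apply, smul_apply, map_sum, map_smul, smul_add,
        Finset.sum_add_distrib, zero_apply, map_zero, smul_zero, Finset.sum_const_zero]
    rw [this]
    apply hG.sum
    intro c _
    apply hG.smul
    apply hG.idem _ (h.cp_mem hS (h.cp_dg _))
    rw [h.lft_mul0, dg_idem]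
  · rw [lft_sub, sub_zero]
    have hn : ‖wop a id - wop g id‖ ≤ e := by
      obtain ⟨T, hT, hTn⟩ := wop_exists (fun i => a i - g i) id e he0.le
        (fun i => by rw [← dist_eq_norm]; exact (hg i).le) (hid _)
      have : wop a id - wop g id = T := by
        refine ContinuousLinearMap.ext fun x => ?_
        ext i
        rw [hT, sub_apply, lp.coeFn_sub, Pi.sub_apply, wop_apply _ hgb (hid g),
          wop_apply C ha (hid a)]
        ring
      rw [this]; exact hTn
    refine (lft_norm_le _ _).trans_lt ?_
    calc _ ≤ ‖α‖ * (e * ‖γ‖) + ‖β‖ * (e * ‖δ‖) := by gcongr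
      _ = c * e := by rw [hc]; ring
      _ < (c + 1) * e := by nlinarith
      _ = ε := by rw [he]; field_simp
end
section
variable {H : Type*} [NormedAddCommGroup H] [InnerProductSpace ℂ H]
variable {I : Type*}
variable {α β : L2 I →L[ℂ] H} {γ δ : H →L[ℂ] L2 I} {w : L2 I →L[ℂ] L2 I} {n : I → ℕ}
  {M N : Submodule ℂ H}
variable {S : Subalgebra ℂ (H →L[ℂ] H)} {G : (H →L[ℂ] H) → Prop}

theorem TM.cp_iff [DecidableEq I] (h : TM M N n w α β γ δ) {E D : L2 I →L[ℂ] L2 I} :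
    cp w E D ↔ ∀ i j, (2:ℂ)⁻¹ ^ (n i) * E (eb j) i = (2:ℂ)⁻¹ ^ (n j) * D (eb j) i := by
  have h1 : ∀ i j, (w * E) (eb j) i = (2:ℂ)⁻¹ ^ (n i) * E (eb j) i := by
    intro i j; rw [mul_apply_eq_comp, h.hw]
  have h2 : ∀ i j, (D * w) (eb j) i = (2:ℂ)⁻¹ ^ (n j) * D (eb j) i := by
    intro i j; rw [mul_apply_eq_comp, h.w_eb, map_smul, lp.coeFn_smul, Pi.smul_apply, smul_eq_mul]
  constructor
  · intro hc i j
    rw [← h1, ← h2, hc]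
  · intro hc
    exact ext_entry fun i j => by rw [h1, h2, hc]

theorem ent_dg_mul [DecidableEq I] (p : I → Prop) [DecidablePred p] (X : L2 I →L[ℂ] L2 I) (i j : I) :
    (dg p * X) (eb j) i = if p i then X (eb j) i else 0 := by
  rw [mul_apply_eq_comp, dg_apply]; congr

theorem ent_mul_dg [DecidableEq I] (p : I → Prop) [DecidablePred p] (X : L2 I →L[ℂ] L2 I) (i j : I) :
    (X * dg p) (eb j) i = if p j then X (eb j) i else 0 := by
  rw [mul_apply_eq_comp, dg_eb]; split_ifs <;> simp

theorem TM.par_J [DecidableEq I] (h : TM M N n w α β γ δ)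
    (hS : ∀ T : H →L[ℂ] H, T ∈ S ↔ (∀ x ∈ M, T x ∈ M) ∧ (∀ x ∈ N, T x ∈ N))
    (hG : ZPGood S G) {A D : L2 I →L[ℂ] L2 I} (hc : cp w A D) (p : I → Prop)
    (hA : ∀ i j, A (eb j) i ≠ 0 → (p i ↔ ¬ p j)) : ZPJ S G (lft α β γ δ A 0 D) := by
  classical
  have hq := h.cp_dg p
  have e1 : A = dg p * A + A * dg p := by
    refine ext_entry fun i j => ?_
    rw [add_apply, lp.coeFn_add, Pi.add_apply, ent_dg_mul, ent_mul_dg]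
    by_cases h0 : A (eb j) i = 0
    · simp [h0]
    · have := hA i j h0
      by_cases hp : p j <;> simp [hp, this]
  have e2 : dg p * A * dg p = 0 := by
    refine ext_entry fun i j => ?_
    rw [ent_mul_dg, ent_dg_mul]
    by_cases h0 : A (eb j) i = 0
    · simp [h0]
    · have := hA i j h0
      by_cases hp : p j <;> simp [hp, this]
  have f1 : D = dg p * D + D * dg p := h.cp_D hc ((hq.mul hc).add (hc.mul hq)) e1
  have f2 : dg p * D * dg p = 0 :=
    h.cp_D ((hq.mul hc).mul hq) (show cp w 0 0 by simp [cp]) e2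
  set T := lft α β γ δ A 0 D with hT
  set Q := lft α β γ δ (dg p) 0 (dg p) with hQ
  have hTS : T ∈ S := h.cp_mem hS hc
  have hQS : Q ∈ S := h.cp_mem hS hq
  have hQQ : Q * Q = Q := by rw [hQ, h.lft_mul0, dg_idem]
  have hQT : Q * T * Q = 0 := by
    rw [hQ, hT, h.lft_mul0, h.lft_mul0, e2, f2]; ext x; simp [lft_apply]
  have hs : T = Q * T * (1 - Q) + (1 - Q) * T * Q := by
    have : Q * T * (1 - Q) + (1 - Q) * T * Q = Q * T + T * Q - (Q * T * Q + Q * T * Q) := by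
      noncomm_ring
    rw [this, hQT, add_zero, sub_zero, hQ, hT, h.lft_mul0, h.lft_mul0, lft_add, ← e1, ← f1, add_zero]
  rw [hs]
  exact (hG.J_off hQS hQQ hTS).add hG (hG.J_off' hQS hQQ hTS)

/-- rank data -/
structure RK (Z : I → Prop) (n r : I → ℕ) : Prop where
  inj : ∀ i j, Z i → Z j → r i = r j → i = j
  mono : ∀ i j, Z i → Z j → r i ≤ r j → r j + n i ≤ n j + r i
  surj : ∀ i m, Z i → m < r i → ∃ j, Z j ∧ r j = m

variable {Z : I → Prop} {r : I → ℕ}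

theorem TM.low [DecidableEq I] (_h : TM M N n w α β γ δ) (hr : RK Z n r) (X : L2 I →L[ℂ] L2 I)
    (p : I → I → Prop) (hp : ∀ i j, p i j → Z i ∧ Z j ∧ r j ≤ r i) :
    ∃ D : L2 I →L[ℂ] L2 I, (∀ i j, p i j → (2:ℂ)⁻¹ ^ (n i) * X (eb j) i = (2:ℂ)⁻¹ ^ (n j) * D (eb j) i)
      ∧ ∀ i j, ¬ p i j → D (eb j) i = 0 := by
  classical
  obtain ⟨V, hV⟩ := schur Z r hr.inj X (fun i j => if p i j then (2:ℂ)⁻¹ ^ (n i - n j) else 0)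
    (by
      intro i j hh
      by_cases hpp : p i j
      · exact ⟨(hp i j hpp).1, (hp i j hpp).2.1⟩
      · simp [hpp] at hh)
    (by
      intro i j
      by_cases hpp : p i j
      · obtain ⟨hi, hj, hij⟩ := hp i j hpp
        have := hr.mono j i hj hi hij
        rw [if_pos hpp, norm_pow, norm_inv, Complex.norm_ofNat, one_div]
        exact pow_le_pow_of_le_one (by norm_num) (by norm_num) (by omega)
      · rw [if_neg hpp, norm_zero]; positivity)
  refine ⟨V, fun i j hpp => ?_, fun i j hpp => ?_⟩
  · obtain ⟨hi, hj, hij⟩ := hp i j hpp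
    have := hr.mono j i hj hi hij
    rw [hV, if_pos hpp, ← mul_assoc, ← pow_add]
    congr 2; omega
  · rw [hV, if_neg hpp, zero_mul]

theorem TM.upp [DecidableEq I] (_h : TM M N n w α β γ δ) (hr : RK Z n r) (X : L2 I →L[ℂ] L2 I)
    (p : I → I → Prop) (hp : ∀ i j, p i j → Z i ∧ Z j ∧ r i ≤ r j) :
    ∃ D : L2 I →L[ℂ] L2 I, (∀ i j, p i j → (2:ℂ)⁻¹ ^ (n i) * D (eb j) i = (2:ℂ)⁻¹ ^ (n j) * X (eb j) i)
      ∧ ∀ i j, ¬ p i j → D (eb j) i = 0 := by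
  classical
  obtain ⟨V, hV⟩ := schur Z r hr.inj X (fun i j => if p i j then (2:ℂ)⁻¹ ^ (n j - n i) else 0)
    (by
      intro i j hh
      by_cases hpp : p i j
      · exact ⟨(hp i j hpp).1, (hp i j hpp).2.1⟩
      · simp [hpp] at hh)
    (by
      intro i j
      by_cases hpp : p i j
      · obtain ⟨hi, hj, hij⟩ := hp i j hpp
        have := hr.mono i j hi hj hij
        rw [if_pos hpp, norm_pow, norm_inv, Complex.norm_ofNat, one_div]
        exact pow_le_pow_of_le_one (by norm_num) (by norm_num) (by omega)
      · rw [if_neg hpp, norm_zero]; positivity)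
  refine ⟨V, fun i j hpp => ?_, fun i j hpp => ?_⟩
  · obtain ⟨hi, hj, hij⟩ := hp i j hpp
    have := hr.mono i j hi hj hij
    rw [hV, if_pos hpp, ← mul_assoc, ← pow_add]
    congr 2; omega
  · rw [hV, if_neg hpp, zero_mul]

theorem TM.low_cp [DecidableEq I] (h : TM M N n w α β γ δ) (hr : RK Z n r) (X : L2 I →L[ℂ] L2 I)
    (hX : ∀ i j, X (eb j) i ≠ 0 → Z i ∧ Z j ∧ r j ≤ r i) : ∃ D, cp w X D := by
  obtain ⟨D, h1, h2⟩ := h.low hr X _ hX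
  refine ⟨D, h.cp_iff.2 fun i j => ?_⟩
  by_cases h0 : X (eb j) i = 0
  · rw [h0, h2 i j (by simpa using h0)]; simp
  · exact h1 i j h0

theorem TM.upp_cp [DecidableEq I] (h : TM M N n w α β γ δ) (hr : RK Z n r) (X : L2 I →L[ℂ] L2 I)
    (hX : ∀ i j, X (eb j) i ≠ 0 → Z i ∧ Z j ∧ r i ≤ r j) : ∃ E, cp w E X := by
  obtain ⟨D, h1, h2⟩ := h.upp hr X _ hX
  refine ⟨D, h.cp_iff.2 fun i j => ?_⟩
  by_cases h0 : X (eb j) i = 0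
  · rw [h0, h2 i j (by simpa using h0)]; simp
  · exact h1 i j h0

/-- shift operators -/
theorem shift_exists [DecidableEq I] (hr : RK Z n r) : ∃ L K : L2 I →L[ℂ] L2 I,
    (∀ i j, L (eb j) i ≠ 0 → Z i ∧ Z j ∧ r i = r j + 1) ∧
    (∀ i j, K (eb j) i ≠ 0 → Z i ∧ Z j ∧ r j = r i + 1) ∧
    L * K = dg (fun i => Z i ∧ 0 < r i) ∧
    K * L = dg (fun i => Z i ∧ ∃ j, Z j ∧ r j = r i + 1) ∧
    (∀ (X : L2 I →L[ℂ] L2 I) i j, (L * X) (eb j) i ≠ 0 → ∃ k, Z i ∧ Z k ∧ r i = r k + 1 ∧ X (eb j) k ≠ 0) ∧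
    (∀ (X : L2 I →L[ℂ] L2 I) i j, (X * K) (eb j) i ≠ 0 → ∃ k, Z j ∧ Z k ∧ r j = r k + 1 ∧ X (eb k) i ≠ 0) := by
  classical
  let pr : I → I := fun i => if h : ∃ j, Z j ∧ r i = r j + 1 then h.choose else i
  let su : I → I := fun i => if h : ∃ j, Z j ∧ r j = r i + 1 then h.choose else i
  have hpr : ∀ i, (∃ j, Z j ∧ r i = r j + 1) → Z (pr i) ∧ r i = r (pr i) + 1 := by
    intro i h; simp only [pr, dif_pos h]; exact h.choose_spec
  have hsu : ∀ i, (∃ j, Z j ∧ r j = r i + 1) → Z (su i) ∧ r (su i) = r i + 1 := by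
    intro i h; simp only [su, dif_pos h]; exact h.choose_spec
  have hpe : ∀ i, Z i → 0 < r i → ∃ j, Z j ∧ r i = r j + 1 := by
    intro i hi h
    obtain ⟨j, hj, hj'⟩ := hr.surj i (r i - 1) hi (by omega)
    exact ⟨j, hj, by omega⟩
  have LA : ∀ x i, wop (fun i => if Z i ∧ 0 < r i then 1 else 0) pr x i =
      (if Z i ∧ 0 < r i then 1 else 0) * x (pr i) := by
    refine wop_apply 1 (fun i => by split_ifs <;> simp) ?_
    intro i hi j hj hij
    have hi' : Z i ∧ 0 < r i := by by_contra h; exact hi (if_neg h)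
    have hj' : Z j ∧ 0 < r j := by by_contra h; exact hj (if_neg h)
    have a1 := hpr i (hpe i hi'.1 hi'.2)
    have a2 := hpr j (hpe j hj'.1 hj'.2)
    rw [hij] at a1
    exact hr.inj i j hi'.1 hj'.1 (by omega)
  have KA : ∀ x i, wop (fun i => if Z i ∧ ∃ j, Z j ∧ r j = r i + 1 then 1 else 0) su x i =
      (if Z i ∧ ∃ j, Z j ∧ r j = r i + 1 then 1 else 0) * x (su i) := by
    refine wop_apply 1 (fun i => by split_ifs <;> simp) ?_
    intro i hi j hj hij
    have hi' : Z i ∧ ∃ j, Z j ∧ r j = r i + 1 := by by_contra h; exact hi (if_neg h)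
    have hj' : Z j ∧ ∃ k, Z k ∧ r k = r j + 1 := by by_contra h; exact hj (if_neg h)
    have a1 := hsu i hi'.2
    have a2 := hsu j hj'.2
    rw [hij] at a1
    exact hr.inj i j hi'.1 hj'.1 (by omega)
  refine ⟨wop (fun i => if Z i ∧ 0 < r i then 1 else 0) pr,
    wop (fun i => if Z i ∧ ∃ j, Z j ∧ r j = r i + 1 then 1 else 0) su, ?_, ?_, ?_, ?_, ?_, ?_⟩
  · intro i j hij
    rw [LA, eb_apply] at hij
    by_cases c1 : Z i ∧ 0 < r i
    · by_cases c2 : pr i = j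
      · have := hpr i (hpe i c1.1 c1.2)
        rw [c2] at this
        exact ⟨c1.1, this.1, this.2⟩
      · simp [c2] at hij
    · simp [c1] at hij
  · intro i j hij
    rw [KA, eb_apply] at hij
    by_cases c1 : Z i ∧ ∃ j, Z j ∧ r j = r i + 1
    · by_cases c2 : su i = j
      · have := hsu i c1.2
        rw [c2] at this
        exact ⟨c1.1, this.1, this.2⟩
      · simp [c2] at hij
    · simp [c1] at hij
  · ext x i
    rw [mul_apply_eq_comp, LA, KA, dg_apply]
    by_cases c1 : Z i ∧ 0 < r i
    · have a1 := hpr i (hpe i c1.1 c1.2)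
      have a2 : Z (pr i) ∧ ∃ j, Z j ∧ r j = r (pr i) + 1 := ⟨a1.1, i, c1.1, a1.2⟩
      have a3 := hsu _ a2.2
      have : su (pr i) = i := hr.inj _ _ a3.1 c1.1 (by omega)
      rw [if_pos c1, if_pos a2, if_pos c1, this]; ring
    · rw [if_neg c1, if_neg c1]; ring
  · ext x i
    rw [mul_apply_eq_comp, KA, LA, dg_apply]
    by_cases c1 : Z i ∧ ∃ j, Z j ∧ r j = r i + 1
    · have a1 := hsu i c1.2
      have a2 : Z (su i) ∧ 0 < r (su i) := ⟨a1.1, by omega⟩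
      have a3 := hpr _ (hpe _ a2.1 a2.2)
      have : pr (su i) = i := hr.inj _ _ a3.1 c1.1 (by omega)
      rw [if_pos c1, if_pos a2, if_pos c1, this]; ring
    · rw [if_neg c1, if_neg c1]; ring
  · intro X i j hij
    rw [mul_apply_eq_comp, LA] at hij
    by_cases c1 : Z i ∧ 0 < r i
    · have a1 := hpr i (hpe i c1.1 c1.2)
      refine ⟨pr i, c1.1, a1.1, a1.2, right_ne_zero_of_mul hij⟩
    · simp [c1] at hij
  · intro X i j hij
    rw [mul_apply_eq_comp] at hij
    by_cases c1 : Z j ∧ 0 < r j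
    · have a1 := hpr j (hpe j c1.1 c1.2)
      refine ⟨pr j, c1.1, a1.1, a1.2, ?_⟩
      suffices e : wop (fun i => if Z i ∧ ∃ j, Z j ∧ r j = r i + 1 then 1 else 0) su (eb j) = eb (pr j) by
        rwa [e] at hij
      ext k
      rw [KA, eb_apply, eb_apply]
      by_cases c2 : k = pr j
      · have a2 : Z k ∧ ∃ j, Z j ∧ r j = r k + 1 := ⟨c2 ▸ a1.1, j, c1.1, c2 ▸ a1.2⟩
        have a3 := hsu _ a2.2
        have : su k = j := hr.inj _ _ a3.1 c1.1 (by rw [a3.2, c2]; exact a1.2.symm)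
        rw [if_pos a2, if_pos c2, if_pos this, one_mul]
      · rw [if_neg c2]
        by_cases c3 : Z k ∧ ∃ j, Z j ∧ r j = r k + 1
        · have a3 := hsu _ c3.2
          rw [if_neg (c := su k = j), mul_zero]
          intro hk
          rw [hk] at a3
          exact c2 (hr.inj _ _ c3.1 a1.1 (by omega))
        · rw [if_neg c3, zero_mul]
    · exfalso
      apply hij
      have : (wop (fun i => if Z i ∧ ∃ j, Z j ∧ r j = r i + 1 then 1 else 0) su) (eb j) = 0 := by
        ext k
        rw [KA, eb_apply]
        by_cases c3 : Z k ∧ ∃ j, Z j ∧ r j = r k + 1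
        · have a3 := hsu _ c3.2
          rw [if_neg (c := su k = j), mul_zero]; · rfl
          intro hk
          rw [hk] at a3
          exact c1 ⟨a3.1, by omega⟩
        · rw [if_neg c3, zero_mul]; rfl
      rw [this, map_zero]; rfl
end
section
variable {H : Type*} [NormedAddCommGroup H] [InnerProductSpace ℂ H]
variable {I : Type*}
variable {α β : L2 I →L[ℂ] H} {γ δ : H →L[ℂ] L2 I} {w : L2 I →L[ℂ] L2 I} {n : I → ℕ}
  {M N : Submodule ℂ H}
variable {S : Subalgebra ℂ (H →L[ℂ] H)} {G : (H →L[ℂ] H) → Prop}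
variable {Z : I → Prop} {r : I → ℕ}

theorem TM.eta_good (h : TM M N n w α β γ δ)
    (hS : ∀ T : H →L[ℂ] H, T ∈ S ↔ (∀ x ∈ M, T x ∈ M) ∧ (∀ x ∈ N, T x ∈ N))
    (hG : ZPGood S G) (hr : RK Z n r) (Y : L2 I →L[ℂ] L2 I)
    (hY : dg Z * Y = Y) : G (lft α β γ δ (-(Y * w)) Y 0) := by
  classical
  obtain ⟨L, K, hL, hK, hLK, hKL, hLX, hXK⟩ := shift_exists hr
  obtain ⟨DL, hDL⟩ := h.low_cp hr L (fun i j hij => by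
    obtain ⟨a, b, c⟩ := hL i j hij; exact ⟨a, b, by omega⟩)
  have TLJ : ZPJ S G (lft α β γ δ L 0 DL) := by
    refine h.par_J hS hG hDL (fun i => Even (r i)) fun i j hij => ?_
    obtain ⟨a, b, c⟩ := hL i j hij
    rw [c, Nat.even_add_one]
  have h1 := (TLJ.mul_right (h.eta_mem hS (K * Y))).good
  rw [h.lft_mul] at h1
  have hid : ∀ (p : I → Prop), (∀ i j, p i → p j → i = j) → G (lft α β γ δ (-(dg p * w)) (dg p) 0) := by
    intro p hp
    obtain ⟨c, hc⟩ := dg_rank_one p hp w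
    have hw : dg p * w = w * dg p := (h.cp_dg p).symm
    have hw' : dg p * w = c • dg p := by
      rw [← hc, mul_assoc, ← hw, ← mul_assoc, dg_idem]
    by_cases c0 : c = 0
    · have : dg p = 0 := by
        apply h.w_right; rw [hw', c0]; simp
      rw [this]
      have e : lft α β γ δ (-(0 * w)) 0 0 = 0 := by ext x; simp [lft_apply]
      rw [e]; exact hG.idem 0 S.zero_mem (by simp)
    · have hs : (lft α β γ δ (-(dg p * w)) (dg p) 0) = (-c) • (((-c)⁻¹) • lft α β γ δ (-(dg p * w)) (dg p) 0) := by
        rw [smul_smul, mul_inv_cancel₀ (by simpa using c0), one_smul]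
      rw [hs]
      apply hG.smul
      apply hG.idem _ (S.smul_mem (h.eta_mem hS _) _)
      rw [smul_mul_smul_comm, h.lft_mul, hw', lft_smul, lft_smul]
      congr 1
      · rw [neg_mul_neg, smul_mul_smul_comm, dg_idem, smul_smul, smul_neg, smul_smul, ← neg_smul]
        congr 1; field_simp
      · rw [mul_zero, add_zero, neg_mul, smul_mul_assoc, dg_idem, ← neg_smul, smul_smul]
        congr 1; field_simp
      · simp
  set p0 : I → Prop := fun i => Z i ∧ r i = 0 with hp0
  have hp0i : ∀ i j, p0 i → p0 j → i = j := fun i j a b =>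
    hr.inj i j a.1 b.1 (a.2.trans b.2.symm)
  set P0 := lft α β γ δ (dg p0) 0 (dg p0) with hP0
  have hP0S : P0 ∈ S := h.cp_mem hS (h.cp_dg p0)
  have hP0i : P0 * P0 = P0 := by rw [hP0, h.lft_mul0, dg_idem]
  have h2 := (hG.J_off hP0S hP0i (h.eta_mem hS Y)).good
  obtain ⟨c, hc⟩ := dg_rank_one p0 hp0i Y
  have h3 := hG.smul c _ (hid p0 hp0i)
  have hw : dg p0 * w = w * dg p0 := (h.cp_dg p0).symm
  have h4 : P0 * lft α β γ δ (-(Y * w)) Y 0 * P0 = c • lft α β γ δ (-(dg p0 * w)) (dg p0) 0 := by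
    rw [hP0, h.lft_mul, h.lft_mul, lft_smul]
    congr 1
    · rw [mul_neg, neg_mul, smul_neg, mul_assoc, mul_assoc, ← hw, ← mul_assoc, ← mul_assoc, hc,
        smul_mul_assoc]
    · rw [mul_zero, zero_add, zero_mul, add_zero, hc]
    · simp
  rw [← h4] at h3
  have h5 := hG.add _ _ h2 h3
  have h6 : P0 * lft α β γ δ (-(Y * w)) Y 0 * (1 - P0) + P0 * lft α β γ δ (-(Y * w)) Y 0 * P0 =
      P0 * lft α β γ δ (-(Y * w)) Y 0 := by noncomm_ring
  rw [h6, hP0, h.lft_mul] at h5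
  have h7 := hG.add _ _ h1 h5
  rw [lft_add] at h7
  have hsum : L * (K * Y) + dg p0 * Y = Y := by
    rw [← mul_assoc, hLK]
    refine ext_entry fun i j => ?_
    have := congrArg (fun T : L2 I →L[ℂ] L2 I => T (eb j) i) hY
    simp only [ent_dg_mul] at this
    rw [add_apply, lp.coeFn_add, Pi.add_apply, ent_dg_mul, ent_dg_mul]
    by_cases hz : Z i
    · rcases Nat.eq_zero_or_pos (r i) with h0 | h0
      · simp [hp0, hz, h0]
      · simp [hp0, hz, h0, h0.ne']
    · simp [hp0, hz] at this ⊢; exact this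
  convert h7 using 2
  · conv_lhs => rw [← hsum]
    rw [add_mul, neg_add]
    simp only [mul_neg, mul_assoc]
  · simp [hsum]
  · simp

theorem TM.cp_good (h : TM M N n w α β γ δ)
    (hS : ∀ T : H →L[ℂ] H, T ∈ S ↔ (∀ x ∈ M, T x ∈ M) ∧ (∀ x ∈ N, T x ∈ N))
    (hG : ZPGood S G) (hr : RK Z n r) (E D : L2 I →L[ℂ] L2 I) (hc : cp w E D)
    (h1 : dg Z * E = E) (h2 : E * dg Z = E) : G (lft α β γ δ E 0 D) := by
  classical
  obtain ⟨L, K, hL, hK, hLK, hKL, hLX, hXK⟩ := shift_exists hr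
  obtain ⟨DL, hDL⟩ := h.low_cp hr L (fun i j hij => by
    obtain ⟨a, b, c⟩ := hL i j hij; exact ⟨a, b, by omega⟩)
  have TLJ : ZPJ S G (lft α β γ δ L 0 DL) := by
    refine h.par_J hS hG hDL (fun i => Even (r i)) fun i j hij => ?_
    obtain ⟨a, b, c⟩ := hL i j hij
    rw [c, Nat.even_add_one]
  obtain ⟨EK, hEK⟩ := h.upp_cp hr K (fun i j hij => by
    obtain ⟨a, b, c⟩ := hK i j hij; exact ⟨a, b, by omega⟩)
  have TKJ : ZPJ S G (lft α β γ δ EK 0 K) := by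
    refine h.par_J hS hG hEK (fun i => Even (r i)) fun i j hij => ?_
    have : K (eb j) i ≠ 0 := by
      intro h0
      have := h.cp_iff.1 hEK i j
      rw [h0, mul_zero] at this
      exact hij ((mul_eq_zero.1 this).resolve_left (by simp))
    obtain ⟨a, b, c⟩ := hK i j this
    rw [c, Nat.even_add_one, not_not]
  have hci := h.cp_iff.1 hc
  have hEz : ∀ i j, ¬ (Z i ∧ Z j) → E (eb j) i = 0 := by
    intro i j hij
    have a1 := congrArg (fun T : L2 I →L[ℂ] L2 I => T (eb j) i) h1
    have a2 := congrArg (fun T : L2 I →L[ℂ] L2 I => T (eb j) i) h2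
    simp only [ent_dg_mul, ent_mul_dg] at a1 a2
    by_cases hz : Z i
    · rw [← a2, if_neg (fun hj => hij ⟨hz, hj⟩)]
    · rw [← a1, if_neg hz]
  have hDz : ∀ i j, ¬ (Z i ∧ Z j) → D (eb j) i = 0 := by
    intro i j hij
    have := hci i j
    rw [hEz i j hij, mul_zero] at this
    exact (mul_eq_zero.1 this.symm).resolve_left (by simp)
  obtain ⟨Eu, hEu, hEu0⟩ := h.upp hr D (fun i j => Z i ∧ Z j ∧ r i < r j)
    (fun i j hij => ⟨hij.1, hij.2.1, hij.2.2.le⟩)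
  obtain ⟨Dl, hDl, hDl0⟩ := h.low hr E (fun i j => Z i ∧ Z j ∧ r j < r i)
    (fun i j hij => ⟨hij.1, hij.2.1, hij.2.2.le⟩)
  have hEu' : ∀ i j, Z i ∧ Z j ∧ r i < r j → Eu (eb j) i = E (eb j) i := by
    intro i j hij
    exact mul_left_cancel₀ (b := Eu (eb j) i) (by simp) ((hEu i j hij).trans (hci i j).symm)
  have hDl' : ∀ i j, Z i ∧ Z j ∧ r j < r i → Dl (eb j) i = D (eb j) i := by
    intro i j hij
    exact mul_left_cancel₀ (b := Dl (eb j) i) (by simp) ((hDl i j hij).symm.trans (hci i j))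
  set a : I → ℂ := fun i => E (eb i) i with ha
  have haD : ∀ i, a i = D (eb i) i := fun i => mul_left_cancel₀ (by simp) (hci i i)
  have hab : ∀ i, ‖a i‖ ≤ ‖E‖ := fun i => entry_le E i i
  set Δ := wop a id with hΔ
  have hΔe : ∀ i j, Δ (eb j) i = if i = j then a i else 0 := by
    intro i j
    rw [hΔ, wop_apply _ hab Function.injective_id.injOn, eb_apply]; simp
  have hΔc : cp w Δ Δ := h.cp_wop a id _ hab Function.injective_id.injOn (fun i => rfl)
  set El := E - Eu - Δ with hEl
  set Du := D - Dl - Δ with hDu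
  have hEle : ∀ i j, El (eb j) i = if Z i ∧ Z j ∧ r j < r i then E (eb j) i else 0 := by
    intro i j
    rw [hEl, sub_apply, sub_apply, lp.coeFn_sub, lp.coeFn_sub, Pi.sub_apply, Pi.sub_apply, hΔe]
    by_cases hz : Z i ∧ Z j
    · rcases lt_trichotomy (r i) (r j) with hl | he | hg
      · rw [hEu' i j ⟨hz.1, hz.2, hl⟩, if_neg, if_neg]
        · ring
        · rintro ⟨-, -, h⟩; omega
        · rintro rfl; omega
      · have := hr.inj i j hz.1 hz.2 he
        subst this
        rw [hEu0 i i (by simp)]; simp [ha]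
      · rw [hEu0 i j (by rintro ⟨-, -, h⟩; omega), if_neg, if_pos ⟨hz.1, hz.2, hg⟩]
        · ring
        · rintro rfl; omega
    · rw [hEu0 i j (by tauto), hEz i j hz, ite_self]
      by_cases e : i = j
      · subst e; simp [ha, hEz i i hz]
      · simp [e]
  have hDue : ∀ i j, Du (eb j) i = if Z i ∧ Z j ∧ r i < r j then D (eb j) i else 0 := by
    intro i j
    rw [hDu, sub_apply, sub_apply, lp.coeFn_sub, lp.coeFn_sub, Pi.sub_apply, Pi.sub_apply, hΔe]
    by_cases hz : Z i ∧ Z j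
    · rcases lt_trichotomy (r j) (r i) with hl | he | hg
      · rw [hDl' i j ⟨hz.1, hz.2, hl⟩, if_neg, if_neg]
        · ring
        · rintro ⟨-, -, h⟩; omega
        · rintro rfl; omega
      · have := hr.inj i j hz.1 hz.2 he.symm
        subst this
        rw [hDl0 i i (by simp)]; simp [haD]
      · rw [hDl0 i j (by rintro ⟨-, -, h⟩; omega), if_neg, if_pos ⟨hz.1, hz.2, hg⟩]
        · ring
        · rintro rfl; omega
    · rw [hDl0 i j (by tauto), hDz i j hz, ite_self]
      by_cases e : i = j
      · subst e; simp [haD, hDz i i hz]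
      · simp [e]
  have cl : cp w El Dl := by
    rw [h.cp_iff]
    intro i j
    rw [hEle]
    by_cases hz : Z i ∧ Z j ∧ r j < r i
    · rw [if_pos hz, hDl i j hz]
    · rw [if_neg hz, hDl0 i j hz]; simp
  have cu : cp w Eu Du := by
    rw [h.cp_iff]
    intro i j
    rw [hDue]
    by_cases hz : Z i ∧ Z j ∧ r i < r j
    · rw [if_pos hz, hEu i j hz]
    · rw [if_neg hz, hEu0 i j hz]; simp
  -- lower part
  have gl : G (lft α β γ δ El 0 Dl) := by
    obtain ⟨D', hD'⟩ := h.low_cp hr (El * K) (fun i j hij => by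
      obtain ⟨k, hj, hk, hjk, hne⟩ := hXK El i j hij
      rw [hEle] at hne
      have : Z i ∧ Z k ∧ r k < r i := by by_contra hh; exact hne (if_neg hh)
      exact ⟨this.1, hj, by omega⟩)
    have e1 : El * K * L = El := by
      rw [mul_assoc, hKL]
      refine ext_entry fun i j => ?_
      rw [ent_mul_dg, hEle]
      by_cases hz : Z i ∧ Z j ∧ r j < r i
      · rw [if_pos]
        refine ⟨hz.2.1, ?_⟩
        rcases Nat.lt_or_ge (r j + 1) (r i) with hlt | hge
        · exact hr.surj i _ hz.1 hlt
        · exact ⟨i, hz.1, by omega⟩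
      · rw [if_neg hz, ite_self]
    have e2 : D' * DL = Dl := h.cp_D (hD'.mul hDL) cl e1
    have := (TLJ.mul_left (h.cp_mem hS hD')).good
    rwa [h.lft_mul0, e1, e2] at this
  have gu : G (lft α β γ δ Eu 0 Du) := by
    obtain ⟨E', hE'⟩ := h.upp_cp hr (L * Du) (fun i j hij => by
      obtain ⟨k, hi, hk, hik, hne⟩ := hLX Du i j hij
      rw [hDue] at hne
      have : Z k ∧ Z j ∧ r k < r j := by by_contra hh; exact hne (if_neg hh)
      exact ⟨hi, this.2.1, by omega⟩)
    have e1 : K * (L * Du) = Du := by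
      rw [← mul_assoc, hKL]
      refine ext_entry fun i j => ?_
      rw [ent_dg_mul, hDue]
      by_cases hz : Z i ∧ Z j ∧ r i < r j
      · rw [if_pos]
        refine ⟨hz.1, ?_⟩
        rcases Nat.lt_or_ge (r i + 1) (r j) with hlt | hge
        · exact hr.surj j _ hz.2.1 hlt
        · exact ⟨j, hz.2.1, by omega⟩
      · rw [if_neg hz, ite_self]
    have e2 : EK * E' = Eu := h.cp_A (hEK.mul hE') cu e1
    have := (TKJ.mul_right (h.cp_mem hS hE')).good
    rwa [h.lft_mul0, e1, e2] at this
  have gd := h.diag_good hS hG a _ hab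
  have := hG.add _ _ (hG.add _ _ gl gu) gd
  rw [lft_add, lft_add] at this
  convert this using 2
  · rw [hEl]; abel
  · simp
  · rw [hDu]; abel
end
section
variable {A : Type*} [NormedRing A] [NormedAlgebra ℂ A] {S : Subalgebra ℂ A} {G : A → Prop}

theorem ZPGood.halve (h : ZPGood S G) {q r s z : A} (hq : q ∈ S) (hr : r ∈ S) (hs : s ∈ S) (hz : z ∈ S)
    (hqq : q * q = q) (hrr : r * r = r) (hrq : r * q = 0) (hqr : q * r = 0)
    (e1 : q * s * r * s * q = q) (e2 : r * s * q * s * r = r) {T : A} (hT : T ∈ S)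
    (hg : G (z * T * z)) : G ((q + r + z) * T * (q + r + z)) := by
  have j1 := h.J_half hq hr hs hqq hrq e1
  have j2 := h.J_half hr hq hs hrr hqr e2
  have he : q + r + z ∈ S := S.add_mem (S.add_mem hq hr) hz
  have : (q + r + z) * T * (q + r + z) = q * (T * (q + r + z)) + r * (T * (q + r + z)) +
    (z * T * q + z * T * r) + z * T * z := by noncomm_ring
  rw [this]
  refine h.add _ _ (h.add _ _ (h.add _ _ ?_ ?_) (h.add _ _ ?_ ?_)) hg
  · exact (j1.mul_right (S.mul_mem hT he)).good
  · exact (j2.mul_right (S.mul_mem hT he)).good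
  · exact (j1.mul_left (S.mul_mem hz hT)).good
  · exact (j2.mul_left (S.mul_mem hz hT)).good
end
section
variable {I : Type*}

theorem halve_ops (n : I → ℕ) : ∃ (p₁ p₂ Z : I → Prop) (f : I → I), (∀ i, n (f i) = n i) ∧
    Function.Injective f ∧
    (∀ i j, Z i → Z j → n i = n j → i = j) ∧
    dg p₂ * dg p₁ = 0 ∧ dg p₁ * dg p₂ = 0 ∧
    dg p₁ * wop 1 f * dg p₂ * wop 1 f * dg p₁ = dg p₁ ∧
    dg p₂ * wop 1 f * dg p₁ * wop 1 f * dg p₂ = dg p₂ ∧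
    dg p₁ + dg p₂ + dg Z = 1 := by
  classical
  obtain ⟨f, P, h1, h2, h3, h4, h5⟩ := halve_fiber n
  have hinj : Function.Injective f := fun a b hab => by rw [← h1 a, hab, h1]
  have hs : ∀ (x : L2 I) i, wop 1 f x i = x (f i) := by
    intro x i
    rw [wop_apply 1 (by intro i; simp) hinj.injOn]; simp
  refine ⟨P, fun i => P (f i), fun i => f i = i, f, h5, hinj, h4, ?_, ?_, ?_, ?_, ?_⟩
  · ext x i
    rw [mul_apply_eq_comp, dg_apply, dg_apply]
    by_cases c : P i
    · simp [h2 i c]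
    · simp [c]
  · ext x i
    rw [mul_apply_eq_comp, dg_apply, dg_apply]
    by_cases c : P i
    · simp [h2 i c]
    · simp [c]
  · ext x i
    simp only [mul_apply_eq_comp, dg_apply, hs, h1]
    by_cases c : P i <;> simp [c]
  · ext x i
    simp only [mul_apply_eq_comp, dg_apply, hs, h1]
    by_cases c : P (f i) <;> simp [c]
  · ext x i
    rw [add_apply, add_apply, lp.coeFn_add, lp.coeFn_add, Pi.add_apply, Pi.add_apply, dg_apply,
      dg_apply, dg_apply, one_apply_eq_self]
    by_cases c : f i = i
    · have a1 : ¬ P i := fun hp => by have := h2 i hp; rw [c] at this; exact this hp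
      simp [c, a1]
    · rcases h3 i c with a | a
      · simp [a, h2 i a, c]
      · have : ¬ P i := fun hp => h2 i hp a
        simp [a, this, c]

variable {H : Type*} [NormedAddCommGroup H] [InnerProductSpace ℂ H]
variable {α β : L2 I →L[ℂ] H} {γ δ : H →L[ℂ] L2 I} {w : L2 I →L[ℂ] L2 I} {n : I → ℕ}
  {M N : Submodule ℂ H}
variable {S : Subalgebra ℂ (H →L[ℂ] H)} {G : (H →L[ℂ] H) → Prop}

theorem TM.tail_good (h : TM M N n w α β γ δ)
    (hS : ∀ T : H →L[ℂ] H, T ∈ S ↔ (∀ x ∈ M, T x ∈ M) ∧ (∀ x ∈ N, T x ∈ N))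
    (hG : ZPGood S G) {T : H →L[ℂ] H} (hT : T ∈ S) :
    G (lft α β γ δ 1 0 1 * T * lft α β γ δ 1 0 1) := by
  obtain ⟨p₁, p₂, Z, f, hn, hf, hZ, r1, r2, r3, r4, r5⟩ := halve_ops n
  obtain ⟨r, a1, a2, a3⟩ := rank_exists Z n hZ
  have hr : RK Z n r := ⟨a1, a2, a3⟩
  have hsc : cp w (wop 1 f) (wop 1 f) := h.cp_wop _ _ 1 (by intro i; simp) hf.injOn hn
  have h0 : lft α β γ δ 0 0 0 = 0 := by ext x; simp [lft_apply]
  have hsum : lft α β γ δ (dg p₁) 0 (dg p₁) + lft α β γ δ (dg p₂) 0 (dg p₂) +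
      lft α β γ δ (dg Z) 0 (dg Z) = lft α β γ δ 1 0 1 := by
    rw [lft_add, lft_add, r5]; simp
  rw [← hsum]
  refine hG.halve (s := lft α β γ δ (wop 1 f) 0 (wop 1 f)) (h.cp_mem hS (h.cp_dg _)) (h.cp_mem hS (h.cp_dg _))
    (h.cp_mem hS hsc) (h.cp_mem hS (h.cp_dg _)) ?_ ?_ ?_ ?_ ?_ ?_ hT ?_
  · rw [h.lft_mul0, dg_idem]
  · rw [h.lft_mul0, dg_idem]
  · rw [h.lft_mul0, r1, h0]
  · rw [h.lft_mul0, r2, h0]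
  · rw [h.lft_mul0, h.lft_mul0, h.lft_mul0, h.lft_mul0, r3]
  · rw [h.lft_mul0, h.lft_mul0, h.lft_mul0, h.lft_mul0, r4]
  obtain ⟨Y, E, D, hc, he⟩ := h.corner hS hT
  set z := lft α β γ δ (dg Z) 0 (dg Z) with hz
  have e1 : z * lft α β γ δ 1 0 1 = z := by rw [hz, h.lft_mul0]; simp
  have e2 : lft α β γ δ 1 0 1 * z = z := by rw [hz, h.lft_mul0]; simp
  have e3 : z * T * z = z * (lft α β γ δ 1 0 1 * T * lft α β γ δ 1 0 1) * z := by
    have : z * (lft α β γ δ 1 0 1 * T * lft α β γ δ 1 0 1) * z =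
        (z * lft α β γ δ 1 0 1) * T * (lft α β γ δ 1 0 1 * z) := by simp only [mul_assoc]
    rw [this, e1, e2]
  have hw : dg Z * w = w * dg Z := (h.cp_dg Z).symm
  have e4 : z * T * z = lft α β γ δ (dg Z * E * dg Z) 0 (dg Z * D * dg Z) +
      lft α β γ δ (-((dg Z * Y * dg Z) * w)) (dg Z * Y * dg Z) 0 := by
    rw [e3, he, mul_add, add_mul, hz, h.lft_mul0, h.lft_mul0, h.lft_mul, h.lft_mul]
    congr 2
    · simp only [mul_neg, neg_mul, mul_assoc, hw]
    · simp
    · simp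
  rw [e4]
  refine hG.add _ _ (h.cp_good hS hG hr _ _ (((h.cp_dg Z).mul hc).mul (h.cp_dg Z)) ?_ ?_)
    (h.eta_good hS hG hr _ ?_)
  · simp only [← mul_assoc, dg_idem]
  · simp only [mul_assoc, dg_idem]
  · simp only [← mul_assoc, dg_idem]

theorem head_good (hG : ZPGood S G) (μ : L2 I →L[ℂ] H) (μ' : H →L[ℂ] L2 I)
    (hm : ∀ k, μ' (μ k) = k) (hμS : ∀ X : L2 I →L[ℂ] L2 I, μ ∘L X ∘L μ' ∈ S)
    {T : H →L[ℂ] H} (hT : T ∈ S) : G ((μ ∘L μ') * T * (μ ∘L μ')) := by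
  obtain ⟨p₁, p₂, Z, f, hn, hf, hZ, r1, r2, r3, r4, r5⟩ := halve_ops (fun _ : I => 0)
  have hmul : ∀ X Y : L2 I →L[ℂ] L2 I, (μ ∘L X ∘L μ') * (μ ∘L Y ∘L μ') = μ ∘L (X * Y) ∘L μ' := by
    intro X Y
    refine ContinuousLinearMap.ext fun x => ?_
    simp [mul_apply_eq_comp, hm]
  have h0 : μ ∘L (0 : L2 I →L[ℂ] L2 I) ∘L μ' = 0 := by ext x; simp
  have hsum : μ ∘L dg p₁ ∘L μ' + μ ∘L dg p₂ ∘L μ' + μ ∘L dg Z ∘L μ' = μ ∘L μ' := by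
    refine ContinuousLinearMap.ext fun x => ?_
    have := congrArg (fun T : L2 I →L[ℂ] L2 I => μ (T (μ' x))) r5
    simpa [add_apply] using this
  rw [← hsum]
  refine hG.halve (hμS _) (hμS _) (hμS (wop 1 f)) (hμS _) ?_ ?_ ?_ ?_ ?_ ?_ hT ?_
  · rw [hmul, dg_idem]
  · rw [hmul, dg_idem]
  · rw [hmul, r1, h0]
  · rw [hmul, r2, h0]
  · rw [hmul, hmul, hmul, hmul, r3]
  · rw [hmul, hmul, hmul, hmul, r4]
  obtain ⟨c, hc⟩ := dg_rank_one Z (fun i j hi hj => hZ i j hi hj rfl) (μ' ∘L T ∘L μ)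
  have : (μ ∘L dg Z ∘L μ') * T * (μ ∘L dg Z ∘L μ') = c • (μ ∘L dg Z ∘L μ') := by
    refine ContinuousLinearMap.ext fun x => ?_
    have := congrArg (fun T : L2 I →L[ℂ] L2 I => μ (T (μ' x))) hc
    simpa [mul_apply_eq_comp] using this
  rw [this]
  apply hG.smul
  apply hG.idem _ (hμS _)
  rw [hmul, dg_idem]

theorem assemble {I₁ I₂ : Type*} (h : TM M N n w α β γ δ)
    (hS : ∀ T : H →L[ℂ] H, T ∈ S ↔ (∀ x ∈ M, T x ∈ M) ∧ (∀ x ∈ N, T x ∈ N))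
    (hG : ZPGood S G) (μ : L2 I₁ →L[ℂ] H) (μ' : H →L[ℂ] L2 I₁) (ν : L2 I₂ →L[ℂ] H) (ν' : H →L[ℂ] L2 I₂)
    (hμ : ∀ k, μ' (μ k) = k) (hν : ∀ k, ν' (ν k) = k)
    (hμM : ∀ k, μ k ∈ M) (hνN : ∀ k, ν k ∈ N) (hμN : ∀ x ∈ N, μ' x = 0) (hνM : ∀ x ∈ M, ν' x = 0)
    (h1 : ∀ x, α (γ x) + β (δ x) + μ (μ' x) + ν (ν' x) = x) {T : H →L[ℂ] H} (hT : T ∈ S) : G T := by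
  have hμS : ∀ X : L2 I₁ →L[ℂ] L2 I₁, μ ∘L X ∘L μ' ∈ S := by
    intro X; rw [hS]
    exact ⟨fun x _ => hμM _, fun x hx => by simp [hμN x hx]⟩
  have hνS : ∀ X : L2 I₂ →L[ℂ] L2 I₂, ν ∘L X ∘L ν' ∈ S := by
    intro X; rw [hS]
    exact ⟨fun x hx => by simp [hνM x hx], fun x _ => hνN _⟩
  have pμ : μ ∘L μ' ∈ S := hμS 1
  have pν : ν ∘L ν' ∈ S := hνS 1
  have iμ : (μ ∘L μ') * (μ ∘L μ') = μ ∘L μ' := by ext x; simp [mul_apply_eq_comp, hμ]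
  have iν : (ν ∘L ν') * (ν ∘L ν') = ν ∘L ν' := by ext x; simp [mul_apply_eq_comp, hν]
  have o1 : (μ ∘L μ') * (ν ∘L ν') = 0 := by
    ext x; simp [mul_apply_eq_comp, hμN _ (hνN _)]
  have o2 : (ν ∘L ν') * (μ ∘L μ') = 0 := by
    ext x; simp [mul_apply_eq_comp, hνM _ (hμM _)]
  have hone : lft α β γ δ 1 0 1 = 1 - μ ∘L μ' - ν ∘L ν' := by
    ext x
    have := h1 x
    simp only [lft_apply, one_apply_eq_self, zero_apply, map_zero, add_zero, sub_apply,
      ContinuousLinearMap.comp_apply]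
    have e : ∀ a b c d e : H, e = a + b + c + d → a + b = e - c - d := by intros; subst_vars; abel
    exact e _ _ _ _ _ this.symm
  have hfS : 1 - μ ∘L μ' ∈ S := S.sub_mem S.one_mem pμ
  refine hG.corner_two pμ iμ rfl hT (head_good hG μ μ' hμ hμS hT) ?_
  have hT' : (1 - μ ∘L μ') * T * (1 - μ ∘L μ') ∈ S := S.mul_mem (S.mul_mem hfS hT) hfS
  set p := μ ∘L μ' with hp
  set q := ν ∘L ν' with hq
  refine hG.corner_two pν iν rfl hT' (head_good hG ν ν' hν hνS hT') ?_
  have e1 : (1 - q) * (1 - p) = 1 - p - q := by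
    have : (1 - q) * (1 - p) = 1 - p - q + q * p := by noncomm_ring
    rw [this, o2, add_zero]
  have e2 : (1 - p) * (1 - q) = 1 - p - q := by
    have : (1 - p) * (1 - q) = 1 - p - q + p * q := by noncomm_ring
    rw [this, o1, add_zero]
  have e3 : (1 - q) * ((1 - p) * T * (1 - p)) * (1 - q) = ((1 - q) * (1 - p)) * T * ((1 - p) * (1 - q)) := by
    simp only [mul_assoc]
  have := h.tail_good hS hG hT
  rw [e3, e1, e2, ← hone]
  exact this
end
section
open scoped InnerProductSpace
variable {H : Type*} [NormedAddCommGroup H] [InnerProductSpace ℂ H] [CompleteSpace H]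

theorem sa_inner {T : H →L[ℂ] H} (hT : IsSelfAdjoint T) (x y : H) : ⟪T x, y⟫_ℂ = ⟪x, T y⟫_ℂ := by
  have := ContinuousLinearMap.adjoint_inner_left T y x
  rwa [← ContinuousLinearMap.star_eq_adjoint, hT.star_eq] at this

theorem cfc_nn (c : H →L[ℂ] H) (f : ℝ → ℝ) (hf : Continuous f) (h0 : ∀ t, 0 ≤ f t) (x : H) :
    0 ≤ (⟪cfc f c x, x⟫_ℂ).re := by
  have h1 : cfc f c = cfc (fun t => √(f t)) c * cfc (fun t => √(f t)) c := by
    rw [← cfc_mul (fun t => √(f t)) (fun t => √(f t)) c (by fun_prop) (by fun_prop)]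
    congr 1; ext t; exact (Real.mul_self_sqrt (h0 t)).symm
  have hs : IsSelfAdjoint (cfc (fun t => √(f t)) c) := cfc_predicate _ _
  rw [h1, mul_apply_eq_comp, sa_inner hs]
  exact inner_self_nonneg (𝕜 := ℂ)

theorem spectral (c : H →L[ℂ] H) (hc : IsSelfAdjoint c) : ∃ W : ℕ → Submodule ℂ H,
    (∀ k, IsClosed (W k : Set H)) ∧ (∀ k, W (k + 1) ≤ W k) ∧
    (∀ T : H →L[ℂ] H, Commute c T → ∀ k, ∀ x ∈ W k, T x ∈ W k) ∧
    (∀ k, ∀ x ∈ W k, (⟪c x, x⟫_ℂ).re ≤ (1/4 : ℝ) ^ k * ‖x‖ ^ 2) ∧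
    (∀ k, ∀ x ∈ (W k)ᗮ, (1/4 : ℝ) ^ k * ‖x‖ ^ 2 ≤ (⟪c x, x⟫_ℂ).re) := by
  let f : ℕ → ℝ → ℝ := fun k t => max (t - (1/4 : ℝ) ^ k) 0
  let g : ℕ → ℝ → ℝ := fun k t => max ((1/4 : ℝ) ^ k - t) 0
  have hfc : ∀ k, Continuous (f k) := fun k => by simp only [f]; fun_prop
  have hgc : ∀ k, Continuous (g k) := fun k => by simp only [g]; fun_prop
  have hfg : ∀ k, c = algebraMap ℝ (H →L[ℂ] H) ((1/4 : ℝ) ^ k) + cfc (f k) c - cfc (g k) c := by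
    intro k
    rw [← cfc_const_add _ (f k) c (hfc k).continuousOn hc, ← cfc_sub _ _ c (by fun_prop) (by fun_prop)]
    conv_lhs => rw [← cfc_id' ℝ c]
    congr 1; ext t
    simp only [f, g]
    rcases le_total t ((1/4 : ℝ) ^ k) with h | h
    · rw [max_eq_right (by linarith), max_eq_left (by linarith)]; ring
    · rw [max_eq_left (by linarith), max_eq_right (by linarith)]; ring
  have hq : ∀ k x, (⟪c x, x⟫_ℂ).re = (1/4 : ℝ) ^ k * ‖x‖ ^ 2 + (⟪cfc (f k) c x, x⟫_ℂ).re -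
      (⟪cfc (g k) c x, x⟫_ℂ).re := by
    intro k x
    conv_lhs => rw [hfg k]
    have e : (algebraMap ℝ (H →L[ℂ] H) ((1/4 : ℝ) ^ k)) x = ((((1/4 : ℝ) ^ k : ℝ)) : ℂ) • x := by
      rw [Algebra.algebraMap_eq_smul_one]; rfl
    rw [sub_apply, add_apply, e, inner_sub_left, inner_add_left, inner_smul_left, inner_self_eq_norm_sq_to_K]
    rw [Complex.sub_re, Complex.add_re, Complex.conj_ofReal, Complex.re_ofReal_mul]
    norm_cast
  have hgf : ∀ k, cfc (f k) c * cfc (g k) c = 0 := by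
    intro k
    rw [← cfc_mul _ _ c (hfc k).continuousOn (hgc k).continuousOn]
    have : (fun t => f k t * g k t) = fun _ => 0 := by
      ext t; simp only [f, g]
      rcases le_total t ((1/4 : ℝ) ^ k) with h | h
      · rw [max_eq_right (by linarith)]; ring
      · rw [max_eq_right (b := (0:ℝ)) (a := (1/4 : ℝ) ^ k - t) (by linarith)]; ring
    rw [this]; simp
  refine ⟨fun k => LinearMap.ker (cfc (f k) c).toLinearMap, ?_, ?_, ?_, ?_, ?_⟩
  · intro k; exact (cfc (f k) c).isClosed_ker
  · intro k x hx
    rw [LinearMap.mem_ker] at hx ⊢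
    let u : ℝ → ℝ := fun t => max (t - (1/4 : ℝ) ^ k) 0 / max (t - (1/4 : ℝ) ^ (k+1)) ((1/4 : ℝ) ^ k - (1/4 : ℝ) ^ (k+1))
    have hpos : (0:ℝ) < (1/4 : ℝ) ^ k - (1/4 : ℝ) ^ (k+1) := by
      rw [pow_succ]; have : (0:ℝ) < (1/4 : ℝ) ^ k := by positivity
      linarith
    have huc : Continuous u := by
      simp only [u]
      refine Continuous.div (by fun_prop) (by fun_prop) fun t => ?_
      exact (lt_of_lt_of_le hpos (le_max_right _ _)).ne'
    have : cfc (f k) c = cfc u c * cfc (f (k+1)) c := by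
      rw [← cfc_mul _ _ c huc.continuousOn (hfc _).continuousOn]
      congr 1; ext t
      simp only [f, u]
      rcases le_total t ((1/4 : ℝ) ^ k) with h | h
      · rw [max_eq_right (by linarith)]; ring
      · rw [max_eq_left (b := (0:ℝ)) (a := t - (1/4 : ℝ) ^ k) (by linarith),
          max_eq_left (b := (0:ℝ)) (by linarith), max_eq_left (by linarith)]
        rw [div_mul_cancel₀]; linarith
    rw [this]
    change cfc u c (cfc (f (k+1)) c x) = 0
    have hx' : cfc (f (k+1)) c x = 0 := hx
    rw [hx', map_zero]
  · intro T hT k x hx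
    rw [LinearMap.mem_ker] at hx ⊢
    have h1 := hT.cfc_real (f k)
    have h2 := congrArg (fun U : H →L[ℂ] H => U x) h1.eq
    simp only [mul_apply_eq_comp] at h2
    have hx' : cfc (f k) c x = 0 := hx
    rw [hx', map_zero] at h2
    exact h2
  · intro k x hx
    have hx' : cfc (f k) c x = 0 := hx
    rw [hq k, hx']
    have := cfc_nn c (g k) (hgc k) (fun t => le_max_right _ _) x
    simp; linarith
  · intro k x hx
    have hs : IsSelfAdjoint (cfc (g k) c) := cfc_predicate _ _
    have hx' : cfc (g k) c x = 0 := by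
      rw [← inner_self_eq_zero (𝕜 := ℂ), sa_inner hs, ← inner_conj_symm]
      rw [(Submodule.mem_orthogonal _ _).1 hx]
      · simp
      · rw [LinearMap.mem_ker]
        have := congrArg (fun U : H →L[ℂ] H => U (cfc (g k) c x)) (hgf k)
        exact this
    rw [hq k, hx']
    have := cfc_nn c (f k) (hfc k) (fun t => le_max_right _ _) x
    simp; linarith

theorem douglas {E F : Type*} [NormedAddCommGroup E] [NormedSpace ℂ E] [NormedAddCommGroup F]
    [NormedSpace ℂ F] [CompleteSpace F] (A : E →L[ℂ] F) (B : E →L[ℂ] H) (C : ℝ)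
    (h : ∀ x, ‖A x‖ ≤ C * ‖B x‖) : ∃ X : H →L[ℂ] F, (∀ x, X (B x) = A x) ∧
      ∀ y, (∀ x, ⟪B x, y⟫_ℂ = 0) → X y = 0 := by
  let K : Submodule ℂ H := (LinearMap.range B.toLinearMap).topologicalClosure
  have : CompleteSpace K := (Submodule.isClosed_topologicalClosure _).completeSpace_coe
  have hBK : ∀ x, B x ∈ K := fun x => Submodule.le_topologicalClosure _ ⟨x, rfl⟩
  let e : E →ₗ[ℂ] K := LinearMap.codRestrict K B.toLinearMap hBK
  have hd : DenseRange e := by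
    intro y
    rw [Metric.mem_closure_iff]
    intro ε hε
    have := y.2
    rw [← SetLike.mem_coe, Submodule.topologicalClosure_coe, Metric.mem_closure_iff] at this
    obtain ⟨b, ⟨x, rfl⟩, hb⟩ := this ε hε
    exact ⟨e x, ⟨x, rfl⟩, hb⟩
  refine ⟨(A.toLinearMap.extendOfNorm e) ∘L K.orthogonalProjectionOnto, fun x => ?_, fun y hy => ?_⟩
  · have h1 : K.orthogonalProjectionOnto (B x) = e x :=
      Submodule.orthogonalProjectionOnto_mem_subspace_eq_self (K := K) (e x)
    rw [ContinuousLinearMap.comp_apply, h1]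
    exact LinearMap.extendOfNorm_eq hd ⟨C, h⟩ x
  · have : y ∈ Kᗮ := by
      rw [Submodule.orthogonal_closure, Submodule.mem_orthogonal]
      rintro _ ⟨x, rfl⟩
      exact hy x
    rw [ContinuousLinearMap.comp_apply,
      Submodule.orthogonalProjectionOnto_apply_of_mem_orthogonal this, map_zero]

theorem onb_iso {I : Type*} [DecidableEq I] (K : Submodule ℂ H) (hK : IsClosed (K : Set H)) (v : I → H) (hv : Orthonormal ℂ v)
    (hvK : ∀ i, v i ∈ K) (hsp : ∀ x ∈ K, (∀ i, ⟪v i, x⟫_ℂ = 0) → x = 0) :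
    ∃ J : L2 I →L[ℂ] H, (∀ x, ‖J x‖ = ‖x‖) ∧ (∀ i, J (eb i) = v i) ∧ (∀ x, J x ∈ K) ∧
      ∀ x ∈ K, ∃ k, J k = x := by
  have : CompleteSpace K := hK.completeSpace_coe
  let v' : I → K := fun i => ⟨v i, hvK i⟩
  have hv' : Orthonormal ℂ v' := by
    rw [orthonormal_iff_ite] at hv ⊢
    intro i j; exact hv i j
  have h0 : (Submodule.span ℂ (Set.range v'))ᗮ = ⊥ := by
    rw [Submodule.eq_bot_iff]
    intro x hx
    apply Subtype.ext
    apply hsp _ x.2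
    intro i
    exact (Submodule.mem_orthogonal _ _).1 hx (v' i) (Submodule.subset_span ⟨i, rfl⟩)
  let b := HilbertBasis.mkOfOrthogonalEqBot hv' h0
  refine ⟨K.subtypeL ∘L (b.repr.symm.toContinuousLinearEquiv : L2 I →L[ℂ] K), ?_, ?_, ?_, ?_⟩
  · intro x
    exact b.repr.symm.norm_map x
  · intro i
    have : b.repr.symm (lp.single 2 i (1:ℂ)) = v' i := by
      have := b.repr_symm_single i
      rw [HilbertBasis.coe_mkOfOrthogonalEqBot] at this
      exact this
    have h2 : b.repr.symm (eb i) = v' i := by rw [← this, eb]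
    change ((b.repr.symm (eb i) : K) : H) = v i
    rw [h2]
  · intro x
    exact (b.repr.symm x).2
  · intro x hx
    refine ⟨b.repr ⟨x, hx⟩, ?_⟩
    change ((b.repr.symm (b.repr ⟨x, hx⟩) : K) : H) = x
    simp

theorem sub_iso (K : Submodule ℂ H) (hK : IsClosed (K : Set H)) : ∃ (X : Set K) (J : L2 X →L[ℂ] H),
    (∀ x, ‖J x‖ = ‖x‖) ∧ (∀ x, J x ∈ K) ∧ ∀ x ∈ K, ∃ k, J k = x := by
  classical
  have : CompleteSpace K := hK.completeSpace_coe
  obtain ⟨X, b, hb⟩ := exists_hilbertBasis ℂ K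
  refine ⟨X, K.subtypeL ∘L (b.repr.symm.toContinuousLinearEquiv : L2 X →L[ℂ] K), ?_, ?_, ?_⟩
  · intro x
    exact b.repr.symm.norm_map x
  · intro x
    exact (b.repr.symm x).2
  · intro x hx
    refine ⟨b.repr ⟨x, hx⟩, ?_⟩
    change ((b.repr.symm (b.repr ⟨x, hx⟩) : K) : H) = x
    simp
end
section
open scoped InnerProductSpace
universe u
variable {H : Type u} [NormedAddCommGroup H] [InnerProductSpace ℂ H] [CompleteSpace H]

theorem adapted (M : Submodule ℂ H) (hM : IsClosed (M : Set H)) (V : ℕ → Submodule ℂ H)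
    (hV : ∀ k, IsClosed (V k : Set H)) (hle : ∀ k, V (k + 1) ≤ V k)
    (hred : ∀ k, ∀ x ∈ M, ∀ u ∈ V k, x - u ∈ (V k)ᗮ → u ∈ M)
    (h0 : ∀ x, (∀ k, x ∈ V k) → x = 0) :
    ∃ (I : Type u) (n : I → ℕ) (v : I → H), Orthonormal ℂ v ∧
      (∀ i, v i ∈ M ∧ v i ∈ V (n i) ∧ v i ∈ (V (n i + 1))ᗮ) ∧
      (∀ x ∈ M, x ∈ V 0 → (∀ i, ⟪v i, x⟫_ℂ = 0) → x = 0) := by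
  classical
  let B : ℕ → Submodule ℂ H := fun k => M ⊓ V k ⊓ (V (k + 1))ᗮ
  have hBc : ∀ k, IsClosed (B k : Set H) := fun k =>
    (hM.inter (hV k)).inter (Submodule.isClosed_orthogonal _)
  have hBC : ∀ k, CompleteSpace (B k) := fun k => (hBc k).completeSpace_coe
  choose X b hb using fun k => (haveI := hBC k; exists_hilbertBasis ℂ (B k))
  have hanti : ∀ k l, k ≤ l → V l ≤ V k := fun k l h => antitone_nat_of_succ_le hle h
  refine ⟨Σ k, X k, fun i => i.1, fun i => ((i.2 : B i.1) : H), ⟨?_, ?_⟩, ?_, ?_⟩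
  · rintro ⟨k, x⟩
    have := (b k).orthonormal.1 x
    rw [hb k] at this
    exact this
  · rintro ⟨k, x⟩ ⟨l, y⟩ hne
    rcases lt_trichotomy k l with h | h | h
    · have h1 := (x : B k).2.2
      have h2 := hanti (k+1) l h (y : B l).2.1.2
      exact (Submodule.mem_orthogonal' _ _).1 h1 _ h2
    · subst h
      have hxy : x ≠ y := fun h => hne (by rw [h])
      have := (b k).orthonormal.2 hxy
      rw [hb k] at this
      exact this
    · have h1 := (y : B l).2.2
      have h2 := hanti (l+1) k h (x : B k).2.1.2
      exact (Submodule.mem_orthogonal _ _).1 h1 _ h2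
  · rintro ⟨k, x⟩
    exact ⟨(x : B k).2.1.1, (x : B k).2.1.2, (x : B k).2.2⟩
  · intro x hxM hx0 hx
    apply h0
    intro k
    induction k with
    | zero => exact hx0
    | succ k ih =>
      have : CompleteSpace (V (k+1)) := (hV (k+1)).completeSpace_coe
      obtain ⟨u, hu, t, ht, rfl⟩ := (V (k+1)).exists_add_mem_mem_orthogonal x
      have huM : u ∈ M := hred (k+1) _ hxM u hu (by simpa using ht)
      have htB : t ∈ B k := by
        refine ⟨⟨?_, ?_⟩, ht⟩
        · have := M.sub_mem hxM huM
          simpa using this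
        · have := (V k).sub_mem ih (hle k hu)
          simpa using this
      have hz : (b k).repr ⟨t, htB⟩ = 0 := by
        ext i
        rw [HilbertBasis.repr_apply_apply, hb k]
        have h1 := hx ⟨k, i⟩
        have h2 : ⟪((i : B k) : H), u⟫_ℂ = 0 := (Submodule.mem_orthogonal' _ _).1 (i : B k).2.2 _ hu
        simp only [inner_add_right, h2, zero_add] at h1
        exact h1
      have ht0 : (⟨t, htB⟩ : B k) = 0 := by simpa using hz
      have : t = 0 := congrArg Subtype.val ht0
      rw [this, add_zero]; exact hu

end
section
open scoped InnerProductSpace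
universe u
variable {H : Type u} [NormedAddCommGroup H] [InnerProductSpace ℂ H]

theorem supp_mem {I : Type*} [DecidableEq I] (J : L2 I →L[ℂ] H) (K : Submodule ℂ H)
    (hK : IsClosed (K : Set H)) (p : I → Prop) (h : ∀ i, p i → J (eb i) ∈ K) (x : L2 I)
    (hx : dg p x = x) : J x ∈ K := by
  classical
  have hs := (lp.hasSum_single (p := 2) (by simp) x).mapL J
  refine hK.mem_of_tendsto hs (Filter.Eventually.of_forall fun F => K.sum_mem fun i _ => ?_)
  have e : lp.single 2 i (x i) = (x i) • (eb i : L2 I) := by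
    rw [eb, ← lp.single_smul]; simp
  rw [e, map_smul]
  by_cases hp : p i
  · exact K.smul_mem _ (h i hp)
  · have : x i = 0 := by rw [← hx, dg_apply, if_neg hp]
    rw [this, zero_smul]; exact K.zero_mem

theorem pyth (a b : H) (h : ⟪a, b⟫_ℂ = 0) : ‖a + b‖ ^ 2 = ‖a‖ ^ 2 + ‖b‖ ^ 2 := by
  have := norm_add_sq_eq_norm_sq_add_norm_sq_of_inner_eq_zero (𝕜 := ℂ) a b h
  nlinarith

theorem wedge {I : Type*} (R : L2 I →L[ℂ] H) (n : I → ℕ) (w : L2 I →L[ℂ] L2 I)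
    (hw : ∀ x i, w x i = (2:ℂ)⁻¹ ^ (n i) * x i)
    (ho : ∀ m a b, dg (fun i => n i < m) a = a → dg (fun i => n i = m) b = b → ⟪R a, R b⟫_ℂ = 0)
    (hb : ∀ m b, dg (fun i => n i = m) b = b →
      (1/4 : ℝ) ^ (m + 1) * ‖b‖ ^ 2 ≤ ‖R b‖ ^ 2 ∧ ‖R b‖ ^ 2 ≤ (1/4 : ℝ) ^ m * ‖b‖ ^ 2) (x : L2 I) :
    (1/4 : ℝ) * ‖w x‖ ^ 2 ≤ ‖R x‖ ^ 2 ∧ ‖R x‖ ^ 2 ≤ ‖w x‖ ^ 2 := by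
  classical
  have key : ∀ m, ∀ x, dg (fun i => n i < m) x = x →
      (1/4 : ℝ) * ‖w x‖ ^ 2 ≤ ‖R x‖ ^ 2 ∧ ‖R x‖ ^ 2 ≤ ‖w x‖ ^ 2 := by
    intro m
    induction m with
    | zero =>
      intro x hx
      have : x = 0 := by rw [← hx]; ext i; simp [dg_apply]
      subst this; simp
    | succ m ih =>
      intro x hx
      set a := dg (fun i => n i < m) x with ha
      set b := dg (fun i => n i = m) x with hbb
      have ea : dg (fun i => n i < m) a = a := by rw [ha, ← mul_apply_eq_comp, dg_idem]
      have eb' : dg (fun i => n i = m) b = b := by rw [hbb, ← mul_apply_eq_comp, dg_idem]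
      have hxab : x = a + b := by
        rw [← hx, ha, hbb]
        ext i
        rw [lp.coeFn_add, Pi.add_apply, dg_apply, dg_apply, dg_apply]
        rcases lt_trichotomy (n i) m with h | h | h
        · rw [if_pos (by omega), if_pos h, if_neg (by omega), add_zero]
        · rw [if_pos (by omega), if_neg (by omega), if_pos h, zero_add]
        · rw [if_neg (by omega), if_neg (by omega), if_neg (by omega), zero_add]
      have hwb : w b = ((2:ℂ)⁻¹ ^ m) • b := by
        ext i
        rw [hw, lp.coeFn_smul, Pi.smul_apply, smul_eq_mul, hbb, dg_apply]
        by_cases h : n i = m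
        · rw [h]
        · rw [if_neg h]; simp
      have hwbn : ‖w b‖ ^ 2 = (1/4 : ℝ) ^ m * ‖b‖ ^ 2 := by
        rw [hwb, norm_smul, norm_pow, norm_inv, Complex.norm_ofNat, mul_pow, ← pow_mul, mul_comm m 2, pow_mul]
        norm_num
      have hwab : ⟪w a, w b⟫_ℂ = 0 := by
        rw [lp.inner_eq_tsum]
        have : ∀ i, ⟪w a i, w b i⟫_ℂ = 0 := by
          intro i
          rw [hw, hw, ha, hbb, dg_apply, dg_apply]
          by_cases h : n i = m
          · rw [if_neg (c := n i < m) (by omega)]; simp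
          · rw [if_neg h]; simp
        rw [tsum_congr this, tsum_zero]
      have e1 : ‖R x‖ ^ 2 = ‖R a‖ ^ 2 + ‖R b‖ ^ 2 := by
        rw [hxab, map_add, pyth _ _ (ho m a b ea eb')]
      have e2 : ‖w x‖ ^ 2 = ‖w a‖ ^ 2 + ‖w b‖ ^ 2 := by
        rw [hxab, map_add, pyth _ _ hwab]
      have h1 := ih a ea
      have h2 := hb m b eb'
      rw [pow_succ] at h2
      rw [e1, e2]
      rw [hwbn]
      constructor <;> nlinarith [h1.1, h1.2, h2.1, h2.2]
  have hs := lp.hasSum_single (p := 2) (by simp) x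
  have c1 : IsClosed {x : L2 I | (1/4 : ℝ) * ‖w x‖ ^ 2 ≤ ‖R x‖ ^ 2} := isClosed_le (by fun_prop) (by fun_prop)
  have c2 : IsClosed {x : L2 I | ‖R x‖ ^ 2 ≤ ‖w x‖ ^ 2} := isClosed_le (by fun_prop) (by fun_prop)
  have hcl := c1.inter c2
  refine hcl.mem_of_tendsto hs (Filter.Eventually.of_forall fun F => ?_)
  refine key (F.sup n + 1) _ ?_
  ext j
  rw [dg_apply]
  split_ifs with h
  · rfl
  · rw [lp.coeFn_sum, Finset.sum_apply, Finset.sum_eq_zero]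
    intro i hi
    rw [lp.single_apply, Pi.single_apply, if_neg]
    rintro rfl
    have := Finset.le_sup (f := n) hi
    omega
end
section
open scoped InnerProductSpace
universe u
variable {H : Type u} [NormedAddCommGroup H] [InnerProductSpace ℂ H] [CompleteSpace H]

/-- orthogonal projection data -/
structure PR (M : Submodule ℂ H) (P : H →L[ℂ] H) : Prop where
  sa : ∀ x y, ⟪P x, y⟫_ℂ = ⟪x, P y⟫_ℂ
  mem : ∀ x, P x ∈ M
  eq : ∀ x ∈ M, P x = x

theorem PR.perp {M : Submodule ℂ H} {P : H →L[ℂ] H} (h : PR M P) (x y : H) (hy : y ∈ M) :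
    ⟪x - P x, y⟫_ℂ = 0 := by
  rw [inner_sub_left, h.sa, h.eq y hy, sub_self]

theorem PR.idem {M : Submodule ℂ H} {P : H →L[ℂ] H} (h : PR M P) : P * P = P := by
  ext x; exact h.eq _ (h.mem x)

theorem pr_exists (M : Submodule ℂ H) (hM : IsClosed (M : Set H)) :
    ∃ P : H →L[ℂ] H, IsSelfAdjoint P ∧ PR M P := by
  have : CompleteSpace M := hM.completeSpace_coe
  refine ⟨M.starProjection, ?_, ⟨?_, ?_, ?_⟩⟩
  · exact isSelfAdjoint_starProjection M
  · intro x y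
    exact sa_inner (isSelfAdjoint_starProjection M) x y
  · intro x
    exact Submodule.starProjection_apply_mem M x
  · intro x hx
    exact Submodule.starProjection_eq_self_iff.2 hx

theorem head_piece {M N V : Submodule ℂ H} {Q : H →L[ℂ] H} (hMc : IsClosed (M : Set H)) (hQ : PR N Q)
    (hV : ∀ x ∈ V, Q x ∈ V) (hlow : ∀ x ∈ M, x ∈ Vᗮ → (1/4 : ℝ) * ‖x‖ ^ 2 ≤ ‖x - Q x‖ ^ 2) :
    ∃ (I : Type u) (μ : L2 I →L[ℂ] H) (μ' : H →L[ℂ] L2 I), (∀ k, μ' (μ k) = k) ∧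
      (∀ k, μ k ∈ M) ∧ (∀ k, μ k ∈ Vᗮ) ∧ (∀ x ∈ N, μ' x = 0) ∧ (∀ x ∈ V, μ' x = 0) ∧
      ∀ x ∈ M, x ∈ Vᗮ → ∃ k, μ k = x := by
  obtain ⟨X, μ, hn, hm, hs⟩ := sub_iso (M ⊓ Vᗮ) (hMc.inter (Submodule.isClosed_orthogonal _))
  let B : L2 X →L[ℂ] H := μ - Q ∘L μ
  have hB : ∀ x, B x = μ x - Q (μ x) := fun x => rfl
  obtain ⟨μ', h1, h2⟩ := douglas (ContinuousLinearMap.id ℂ (L2 X)) B 2 (by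
    intro x
    have := hlow (μ x) (hm x).1 (hm x).2
    rw [hn, ← hB] at this
    rw [ContinuousLinearMap.id_apply]
    nlinarith [norm_nonneg x, norm_nonneg (B x)])
  have hN : ∀ x ∈ N, μ' x = 0 := fun y hy => h2 y fun x => hQ.perp _ _ hy
  refine ⟨X, μ, μ', ?_, fun k => (hm k).1, fun k => (hm k).2, hN, ?_, fun x h h' => hs x ⟨h, h'⟩⟩
  · intro k
    have : μ k = B k + Q (μ k) := by rw [hB]; abel
    rw [this, map_add, h1, hN _ (hQ.mem _), add_zero]; rfl
  · intro y hy
    refine h2 y fun x => ?_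
    rw [hB, inner_sub_left, hQ.sa, (Submodule.mem_orthogonal' _ _).1 (hm x).2 y hy,
      (Submodule.mem_orthogonal' _ _).1 (hm x).2 _ (hV y hy), sub_zero]

theorem tail_piece {M N V : Submodule ℂ H} {P Q : H →L[ℂ] H} (hP : PR M P) (hQ : PR N Q)
    (hVc : IsClosed (V : Set H))
    (hVP : ∀ x ∈ V, P x ∈ V) (hVQ : ∀ x ∈ V, Q x ∈ V)
    (hup : ∀ x ∈ V, ‖P x - Q x‖ ^ 2 ≤ (1/4 : ℝ) * ‖x‖ ^ 2)
    (hred : ∀ x ∈ M, ∀ u ∈ V, x - u ∈ Vᗮ → u ∈ M)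
    {I : Type u} (n : I → ℕ) (w : L2 I →L[ℂ] L2 I) (hw : ∀ x i, w x i = (2:ℂ)⁻¹ ^ (n i) * x i)
    (J : L2 I →L[ℂ] H) (hJn : ∀ x, ‖J x‖ = ‖x‖) (hJM : ∀ x, J x ∈ M) (hJV : ∀ x, J x ∈ V)
    (hJs : ∀ x ∈ M, x ∈ V → ∃ k, J k = x)
    (hwed : ∀ x, (1/4 : ℝ) * ‖w x‖ ^ 2 ≤ ‖J x - Q (J x)‖ ^ 2 ∧ ‖J x - Q (J x)‖ ^ 2 ≤ ‖w x‖ ^ 2) :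
    ∃ (α β : L2 I →L[ℂ] H) (γ δ : H →L[ℂ] L2 I), TM M N n w α β γ δ ∧
      (∀ x ∈ Vᗮ, γ x = 0) ∧ (∀ x ∈ Vᗮ, δ x = 0) ∧
      (∀ x ∈ M, x ∈ V → α (γ x) + β (δ x) = x) ∧ (∀ x ∈ N, x ∈ V → α (γ x) + β (δ x) = x) := by
  classical
  let R : L2 I →L[ℂ] H := J - Q ∘L J
  have hR : ∀ x, R x = J x - Q (J x) := fun x => rfl
  let α : L2 I →L[ℂ] H := Q ∘L J
  have hα : ∀ x, α x = Q (J x) := fun x => rfl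
  have hαN : ∀ k, α k ∈ N := fun k => hQ.mem _
  have hαV : ∀ k, α k ∈ V := fun k => hVQ _ (hJV k)
  have hRV : ∀ k, R k ∈ V := fun k => V.sub_mem (hJV k) (hαV k)
  have hRN : ∀ k, ∀ y ∈ N, ⟪R k, y⟫_ℂ = 0 := fun k y hy => hQ.perp _ _ hy
  have hJd : ∀ k, J k = α k + R k := fun k => by rw [hR, hα]; abel
  have hαn : ∀ x, ‖x‖ ≤ 2 * ‖α x‖ := by
    intro x
    have h1 := hup _ (hJV x)
    rw [hP.eq _ (hJM x), ← hR, hJn] at h1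
    have h2 := pyth (R x) (α x) (hRN x _ (hαN x))
    rw [add_comm, ← hJd, hJn] at h2
    nlinarith [norm_nonneg x, norm_nonneg (α x)]
  obtain ⟨γ, g1, g2⟩ := douglas (ContinuousLinearMap.id ℂ (L2 I)) α 2 hαn
  obtain ⟨β, b1, -⟩ := douglas R w 1 (by
    intro x
    have := (hwed x).2
    rw [← hR] at this
    nlinarith [norm_nonneg (R x), norm_nonneg (w x)])
  obtain ⟨δ, d1, d2⟩ := douglas w R 2 (by
    intro x
    have := (hwed x).1
    rw [← hR] at this
    nlinarith [norm_nonneg (R x), norm_nonneg (w x)])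
  have hweb : ∀ j, (eb j : L2 I) = ((2:ℂ) ^ (n j)) • w (eb j) := by
    intro j
    ext i
    rw [lp.coeFn_smul, Pi.smul_apply, hw, smul_eq_mul, eb_apply]
    split_ifs with h
    · subst h; simp
    · simp
  have hdw : ∀ {E : Type u} [NormedAddCommGroup E] [NormedSpace ℂ E] (T U : L2 I →L[ℂ] E),
      (∀ k, T (w k) = U (w k)) → T = U := by
    intro E _ _ T U h
    apply ext_eb
    intro j
    rw [hweb j, map_smul, map_smul, h]
  have hγV : ∀ x ∈ Vᗮ, γ x = 0 := fun x hx => g2 x fun k => (Submodule.mem_orthogonal _ _).1 hx _ (hαV k)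
  have hδV : ∀ x ∈ Vᗮ, δ x = 0 := fun x hx => d2 x fun k => (Submodule.mem_orthogonal _ _).1 hx _ (hRV k)
  have hδN : ∀ x ∈ N, δ x = 0 := fun x hx => d2 x fun k => hRN k x hx
  have hγR : ∀ k, γ (R k) = 0 := fun k => g2 _ fun l => by
    rw [← inner_conj_symm, hRN k _ (hαN l), map_zero]
  have hγJ : ∀ k, γ (J k) = k := fun k => by rw [hJd, map_add, g1, hγR, add_zero]; rfl
  have hδJ : ∀ k, δ (J k) = w k := fun k => by rw [hJd, map_add, d1, hδN _ (hαN k), zero_add]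
  have hVC : CompleteSpace V := hVc.completeSpace_coe
  refine ⟨α, β, γ, δ, ⟨hw, fun k => g1 k, ?_, fun k => hδN _ (hαN k), ?_, hαN, ?_, hδN, ?_⟩, hγV, hδV, ?_, ?_⟩
  · intro k
    have := hdw (γ ∘L β) 0 (fun k => by simp [b1, hγR])
    exact congrArg (fun T : L2 I →L[ℂ] L2 I => T k) this
  · intro k
    have := hdw (δ ∘L β) (ContinuousLinearMap.id ℂ _) (fun k => by simp [b1, d1])
    exact congrArg (fun T : L2 I →L[ℂ] L2 I => T k) this
  · intro k
    rw [b1, ← hJd]; exact hJM k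
  · intro x hx
    obtain ⟨u, hu, t, ht, rfl⟩ := V.exists_add_mem_mem_orthogonal x
    obtain ⟨k, rfl⟩ := hJs u (hred _ hx u hu (by simpa using ht)) hu
    rw [map_add, map_add, hγV t ht, hδV t ht, add_zero, add_zero, hγJ, hδJ]
  · intro x hx hx'
    obtain ⟨k, rfl⟩ := hJs x hx hx'
    rw [hγJ, hδJ, b1, ← hJd]
  · intro y hy hy'
    let K : Submodule ℂ H := LinearMap.range α.toLinearMap
    have hKc : IsClosed (K : Set H) := by
      have ha : AntilipschitzWith 2 α :=
        AddMonoidHomClass.antilipschitz_of_bound α (K := 2) (by intro x; exact_mod_cast hαn x)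
      have := ha.isClosed_range α.uniformContinuous
      have e : (K : Set H) = Set.range α := by ext; rfl
      rw [e]; exact this
    have : CompleteSpace K := hKc.completeSpace_coe
    obtain ⟨u, ⟨k, hk⟩, b, hb, hyu⟩ := K.exists_add_mem_mem_orthogonal y
    have hk' : α k = u := hk
    subst hk'
    have hbe : b = y - α k := by rw [hyu]; abel
    have hbN : b ∈ N := by rw [hbe]; exact N.sub_mem hy (hαN k)
    have hbV : b ∈ V := by rw [hbe]; exact V.sub_mem hy' (hαV k)
    have hPb : P b = 0 := by
      obtain ⟨l, hl⟩ := hJs (P b) (hP.mem b) (hVP b hbV)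
      have h1 : ⟪J l, b⟫_ℂ = 0 := by
        rw [hJd, inner_add_left, hRN l b hbN, (Submodule.mem_orthogonal _ _).1 hb (α l) ⟨l, rfl⟩, add_zero]
      rw [hl, hP.sa] at h1
      have h2 : ⟪P b, P b⟫_ℂ = 0 := by
        rw [hP.sa, hP.eq _ (hP.mem b)]; exact h1
      exact inner_self_eq_zero.1 h2
    have hb0 : b = 0 := by
      have := hup b hbV
      rw [hPb, hQ.eq b hbN, zero_sub, norm_neg] at this
      have : ‖b‖ = 0 := by nlinarith [norm_nonneg b, sq_nonneg ‖b‖]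
      exact norm_eq_zero.1 this
    rw [hyu, hb0, add_zero, g1, hδN _ (hαN k), map_zero, add_zero]; rfl
end
section
open scoped InnerProductSpace
universe u
variable {H : Type u} [NormedAddCommGroup H] [InnerProductSpace ℂ H] [CompleteSpace H]

theorem red_of_inv {M V : Submodule ℂ H} {P : H →L[ℂ] H} (hP : PR M P) (hV : ∀ x ∈ V, P x ∈ V) :
    ∀ x ∈ M, ∀ u ∈ V, x - u ∈ Vᗮ → u ∈ M := by
  intro x hx u hu h
  have h1 : P (x - u) ∈ Vᗮ := by
    rw [Submodule.mem_orthogonal]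
    intro y hy
    rw [← hP.sa]
    exact (Submodule.mem_orthogonal _ _).1 h _ (hV y hy)
  have h2 : P u - u ∈ Vᗮ := by
    have := Vᗮ.sub_mem h h1
    rw [map_sub, hP.eq x hx] at this
    simpa using this
  have h3 : P u - u ∈ V := V.sub_mem (hV u hu) hu
  have h4 : P u - u = 0 := inner_self_eq_zero.1 ((Submodule.mem_orthogonal _ _).1 h2 _ h3)
  rw [← sub_eq_zero.1 h4]; exact hP.mem u

theorem geom {M N : Submodule ℂ H} {P Q : H →L[ℂ] H} (sP : IsSelfAdjoint P) (sQ : IsSelfAdjoint Q)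
    (hP : PR M P) (hQ : PR N Q) : ∃ W : ℕ → Submodule ℂ H,
    (∀ k, IsClosed (W k : Set H)) ∧ (∀ k, W (k + 1) ≤ W k) ∧
    (∀ k, ∀ x ∈ W k, P x ∈ W k) ∧ (∀ k, ∀ x ∈ W k, Q x ∈ W k) ∧
    (∀ k, ∀ x ∈ W k, ‖P x - Q x‖ ^ 2 ≤ (1/4 : ℝ) ^ k * ‖x‖ ^ 2) ∧
    (∀ k, ∀ x ∈ (W k)ᗮ, (1/4 : ℝ) ^ k * ‖x‖ ^ 2 ≤ ‖P x - Q x‖ ^ 2) := by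
  have sD : IsSelfAdjoint (P - Q) := sP.sub sQ
  have sc : IsSelfAdjoint ((P - Q) * (P - Q)) := by
    rw [IsSelfAdjoint, star_mul, sD.star_eq]
  have hn : ∀ x, (⟪((P - Q) * (P - Q)) x, x⟫_ℂ).re = ‖P x - Q x‖ ^ 2 := by
    intro x
    rw [mul_apply_eq_comp, sa_inner sD]
    exact inner_self_eq_norm_sq (𝕜 := ℂ) (P x - Q x)
  obtain ⟨W, h1, h2, h3, h4, h5⟩ := spectral _ sc
  have iP := hP.idem
  have iQ := hQ.idem
  have cP : Commute ((P - Q) * (P - Q)) P := by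
    have e1 : (P - Q) * (P - Q) * P = (P * P) * P - P * Q * P - Q * (P * P) + (Q * Q) * P := by noncomm_ring
    have e2 : P * ((P - Q) * (P - Q)) = P * (P * P) - (P * P) * Q - P * Q * P + P * (Q * Q) := by noncomm_ring
    rw [Commute, SemiconjBy, e1, e2, iP, iQ, iP]; abel
  have cQ : Commute ((P - Q) * (P - Q)) Q := by
    have e1 : (P - Q) * (P - Q) * Q = (P * P) * Q - P * (Q * Q) - Q * P * Q + (Q * Q) * Q := by noncomm_ring
    have e2 : Q * ((P - Q) * (P - Q)) = Q * (P * P) - Q * P * Q - (Q * Q) * P + Q * (Q * Q) := by noncomm_ring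
    rw [Commute, SemiconjBy, e1, e2, iP, iQ, iQ]; abel
  refine ⟨W, h1, h2, h3 P cP, h3 Q cQ, ?_, ?_⟩
  · intro k x hx; rw [← hn]; exact h4 k x hx
  · intro k x hx; rw [← hn]; exact h5 k x hx

theorem all_good {M N : Submodule ℂ H} (hMc : IsClosed (M : Set H)) (hNc : IsClosed (N : Set H))
    (hMN : M ⊓ N = ⊥) (hspan : (M ⊔ N).topologicalClosure = ⊤)
    {S : Subalgebra ℂ (H →L[ℂ] H)} {G : (H →L[ℂ] H) → Prop}
    (hS : ∀ T : H →L[ℂ] H, T ∈ S ↔ (∀ x ∈ M, T x ∈ M) ∧ (∀ x ∈ N, T x ∈ N))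
    (hG : ZPGood S G) {T : H →L[ℂ] H} (hT : T ∈ S) : G T := by
  classical
  obtain ⟨P, sP, hP⟩ := pr_exists M hMc
  obtain ⟨Q, sQ, hQ⟩ := pr_exists N hNc
  obtain ⟨W, hWc, hWle, hWP, hWQ, hWu, hWl⟩ := geom sP sQ hP hQ
  have hdense : ∀ x : H, (∀ y ∈ M, ⟪y, x⟫_ℂ = 0) → (∀ y ∈ N, ⟪y, x⟫_ℂ = 0) → x = 0 := by
    intro x h1 h2
    have hx : x ∈ (M ⊔ N)ᗮ := by
      rw [← Submodule.inf_orthogonal]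
      exact ⟨(Submodule.mem_orthogonal _ _).2 h1, (Submodule.mem_orthogonal _ _).2 h2⟩
    rw [← Submodule.orthogonal_closure, hspan, Submodule.top_orthogonal_eq_bot] at hx
    simpa using hx
  have h0 : ∀ x, (∀ k, x ∈ W (k + 1)) → x = 0 := by
    intro x hx
    have hlim : Filter.Tendsto (fun k : ℕ => (1/4 : ℝ) ^ (k + 1) * ‖x‖ ^ 2) Filter.atTop (𝓝 (0 * ‖x‖ ^ 2)) :=
      (((tendsto_pow_atTop_nhds_zero_of_lt_one (by norm_num) (by norm_num)).comp
        (Filter.tendsto_add_atTop_nat 1))).mul_const _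
    have hz : ‖P x - Q x‖ ^ 2 ≤ 0 * ‖x‖ ^ 2 := ge_of_tendsto' hlim fun k => hWu (k + 1) x (hx k)
    have hz' : P x - Q x = 0 := by
      rw [zero_mul] at hz
      exact norm_eq_zero.1 (by nlinarith [norm_nonneg (P x - Q x)])
    have hPQ : P x = Q x := sub_eq_zero.1 hz'
    have hP0 : P x = 0 := by
      have : P x ∈ M ⊓ N := ⟨hP.mem x, hPQ ▸ hQ.mem x⟩
      rw [hMN] at this; simpa using this
    apply hdense
    · intro y hy
      rw [← hP.eq y hy, hP.sa, hP0, inner_zero_right]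
    · intro y hy
      rw [← hQ.eq y hy, hQ.sa, ← hPQ, hP0, inner_zero_right]
  have hanti : ∀ k l, k ≤ l → W l ≤ W k := fun k l h => antitone_nat_of_succ_le hWle h
  obtain ⟨I, n₀, v, hv, hvm, hvs⟩ := adapted M hMc (fun k => W (k + 1)) (fun k => hWc _) (fun k => hWle _)
    (fun k => red_of_inv hP (hWP (k + 1))) h0
  obtain ⟨J, hJn, hJe, hJm, hJs⟩ := onb_iso (M ⊓ W 1) (hMc.inter (hWc 1)) v hv
    (fun i => ⟨(hvm i).1, hanti 1 _ (by omega) (hvm i).2.1⟩) (fun x hx h => hvs x hx.1 hx.2 h)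
  let n : I → ℕ := fun i => n₀ i + 1
  let w : L2 I →L[ℂ] L2 I := wop (fun i => (2:ℂ)⁻¹ ^ (n i)) id
  have hw : ∀ x i, w x i = (2:ℂ)⁻¹ ^ (n i) * x i := by
    intro x i
    refine wop_apply (a := fun i => (2:ℂ)⁻¹ ^ (n i)) (τ := id) 1 (fun i => ?_) (Set.injOn_id _) x i
    rw [norm_pow, norm_inv, Complex.norm_ofNat]
    exact pow_le_one₀ (by norm_num) (by norm_num)
  let R : L2 I →L[ℂ] H := J - Q ∘L J
  have hR : ∀ x, R x = J x - Q (J x) := fun x => rfl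
  have hRn : ∀ x, R x = P (J x) - Q (J x) := fun x => by rw [hR, hP.eq _ (hJm x).1]
  have hm1 : ∀ m b, dg (fun i => n i = m) b = b → J b ∈ W m := by
    intro m b hb
    refine supp_mem J (W m) (hWc m) _ (fun i hi => ?_) b hb
    rw [hJe, ← hi]; exact (hvm i).2.1
  have hm2 : ∀ m b, dg (fun i => n i = m) b = b → J b ∈ (W (m + 1))ᗮ := by
    intro m b hb
    refine supp_mem J (W (m + 1))ᗮ (Submodule.isClosed_orthogonal _) _ (fun i hi => ?_) b hb
    rw [hJe, ← hi]; exact (hvm i).2.2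
  have hm3 : ∀ m b, dg (fun i => n i < m) b = b → J b ∈ (W m)ᗮ := by
    intro m b hb
    refine supp_mem J (W m)ᗮ (Submodule.isClosed_orthogonal _) _ (fun i hi => ?_) b hb
    rw [hJe]
    exact Submodule.orthogonal_le (hanti (n i + 1) m hi) (hvm i).2.2
  have hwed := wedge R n w hw (by
      intro m a b ha hb
      have h1 := hm3 m a ha
      have h2 := hm1 m b hb
      have h3 : R b ∈ W m := (W m).sub_mem h2 (hWQ m _ h2)
      have h4 : ⟪R a, R b⟫_ℂ = ⟪J a, R b - Q (R b)⟫_ℂ := by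
        rw [hR a, inner_sub_left, inner_sub_right, hQ.sa]
      rw [h4]
      exact (Submodule.mem_orthogonal' _ _).1 h1 _ ((W m).sub_mem h3 (hWQ m _ h3))) (by
      intro m b hb
      rw [hRn, ← hJn]
      exact ⟨hWl _ _ (hm2 m b hb), hWu _ _ (hm1 m b hb)⟩)
  obtain ⟨α, β, γ, δ, hTM, hγ, hδ, hxM, hxN⟩ := tail_piece hP hQ (hWc 1) (hWP 1) (hWQ 1)
    (fun x hx => by have := hWu 1 x hx; rwa [pow_one] at this)
    (red_of_inv hP (hWP 1)) n w hw J hJn (fun x => (hJm x).1) (fun x => (hJm x).2)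
    (fun x h h' => hJs x ⟨h, h'⟩) (fun x => hwed x)
  obtain ⟨I₁, μ, μ', m1, m2, m3, m4, m5, m6⟩ := head_piece (V := W 1) hMc hQ (hWQ 1)
    (fun x hx h => by
      have := hWl 1 x h
      rwa [pow_one, hP.eq x hx] at this)
  obtain ⟨I₂, ν, ν', n1, n2, n3, n4, n5, n6⟩ := head_piece (V := W 1) hNc hP (hWP 1)
    (fun x hx h => by
      have := hWl 1 x h
      rwa [pow_one, hQ.eq x hx, norm_sub_rev] at this)
  have hC : CompleteSpace (W 1) := (hWc 1).completeSpace_coe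
  refine assemble hTM hS hG μ μ' ν ν' m1 n1 m2 n2 m4 n4 ?_ hT
  let L : H →L[ℂ] H := α ∘L γ + β ∘L δ + μ ∘L μ' + ν ∘L ν'
  have hL : ∀ x, L x = α (γ x) + β (δ x) + μ (μ' x) + ν (ν' x) := fun x => rfl
  have hLM : ∀ x ∈ M, L x = x := by
    intro x hx
    obtain ⟨u, hu, t, ht, rfl⟩ := (W 1).exists_add_mem_mem_orthogonal x
    have huM : u ∈ M := red_of_inv hP (hWP 1) _ hx u hu (by simpa using ht)
    have htM : t ∈ M := by simpa using M.sub_mem hx huM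
    obtain ⟨k, rfl⟩ := m6 t htM ht
    rw [hL, n4 _ hx, map_add γ, map_add δ, map_add μ', hγ _ ht, hδ _ ht, m5 u hu, m1, map_zero,
      add_zero, add_zero, zero_add, add_zero, hxM u huM hu]
  have hLN : ∀ x ∈ N, L x = x := by
    intro x hx
    obtain ⟨u, hu, t, ht, rfl⟩ := (W 1).exists_add_mem_mem_orthogonal x
    have huN : u ∈ N := red_of_inv hQ (hWQ 1) _ hx u hu (by simpa using ht)
    have htN : t ∈ N := by simpa using N.sub_mem hx huN
    obtain ⟨k, rfl⟩ := n6 t htN ht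
    rw [hL, m4 _ hx, map_add γ, map_add δ, map_add ν', hγ _ ht, hδ _ ht, n5 u hu, n1, map_zero,
      add_zero, add_zero, zero_add, add_zero, hxN u huN hu]
  intro x
  rw [← hL]
  have hE : (M ⊔ N).topologicalClosure ≤ LinearMap.ker (L - ContinuousLinearMap.id ℂ H).toLinearMap := by
    refine Submodule.topologicalClosure_minimal _ (sup_le ?_ ?_) (L - ContinuousLinearMap.id ℂ H).isClosed_ker
    · intro y hy
      exact sub_eq_zero.2 (hLM y hy)
    · intro y hy
      exact sub_eq_zero.2 (hLN y hy)
  rw [hspan] at hE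
  exact sub_eq_zero.1 (hE (Submodule.mem_top (x := x)))
end
section
set_option synthInstance.maxHeartbeats 1000000

theorem zpgood_of {A : Type*} [NormedRing A] [NormedAlgebra ℂ A] (S : Subalgebra ℂ A)
    {B : Type*} [NonUnitalNormedRing B] [NormedSpace ℂ B] [IsScalarTower ℂ B B]
    [SMulCommClass ℂ B B] (φ : ↥S →ₗ[ℂ] B) (hφcont : Continuous φ)
    (hφzp : ∀ x y : ↥S, x * y = 0 → φ x * φ y = 0) :
    ZPGood S (fun T => ∃ h : T ∈ S, ∀ x y : ↥S, φ (x * ⟨T, h⟩) * φ y = φ x * φ (⟨T, h⟩ * y)) := by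
  refine ⟨?_, ?_, ?_, ?_, ?_⟩
  · rintro a b ⟨ha, ha'⟩ ⟨hb, hb'⟩
    refine ⟨S.add_mem ha hb, fun x y => ?_⟩
    have e : (⟨a + b, S.add_mem ha hb⟩ : S) = ⟨a, ha⟩ + ⟨b, hb⟩ := rfl
    rw [e, mul_add, add_mul, map_add, map_add, add_mul, mul_add, ha', hb']
  · rintro c a ⟨ha, ha'⟩
    refine ⟨S.smul_mem ha c, fun x y => ?_⟩
    have e : (⟨c • a, S.smul_mem ha c⟩ : S) = c • ⟨a, ha⟩ := rfl
    rw [e, mul_smul_comm, smul_mul_assoc, map_smul, map_smul, smul_mul_assoc, mul_smul_comm, ha']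
  · rintro a b ⟨ha, ha'⟩ ⟨hb, hb'⟩
    refine ⟨S.mul_mem ha hb, fun x y => ?_⟩
    have e : (⟨a * b, S.mul_mem ha hb⟩ : S) = ⟨a, ha⟩ * ⟨b, hb⟩ := rfl
    rw [e, ← mul_assoc, hb', ha', mul_assoc]
  · intro q hq hqq
    refine ⟨hq, fun x y => ?_⟩
    set p : S := ⟨q, hq⟩ with hp
    have pp : p * p = p := Subtype.ext hqq
    have h1 := hφzp (x * p) (y - p * y) (by
      rw [mul_sub, ← mul_assoc, mul_assoc x p p, pp, sub_self])
    have h2 := hφzp (x - x * p) (p * y) (by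
      rw [sub_mul, mul_assoc x p, ← mul_assoc p p y, pp, sub_self])
    rw [map_sub, mul_sub, sub_eq_zero] at h1
    rw [map_sub, sub_mul, sub_eq_zero] at h2
    rw [h1, h2]
  · intro t ht hap
    refine ⟨ht, fun x y => ?_⟩
    have hc : IsClosed {s : S | φ (x * s) * φ y = φ x * φ (s * y)} := by
      apply isClosed_eq
      · exact (hφcont.comp (continuous_const.mul continuous_id)).mul continuous_const
      · exact continuous_const.mul (hφcont.comp (continuous_id.mul continuous_const))
    have : (⟨t, ht⟩ : S) ∈ closure {s : S | φ (x * s) * φ y = φ x * φ (s * y)} := by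
      rw [Metric.mem_closure_iff]
      intro ε hε
      obtain ⟨t', ⟨ht', hh⟩, hd⟩ := hap ε hε
      refine ⟨⟨t', ht'⟩, hh x y, ?_⟩
      rw [Subtype.dist_eq, dist_eq_norm]; exact hd
    rw [hc.closure_eq] at this
    exact this
end

set_option synthInstance.maxHeartbeats 1000000 in
theorem zp_final {A B : Type*} [Ring A] [Algebra ℂ A]
    [NonUnitalNormedRing B] [NormedSpace ℂ B] [IsScalarTower ℂ B B]
    [SMulCommClass ℂ B B] [CompleteSpace B]
    (hfaithful : ∀ b : B, (∀ x : B, b * x = 0) → (∀ x : B, x * b = 0) → b = 0)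
    (hB2 : Submodule.span ℂ {x : B | ∃ b₁ b₂ : B, x = b₁ * b₂} = ⊤)
    (φ : A →ₗ[ℂ] B) (hφsurj : Function.Surjective φ)
    (hg : ∀ t x y : A, φ (x * t) * φ y = φ x * φ (t * y)) :
    ∃ (W : B →L[ℂ] B) (ψ : A →ₗ[ℂ] B),
      Function.Bijective W ∧
      (∀ a b : B, W (a * b) = W a * b) ∧
      (∀ a b : B, W (a * b) = a * W b) ∧
      (∀ x y : A, ψ (x * y) = ψ x * ψ y) ∧
      ∀ x : A, φ x = W (ψ x) := by
  set e := φ 1 with he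
  have h1 : ∀ x y, φ x * φ y = e * φ (x * y) := by
    intro x y
    have := hg x 1 y
    simpa using this
  have h2 : ∀ x y, φ x * φ y = φ (x * y) * e := by
    intro x y
    have := hg y x 1
    simpa using this.symm
  have hc : ∀ b : B, e * b = b * e := by
    intro b
    obtain ⟨x, rfl⟩ := hφsurj b
    have := h1 x 1
    rw [mul_one] at this
    exact this.symm
  let W : B →L[ℂ] B := ContinuousLinearMap.mul ℂ B e
  have hW : ∀ b, W b = e * b := fun b => rfl
  have hsurj : Function.Surjective W := by
    have : (LinearMap.range (W : B →ₗ[ℂ] B)) = ⊤ := by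
      rw [eq_top_iff, ← hB2, Submodule.span_le]
      rintro x ⟨b₁, b₂, rfl⟩
      obtain ⟨x, rfl⟩ := hφsurj b₁
      obtain ⟨y, rfl⟩ := hφsurj b₂
      exact ⟨φ (x * y), (h1 x y).symm⟩
    exact LinearMap.range_eq_top.1 this
  have hinj : Function.Injective W := by
    rw [injective_iff_map_eq_zero]
    intro b hb
    rw [hW] at hb
    apply hfaithful
    · intro c
      obtain ⟨d, rfl⟩ := hsurj c
      rw [hW, ← mul_assoc, ← hc, hb, zero_mul]
    · intro c
      obtain ⟨d, rfl⟩ := hsurj c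
      rw [hW, hc, mul_assoc, hb, mul_zero]
  let We := LinearEquiv.ofBijective (W : B →ₗ[ℂ] B) ⟨hinj, hsurj⟩
  have hWe : ∀ b, W (We.symm b) = b := fun b => We.apply_symm_apply b
  refine ⟨W, We.symm.toLinearMap ∘ₗ φ, ⟨hinj, hsurj⟩, ?_, ?_, ?_, ?_⟩
  · intro a b; simp only [hW, mul_assoc]
  · intro a b; simp only [hW]; rw [← mul_assoc, hc, mul_assoc]
  · intro x y
    apply hinj; apply hinj
    change W (W (We.symm (φ (x*y)))) = W (W (We.symm (φ x) * We.symm (φ y)))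
    rw [hWe]
    have e1 : W (We.symm (φ x) * We.symm (φ y)) = φ x * We.symm (φ y) := by
      conv_rhs => rw [← hWe (φ x)]
      simp only [hW, mul_assoc]
    rw [e1]
    have e2 : W (φ x * We.symm (φ y)) = φ x * φ y := by
      conv_rhs => rw [← hWe (φ y)]
      simp only [hW]; rw [← mul_assoc, hc, mul_assoc]
    rw [e2, h1, hW]
  · intro x
    exact (hWe (φ x)).symm

set_option synthInstance.maxHeartbeats 1000000 in
/-- Let `H` be a complex separable Hilbert space, `ℒ = {0, M, N, H}` a subspace
lattice with two atoms on `H` (with `Alg ℒ` realized as the subalgebra `S ≤ B(H)`),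
and `ℬ` a faithful complex Banach algebra with `ℬ² = ℬ`.  Then every surjective
continuous linear map `φ : Alg ℒ → ℬ` preserving zero products is a weighted
homomorphism: `φ = W ∘ ψ` for some invertible centralizer `W` on `ℬ` and some algebra
homomorphism `ψ : Alg ℒ → ℬ`. -/
theorem two_atom_lattice_zero_product_preservers (H : Type*) [NormedAddCommGroup H]
    [InnerProductSpace ℂ H] [CompleteSpace H] [TopologicalSpace.SeparableSpace H]
    (M N : Submodule ℂ H) (hMc : IsClosed (M : Set H)) (hNc : IsClosed (N : Set H))
    (hMN : M ⊓ N = ⊥) (hspan : (M ⊔ N).topologicalClosure = ⊤)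
    (S : Subalgebra ℂ (H →L[ℂ] H))
    (hS : ∀ T : H →L[ℂ] H, T ∈ S ↔ (∀ x ∈ M, T x ∈ M) ∧ (∀ x ∈ N, T x ∈ N))
    (B : Type*) [NonUnitalNormedRing B] [NormedSpace ℂ B] [IsScalarTower ℂ B B]
    [SMulCommClass ℂ B B] [CompleteSpace B]
    (hfaithful : ∀ b : B, (∀ x : B, b * x = 0) → (∀ x : B, x * b = 0) → b = 0)
    (hB2 : Submodule.span ℂ {x : B | ∃ b₁ b₂ : B, x = b₁ * b₂} = ⊤)
    (φ : ↥S →ₗ[ℂ] B) (hφcont : Continuous φ) (hφsurj : Function.Surjective φ)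
    (hφzp : ∀ x y : ↥S, x * y = 0 → φ x * φ y = 0) :
    ∃ (W : B →L[ℂ] B) (ψ : ↥S →ₗ[ℂ] B),
      Function.Bijective W ∧
      (∀ a b : B, W (a * b) = W a * b) ∧
      (∀ a b : B, W (a * b) = a * W b) ∧
      (∀ x y : ↥S, ψ (x * y) = ψ x * ψ y) ∧
      ∀ x : ↥S, φ x = W (ψ x) := by
  have hG := zpgood_of S φ hφcont hφzp
  refine zp_final hfaithful hB2 φ hφsurj (fun t x y => ?_)
  obtain ⟨_, h⟩ := all_good hMc hNc hMN hspan hS hG t.2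
  exact h x y
end

section
/- Let 𝒜 be a countable-dimensional locally matrix algebra over ℂ having a nonzero idempotent e. Then 𝒜 is a zero Lie product determined algebra: for every bilinear functional φ : 𝒜 × 𝒜 → ℂ with φ(x,y) = 0 whenever xy = yx, there exists a linear functional τ on 𝒜 such that φ(x,y) = τ(xy − yx) for all x, y ∈ 𝒜. -/
/-- An algebra `A` is *zero Lie product determined* (algebraic version) if for every
bilinear functional `φ` on `A` vanishing on commuting pairs there exists a linear
functional `τ` on `A` with `φ x y = τ (xy − yx)` for all `x, y`. -/
def ZeroLieProductDetermined (A : Type*) [NonUnitalNonAssocRing A] [Module ℂ A] : Prop :=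
  ∀ φ : A →ₗ[ℂ] A →ₗ[ℂ] ℂ,
    (∀ x y : A, x * y = y * x → φ x y = 0) →
    ∃ τ : A →ₗ[ℂ] ℂ, ∀ x y : A, φ x y = τ (x * y - y * x)

/-- `A` is a *locally matrix algebra* over `ℂ`: every finite subset of `A` is
contained in a subalgebra isomorphic (as a complex algebra) to a full matrix algebra
`M_k(ℂ)`. -/
def IsLocallyMatrixAlgebra (A : Type*) [NonUnitalRing A] [Module ℂ A]
    [SMulCommClass ℂ A A] [IsScalarTower ℂ A A] : Prop :=
  ∀ s : Finset A, ∃ (B : NonUnitalSubalgebra ℂ A) (k : ℕ), 0 < k ∧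
    (↑s : Set A) ⊆ (B : Set A) ∧
    ∃ f : ↥B ≃ Matrix (Fin k) (Fin k) ℂ,
      (∀ x y : ↥B, f (x + y) = f x + f y) ∧
      (∀ x y : ↥B, f (x * y) = f x * f y) ∧
      (∀ (c : ℂ) (x : ↥B), f (c • x) = c • f x)

lemma zlpd_matrix (n : ℕ) (z : Fin n) (φ : Matrix (Fin n) (Fin n) ℂ →ₗ[ℂ] Matrix (Fin n) (Fin n) ℂ →ₗ[ℂ] ℂ)
    (h : ∀ x y, x * y = y * x → φ x y = 0) :
    ∃ τ : Matrix (Fin n) (Fin n) ℂ →ₗ[ℂ] ℂ, ∀ x y, φ x y = τ (x * y - y * x) := by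
  classical
  let E : Fin n → Fin n → Matrix (Fin n) (Fin n) ℂ := fun i j => Matrix.single i j 1
  have hm : ∀ i j k l, E i j * E k l = if j = k then E i l else 0 := by
    intro i j k l
    by_cases hjk : j = k
    · subst hjk; simp [E]
    · simp [E, hjk]
  have hanti : ∀ x y, φ x y = - φ y x := by
    intro x y
    have h1 := h (x + y) (x + y) rfl
    have h2 := h x x rfl
    have h3 := h y y rfl
    simp only [map_add, LinearMap.add_apply, h2, h3] at h1
    linear_combination h1
  have h0 : ∀ i j k l, j ≠ k → i ≠ l → φ (E i j) (E k l) = 0 := by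
    intro i j k l hjk hil
    apply h
    rw [hm, hm, if_neg hjk, if_neg (Ne.symm hil)]
  have h1 : ∀ i j k l, i ≠ l → φ (E i j) (E j l) = φ (E i k) (E k l) := by
    intro i j k l hil
    by_cases hjk : j = k
    · rw [hjk]
    have := h (E i j + E i k) (E j l - E k l) (by
      simp [add_mul, mul_add, sub_mul, mul_sub, hm, hjk, Ne.symm hjk, Ne.symm hil])
    simp only [map_add, map_sub, LinearMap.add_apply, h0 i j k l hjk hil,
      h0 i k j l (Ne.symm hjk) hil] at this
    linear_combination this
  have h2 : ∀ i j k, φ (E i j) (E j i) = φ (E i k) (E k i) - φ (E j k) (E k j) := by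
    intro i j k
    by_cases hij : i = j
    · subst hij; rw [h _ _ rfl]; ring
    by_cases hik : i = k
    · subst hik; rw [h (E i i) _ rfl, hanti]; ring
    by_cases hjk : j = k
    · subst hjk; rw [h (E j j) _ rfl]; ring
    have := h (E i j + E j k + E k i) (E i k + E j i + E k j) (by
      simp only [add_mul, mul_add, hm, hij, hik, hjk, Ne.symm hij, Ne.symm hik, Ne.symm hjk,
        if_true, if_false]
      abel)
    simp only [map_add, LinearMap.add_apply] at this
    rw [h0 i j i k (Ne.symm hij) hik, h0 i j k j hjk hij, h0 j k i k (Ne.symm hik) hjk,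
      h0 j k j i (Ne.symm hjk) (Ne.symm hij), h0 k i j i hij (Ne.symm hik),
      h0 k i k j hik (Ne.symm hjk), hanti (E k i)] at this
    linear_combination this
  let τ : Matrix (Fin n) (Fin n) ℂ →ₗ[ℂ] ℂ :=
    ∑ i, ∑ l, (φ (E i z) (E z l)) • Matrix.entryLinearMap ℂ ℂ i l
  have hτ : ∀ i l, τ (E i l) = φ (E i z) (E z l) := by
    intro i l
    simp only [τ, LinearMap.sum_apply, LinearMap.smul_apply, Matrix.entryLinearMap_apply,
      smul_eq_mul]
    rw [Finset.sum_eq_single i, Finset.sum_eq_single l]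
    · simp [E]
    · intro b _ hb; simp [E, Matrix.single, Ne.symm hb]
    · simp
    · intro b _ hb
      apply Finset.sum_eq_zero; intro c _
      simp [E, Matrix.single, Ne.symm hb]
    · simp
  have key : ∀ i j k l, φ (E i j) (E k l) = τ (E i j * E k l - E k l * E i j) := by
    intro i j k l
    rw [hm, hm]
    by_cases hjk : j = k
    · subst hjk
      by_cases hil : i = l
      · subst hil
        simp only [if_true, map_sub, hτ]
        exact h2 i j z
      · simp only [if_true, if_neg (Ne.symm hil), sub_zero, hτ]
        exact h1 i j z l hil
    · by_cases hil : i = l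
      · subst hil
        simp only [if_true, if_neg hjk, zero_sub, map_neg, hτ]
        rw [hanti, h1 k i z j (Ne.symm hjk)]
      · simp only [if_neg hjk, if_neg (Ne.symm hil), sub_zero, map_zero]
        exact h0 i j k l hjk hil
  refine ⟨τ, ?_⟩
  let ψ : Matrix (Fin n) (Fin n) ℂ →ₗ[ℂ] Matrix (Fin n) (Fin n) ℂ →ₗ[ℂ] ℂ :=
    LinearMap.compr₂ (LinearMap.mul ℂ (Matrix (Fin n) (Fin n) ℂ) -
      (LinearMap.mul ℂ (Matrix (Fin n) (Fin n) ℂ)).flip) τ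
  have : φ = ψ := by
    refine Matrix.ext_linearMap ℂ fun i j => LinearMap.ext_ring ?_
    refine Matrix.ext_linearMap ℂ fun k l => LinearMap.ext_ring ?_
    exact key i j k l
  intro x y
  rw [this]; rfl

/-- A countable-dimensional locally matrix algebra over `ℂ` having a nonzero
idempotent is zero Lie product determined. -/
theorem locallyMatrixAlgebra_zero_lie_product_determined (A : Type*) [NonUnitalRing A]
    [Module ℂ A] [SMulCommClass ℂ A A] [IsScalarTower ℂ A A]
    (hdim : Module.rank ℂ A ≤ Cardinal.aleph0)
    (hloc : IsLocallyMatrixAlgebra A)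
    (e : A) (he : e * e = e) (hne : e ≠ 0) :
    ZeroLieProductDetermined A := by
  intro φ h
  let C : A →ₗ[ℂ] A →ₗ[ℂ] A := LinearMap.mul ℂ A - (LinearMap.mul ℂ A).flip
  have hC : ∀ x y, C x y = x * y - y * x := fun x y => rfl
  have hker : LinearMap.ker (TensorProduct.lift C) ≤ LinearMap.ker (TensorProduct.lift φ) := by
    classical
    intro t ht
    rw [LinearMap.mem_ker] at ht ⊢
    obtain ⟨S, rfl⟩ := TensorProduct.exists_finset t
    obtain ⟨B, k, hk, hsub, f, fadd, fmul, fsmul⟩ :=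
      hloc (S.image Prod.fst ∪ S.image Prod.snd)
    let F : B ≃ₗ[ℂ] Matrix (Fin k) (Fin k) ℂ :=
      { f with map_add' := fadd, map_smul' := fsmul }
    have Fmul : ∀ x y, F (x * y) = F x * F y := fmul
    have Fsmul : ∀ x y, F.symm (x * y) = F.symm x * F.symm y := by
      intro x y
      apply F.injective
      rw [Fmul]; simp
    let ι : B →ₗ[ℂ] A := (NonUnitalSubalgebraClass.subtype B : B →ₗ[ℂ] A)
    let g : Matrix (Fin k) (Fin k) ℂ →ₗ[ℂ] A := ι ∘ₗ F.symm.toLinearMap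
    have gmul : ∀ x y, g (x * y) = g x * g y := by
      intro x y
      change ((F.symm (x * y) : B) : A) = _
      rw [Fsmul]; rfl
    have ginj : Function.Injective g := Subtype.val_injective.comp F.symm.injective
    have gsurj : ∀ a ∈ B, ∃ x, g x = a := fun a ha =>
      ⟨F ⟨a, ha⟩, by change ((F.symm (F ⟨a, ha⟩) : B) : A) = a; simp⟩
    obtain ⟨τ, hτ⟩ := zlpd_matrix k ⟨0, hk⟩ (φ.compl₁₂ g g) (by
      intro x y hxy
      apply h
      rw [← gmul, ← gmul, hxy])
    choose! q hq using gsurj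
    have m1 : ∀ p ∈ S, g (q p.1) = p.1 := fun p hp => hq _ (hsub (by
      simp only [Finset.coe_union, Finset.coe_image]
      exact Or.inl ⟨p, hp, rfl⟩))
    have m2 : ∀ p ∈ S, g (q p.2) = p.2 := fun p hp => hq _ (hsub (by
      simp only [Finset.coe_union, Finset.coe_image]
      exact Or.inr ⟨p, hp, rfl⟩))
    simp only [map_sum, TensorProduct.lift.tmul, hC] at ht ⊢
    have hz : ∑ p ∈ S, (q p.1 * q p.2 - q p.2 * q p.1) = 0 := by
      apply ginj
      rw [map_zero, map_sum, ← ht]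
      refine Finset.sum_congr rfl fun p hp => ?_
      rw [map_sub, gmul, gmul, m1 p hp, m2 p hp]
    rw [← map_zero τ, ← hz, map_sum]
    refine Finset.sum_congr rfl fun p hp => ?_
    rw [← hτ, LinearMap.compl₁₂_apply, m1 p hp, m2 p hp]
  have : TensorProduct.lift φ ∈ LinearMap.range (TensorProduct.lift C).dualMap := by
    rw [LinearMap.range_dualMap_eq_dualAnnihilator_ker, Submodule.mem_dualAnnihilator]
    exact fun w hw => hker hw
  obtain ⟨τ, hτ⟩ := this
  refine ⟨τ, fun x y => ?_⟩
  have := LinearMap.congr_fun hτ (TensorProduct.tmul ℂ x y)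
  simp only [LinearMap.dualMap_apply, TensorProduct.lift.tmul, hC] at this
  exact this.symm
end

section
/- Let H be a complex Hilbert space and let K and W be closed subspaces of H with K ∩ W = {0} and closed linear span K ∨ W = H. Let F(K) be the linear span of the rank-one operators x⊗f : y ↦ f(y)x with 0 ≠ x ∈ K and 0 ≠ f ∈ W^⊥ (continuous linear functionals on H vanishing on W). Then F(K) is a (non-unital) subalgebra of B(H) and is a zero Lie product determined algebra: for every bilinear functional φ : F(K) × F(K) → ℂ with φ(x,y) = 0 whenever xy = yx, there exists a linear functional τ on F(K) such that φ(x,y) = τ(xy − yx) for all x, y ∈ F(K). -/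
lemma FK_aux_beta {E V : Type*} [AddCommGroup E] [Module ℂ E] [AddCommGroup V] [Module ℂ V]
    (p : V →ₗ[ℂ] E →ₗ[ℂ] ℂ) (β : V →ₗ[ℂ] E →ₗ[ℂ] ℂ)
    (hβ : ∀ f y, p f y = 0 → β f y = 0) (h : V) (u : E) (hu : p h u = 1) (f : V) (y : E) :
    β f y = p f y * β h u := by
  have key : ∀ f : V, p f u ≠ 0 → β f y = p f y * β h u := by
    intro f hf
    have h1 := hβ f (p f u • y - p f y • u) (by simp; ring)
    have h2 := hβ (f - p f u • h) u (by simp [hu])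
    simp at h1 h2
    have h3 : β f u = p f u * β h u := by linear_combination h2
    apply mul_left_cancel₀ hf
    rw [h3] at h1
    linear_combination h1
  by_cases hf : p f u = 0
  · have h1 := key (f + h) (by simp [hf, hu])
    have h2 := key h (by simp [hu])
    simp at h1
    linear_combination h1 - h2
  · exact key f hf

lemma FK_aux_main {E V : Type*} [AddCommGroup E] [Module ℂ E] [AddCommGroup V] [Module ℂ V]
    (p : V →ₗ[ℂ] E →ₗ[ℂ] ℂ) (ψ : E → V → E → V → ℂ)
    (B1 : ∀ x g, ∃ β : V →ₗ[ℂ] E →ₗ[ℂ] ℂ, ∀ f y, β f y = ψ x f y g)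
    (B2 : ∀ f y, ∃ β : V →ₗ[ℂ] E →ₗ[ℂ] ℂ, ∀ g x, β g x = ψ x f y g)
    (skew : ∀ x f y g, ψ x f y g = - ψ y g x f)
    (hz : ∀ x f y g, p f y = 0 → p g x = 0 → ψ x f y g = 0)
    (h : V) (u : E) (hu : p h u = 1) (x : E) (f : V) (y : E) (g : V) :
    ψ x f y g = p f y * ψ x h u g - p g x * ψ y h u f := by
  have s1 : ∀ x f y g, p g x = 0 → ψ x f y g = p f y * ψ x h u g := by
    intro x f y g hg
    obtain ⟨β, hβ⟩ := B1 x g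
    rw [← hβ, ← hβ]
    exact FK_aux_beta p β (fun f y hf => by rw [hβ]; exact hz _ _ _ _ hf hg) h u hu f y
  have s2 : ∀ x f y g, p f y = 0 → ψ x f y g = - (p g x * ψ y h u f) := by
    intro x f y g hf
    rw [skew, s1 y g x f hf]
  -- the defect, in (g, x)
  have L : ∀ (f : V) (y : E), ∃ β : V →ₗ[ℂ] E →ₗ[ℂ] ℂ, ∀ g x,
      β g x = ψ x f y g - p f y * ψ x h u g + p g x * ψ y h u f := by
    intro f y
    obtain ⟨β1, h1⟩ := B2 f y
    obtain ⟨β2, h2⟩ := B2 h u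
    exact ⟨β1 - p f y • β2 + (ψ y h u f) • p, fun g x => by simp [h1, h2]; ring⟩
  have L' : ∀ (x : E) (g : V), ∃ β : V →ₗ[ℂ] E →ₗ[ℂ] ℂ, ∀ f y,
      β f y = ψ x f y g - p f y * ψ x h u g + p g x * ψ y h u f := by
    intro x g
    obtain ⟨β1, h1⟩ := B1 x g
    obtain ⟨β2, h2⟩ := B2 h u
    exact ⟨β1 - (ψ x h u g) • p + p g x • β2, fun g x => by simp [h1, h2]; ring⟩
  obtain ⟨β, hβ⟩ := L f y
  obtain ⟨γ, hγ⟩ := L' u h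
  have e1 := FK_aux_beta p β (fun g x hg => by
    rw [hβ, s1 x f y g hg, hg]; ring) h u hu g x
  have e2 := FK_aux_beta p γ (fun f y hf => by
    rw [hγ, s2 u f y h hf, hf]; ring) h u hu f y
  rw [hβ, hβ] at e1
  rw [hγ, hγ] at e2
  have h0 := skew u h u h
  have h00 : ψ u h u h = 0 := by
    have : 2 * ψ u h u h = 0 := by linear_combination h0
    simpa using this
  rw [e2, h00] at e1
  linear_combination e1

open scoped TensorProduct in
lemma FK_aux_zlpd {A E V : Type*} [NonUnitalRing A] [Module ℂ A] [IsScalarTower ℂ A A]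
    [SMulCommClass ℂ A A] [AddCommGroup E] [Module ℂ E] [AddCommGroup V] [Module ℂ V]
    (R : E →ₗ[ℂ] V →ₗ[ℂ] A) (p : V →ₗ[ℂ] E →ₗ[ℂ] ℂ)
    (hRm : ∀ x f y g, R x f * R y g = p f y • R x g)
    (hind : ∀ (P : A → Prop), (∀ x f, P (R x f)) → P 0 → (∀ a b, P a → P b → P (a + b)) →
      (∀ (c : ℂ) a, P a → P (c • a)) → ∀ a, P a)
    (S : A →ₗ[ℂ] E ⊗[ℂ] V) (hS : ∀ x f, S (R x f) = x ⊗ₜ[ℂ] f)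
    (h : V) (u : E) (hpu : p h u = 1) : ZeroLieProductDetermined A := by
  intro φ hφ
  have hskew : ∀ a b, φ a b = - φ b a := by
    intro a b
    have h1 := hφ (a + b) (a + b) rfl
    simp [hφ a a rfl, hφ b b rfl] at h1
    linear_combination h1
  have hcomm : ∀ x f y g, p f y = 0 → p g x = 0 → R x f * R y g = R y g * R x f := by
    intro x f y g h1 h2
    rw [hRm, hRm, h1, h2]
    simp
  have main : ∀ x f y g, φ (R x f) (R y g) = p f y * φ (R x h) (R u g)
      - p g x * φ (R y h) (R u f) := FK_aux_main p (fun x f y g => φ (R x f) (R y g))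
    (fun x g => ⟨(φ.compl₁₂ (R x) (R.flip g)), fun f y => rfl⟩)
    (fun f y => ⟨(φ.compl₁₂ (R.flip f) (R y)).flip, fun g x => rfl⟩)
    (fun x f y g => hskew _ _)
    (fun x f y g h1 h2 => hφ _ _ (hcomm x f y g h1 h2))
    h u hpu
  let G2 : E →ₗ[ℂ] V →ₗ[ℂ] ℂ := φ.compl₁₂ (R.flip h) (R u)
  let τ : A →ₗ[ℂ] ℂ := (TensorProduct.lift G2).comp S
  have hτ : ∀ x f, τ (R x f) = φ (R x h) (R u f) := by
    intro x f
    change TensorProduct.lift G2 (S (R x f)) = _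
    rw [hS]
    rfl
  refine ⟨τ, ?_⟩
  apply hind
  · intro x f
    apply hind
    · intro y g
      rw [hRm, hRm, map_sub, map_smul, map_smul, hτ, hτ]
      exact main x f y g
    · simp
    · intro a b ha hb
      rw [map_add, ha, hb, ← map_add]
      congr 1; noncomm_ring
    · intro c a ha
      rw [map_smul, ha, ← map_smul, mul_smul_comm, smul_mul_assoc, smul_sub]
  · simp
  · intro a b ha hb y
    rw [map_add, LinearMap.add_apply, ha, hb, ← map_add]
    congr 1; noncomm_ring
  · intro c a ha y
    rw [map_smul, LinearMap.smul_apply, ha, ← map_smul, mul_smul_comm, smul_mul_assoc, smul_sub]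

/-- Let `H` be a complex Hilbert space and `K`, `W` closed subspaces with
`K ∩ W = {0}` and closed linear span `K ∨ W = H`.  Then `F(K)`, the linear span of
the rank-one operators `x ⊗ f : y ↦ f(y) • x` with `0 ≠ x ∈ K` and `0 ≠ f ∈ W^⊥`,
is a (non-unital) subalgebra of `B(H)` and is a zero Lie product determined
algebra. -/
theorem FK_zero_lie_product_determined (H : Type*) [NormedAddCommGroup H]
    [InnerProductSpace ℂ H] [CompleteSpace H]
    (K W : Submodule ℂ H) (hKc : IsClosed (K : Set H)) (hWc : IsClosed (W : Set H))
    (hKW : K ⊓ W = ⊥) (hspan : (K ⊔ W).topologicalClosure = ⊤) :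
    ∃ F : NonUnitalSubalgebra ℂ (H →L[ℂ] H),
      (F : Set (H →L[ℂ] H)) =
        ↑(Submodule.span ℂ {T : H →L[ℂ] H | ∃ (x : H) (f : H →L[ℂ] ℂ),
          x ∈ K ∧ x ≠ 0 ∧ (∀ w ∈ W, f w = 0) ∧ f ≠ 0 ∧ T = f.smulRight x}) ∧
      ZeroLieProductDetermined ↥F := by
  classical
  set G : Set (H →L[ℂ] H) := {T : H →L[ℂ] H | ∃ (x : H) (f : H →L[ℂ] ℂ),
          x ∈ K ∧ x ≠ 0 ∧ (∀ w ∈ W, f w = 0) ∧ f ≠ 0 ∧ T = f.smulRight x} with hG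
  let V : Submodule ℂ (H →L[ℂ] ℂ) :=
    { carrier := {f | ∀ w ∈ W, f w = 0}
      add_mem' := fun {a b} ha hb w hw => by simp [ha w hw, hb w hw]
      zero_mem' := fun w _ => by simp
      smul_mem' := fun c f hf w hw => by simp [hf w hw] }
  have hmem : ∀ (x : K) (f : V), (f : H →L[ℂ] ℂ).smulRight (x : H) ∈ Submodule.span ℂ G := by
    intro x f
    by_cases hx : (x : H) = 0
    · rw [hx]; convert Submodule.zero_mem _; ext; simp
    by_cases hf : (f : H →L[ℂ] ℂ) = 0
    · rw [hf]; convert Submodule.zero_mem _; ext; simp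
    exact Submodule.subset_span ⟨x, f, x.2, hx, f.2, hf, rfl⟩
  have hmulG : ∀ a b, a ∈ Submodule.span ℂ G → b ∈ Submodule.span ℂ G →
      a * b ∈ Submodule.span ℂ G := by
    intro a b ha hb
    induction ha, hb using Submodule.span_induction₂ with
    | mem_mem a b ha hb =>
      obtain ⟨x, f, hx, -, hf, -, rfl⟩ := ha
      obtain ⟨y, g, hy, -, hg, -, rfl⟩ := hb
      have := Submodule.smul_mem _ (f y) (hmem ⟨x, hx⟩ ⟨g, hg⟩)
      convert this using 1
      ext z
      simp [smul_smul, mul_comm]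
    | zero_left => simp
    | zero_right => simp
    | add_left => rw [add_mul]; exact add_mem ‹_› ‹_›
    | add_right => rw [mul_add]; exact add_mem ‹_› ‹_›
    | smul_left => rw [smul_mul_assoc]; exact Submodule.smul_mem _ _ ‹_›
    | smul_right => rw [mul_smul_comm]; exact Submodule.smul_mem _ _ ‹_›
  let F : NonUnitalSubalgebra ℂ (H →L[ℂ] H) :=
    { Submodule.span ℂ G with mul_mem' := fun {a b} ha hb => hmulG a b ha hb }
  refine ⟨F, rfl, ?_⟩
  let R0 : K →ₗ[ℂ] V →ₗ[ℂ] (H →L[ℂ] H) := LinearMap.mk₂ ℂ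
    (fun x f => (f : H →L[ℂ] ℂ).smulRight (x : H))
    (by intros; ext; simp) (by intros; ext; simp [smul_smul, mul_comm])
    (by intros; ext; simp [add_smul]) (by intros; ext; simp [smul_smul])
  let R : K →ₗ[ℂ] V →ₗ[ℂ] F := LinearMap.mk₂ ℂ
    (fun x f => (⟨(f : H →L[ℂ] ℂ).smulRight (x : H), hmem x f⟩ : F))
    (by intros; ext; simp) (by intros; ext; simp [smul_smul, mul_comm])
    (by intros; ext; simp [add_smul]) (by intros; ext; simp [smul_smul])
  have hRR : ∀ x f, ((R x f : F) : H →L[ℂ] H) = R0 x f := fun _ _ => rfl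
  let p : V →ₗ[ℂ] K →ₗ[ℂ] ℂ := LinearMap.mk₂ ℂ
    (fun f x => (f : H →L[ℂ] ℂ) (x : H))
    (by intros; simp) (by intros; simp) (by intros; simp) (by intros; simp)
  have hRm : ∀ x f y g, R x f * R y g = p f y • R x g := by
    intros x f y g
    ext z
    simp [R, p, smul_smul, mul_comm]
  -- induction principle
  have hind : ∀ (P : F → Prop), (∀ x f, P (R x f)) → P 0 → (∀ a b, P a → P b → P (a + b)) →
      (∀ (c : ℂ) a, P a → P (c • a)) → ∀ a, P a := by
    intro P h1 h2 h3 h4 ⟨a, ha⟩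
    change a ∈ Submodule.span ℂ G at ha
    induction ha using Submodule.span_induction with
    | mem a ha =>
      obtain ⟨x, f, hx, -, hf, -, rfl⟩ := ha
      exact h1 ⟨x, hx⟩ ⟨f, hf⟩
    | zero => exact h2
    | add a b ha hb iha ihb => exact h3 ⟨a, ha⟩ ⟨b, hb⟩ iha ihb
    | smul c a ha iha => exact h4 c ⟨a, ha⟩ iha
  -- injectivity
  have hinj : Function.Injective (TensorProduct.lift R0) := by
    rw [injective_iff_map_eq_zero]
    intro t ht
    let b := Module.Basis.ofVectorSpace ℂ K
    obtain ⟨c, rfl⟩ := (TensorProduct.equivFinsuppOfBasisLeft (N := V) b).symm.surjective t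
    rw [TensorProduct.equivFinsuppOfBasisLeft_symm_apply] at ht ⊢
    have hc : c = 0 := by
      ext i y
      have h1 : ∑ j ∈ c.support, ((c j : H →L[ℂ] ℂ) y) • b j = 0 := by
        have := congrArg (fun T : H →L[ℂ] H => T y) ht
        simp only [Finsupp.sum, map_sum, TensorProduct.lift.tmul] at this
        rw [← Submodule.coe_eq_zero]
        simpa [R0] using this
      have h2 := linearIndependent_iff'.1 b.linearIndependent _ _ h1 i
      by_cases hi : i ∈ c.support
      · simpa using h2 hi
      · simp [Finsupp.notMem_support_iff.1 hi]
    simp [hc]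
  obtain ⟨L, hL⟩ := LinearMap.exists_leftInverse_of_injective (TensorProduct.lift R0)
    (LinearMap.ker_eq_bot.2 hinj)
  by_cases hK : K = ⊥
  · have h0 : ∀ a : F, a = 0 := by
      apply hind
      · intro x f
        have : x = 0 := by
          ext; simpa [hK] using x.2
        simp [this]
      · rfl
      · rintro a b rfl rfl; simp
      · rintro c a rfl; exact Subtype.ext (smul_zero c)
    intro φ hφ
    exact ⟨0, fun x y => by rw [h0 x]; simp⟩
  obtain ⟨u, huK, hu0⟩ := (Submodule.ne_bot_iff K).1 hK
  have huW : u ∉ W := fun hw => hu0 (by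
    have : u ∈ K ⊓ W := ⟨huK, hw⟩
    simpa [hKW] using this)
  obtain ⟨h, hhu⟩ : ∃ h : V, (h : H →L[ℂ] ℂ) u = 1 := by
    have : CompleteSpace W := hWc.completeSpace_coe
    have : u ∉ Wᗮᗮ := by rwa [Submodule.orthogonal_orthogonal]
    rw [Submodule.mem_orthogonal] at this
    push Not at this
    obtain ⟨v, hv, hvu⟩ := this
    refine ⟨⟨(inner ℂ v u)⁻¹ • innerSL ℂ v, fun w hw => ?_⟩, ?_⟩
    · have := (Submodule.mem_orthogonal' W v).1 hv w hw
      simp [this]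
    · simp [hvu]
  have hpu : p h ⟨u, huK⟩ = 1 := hhu
  refine FK_aux_zlpd R p hRm hind (L.comp (F.toSubmodule.subtype)) ?_ h ⟨u, huK⟩ hpu
  intro x f
  change L (R0 x f) = _
  have := LinearMap.congr_fun hL (x ⊗ₜ[ℂ] f)
  simpa using this
end

section
/- Every finite nest algebra on a complex Hilbert space is two-sided zero product determined. -/
open scoped Topology

/-- A complex Banach algebra `A` is *two-sided zero product determined* if every
continuous bilinear functional `φ` on `A` with `φ x y = 0` whenever
`x * y = y * x = 0` is of the form `φ x y = τ₁ (x * y) + τ₂ (y * x)` for some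
continuous linear functionals `τ₁`, `τ₂` on `A`. -/
def TwoSidedZeroProductDetermined (A : Type*) [NonUnitalNonAssocRing A] [Module ℂ A]
    [TopologicalSpace A] : Prop :=
  ∀ φ : A →ₗ[ℂ] A →ₗ[ℂ] ℂ, Continuous (fun p : A × A => φ p.1 p.2) →
    (∀ x y : A, x * y = 0 → y * x = 0 → φ x y = 0) →
    ∃ τ₁ τ₂ : A →L[ℂ] ℂ, ∀ x y : A, φ x y = τ₁ (x * y) + τ₂ (y * x)

def ZCocycle {A : Type*} [Ring A] [Algebra ℂ A] (ψ : A →ₗ[ℂ] A →ₗ[ℂ] ℂ) : Prop :=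
  ∀ b c d : A, ψ c (d * b) = ψ (b * c) d + ψ (c * d) b

def ZGood {A : Type*} [NormedRing A] [NormedAlgebra ℂ A] (ψ : A →ₗ[ℂ] A →ₗ[ℂ] ℂ) : Prop :=
  ∃ τ₁ τ₂ : A →L[ℂ] ℂ, ∀ x y : A, ψ x y = τ₁ (x * y) + τ₂ (y * x)

def ZWA (A : Type*) [NormedRing A] [NormedAlgebra ℂ A] : Prop :=
  ∀ ψ : A →ₗ[ℂ] A →ₗ[ℂ] ℂ, Continuous (fun p : A × A => ψ p.1 p.2) → ZCocycle ψ → ZGood ψ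

def ZIdem (A : Type*) [Ring A] [Algebra ℂ A] : Prop :=
  ∀ x : A, x ∈ Algebra.adjoin ℂ {e : A | e * e = e}

lemma z_zpd {A : Type*} [Ring A] [Algebra ℂ A] (hA : ZIdem A) (Φ : A →ₗ[ℂ] A →ₗ[ℂ] ℂ)
    (h : ∀ a b, a * b = 0 → Φ a b = 0) (a b : A) : Φ a b = Φ (a * b) 1 := by
  have key : ∀ z ∈ Algebra.adjoin ℂ {e : A | e * e = e}, ∀ a b, Φ (a * z) b = Φ a (z * b) := by
    intro z hz
    induction hz using Algebra.adjoin_induction with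
    | mem e he =>
      intro a b
      have he : e * e = e := he
      have h1 := h (a * e) ((1 - e) * b) (by
        rw [show a * e * ((1 - e) * b) = a * (e - e * e) * b by noncomm_ring, he]; simp)
      have h2 := h (a * (1 - e)) (e * b) (by
        rw [show a * (1 - e) * (e * b) = a * (e - e * e) * b by noncomm_ring, he]; simp)
      simp only [sub_mul, mul_sub, one_mul, mul_one, map_sub, LinearMap.sub_apply] at h1 h2
      rw [sub_eq_zero] at h1 h2
      rw [h1, h2]
    | algebraMap r => intro a b; simp [Algebra.algebraMap_eq_smul_one]
    | add x y _ _ hx hy => intro a b; simp [mul_add, add_mul, hx, hy]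
    | mul x y _ _ hx hy => intro a b; rw [← mul_assoc, hy, hx, mul_assoc]
  have := key b (hA b) a 1
  simpa using this.symm

/-- The derivation associated to a two-sided zero-product-vanishing form. -/
lemma z_cocycle {A : Type*} [Ring A] [Algebra ℂ A] (hA : ZIdem A) (φ : A →ₗ[ℂ] A →ₗ[ℂ] ℂ)
    (h : ∀ x y, x * y = 0 → y * x = 0 → φ x y = 0) (b c d : A) :
    φ (b * c) d - φ c (d * b) = φ (b * (c * d)) 1 - φ (c * d) b := by
  have h1 : ∀ b c d : A, c * d = 0 → φ (b * c) d - φ c (d * b) = 0 := by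
    intro b c d hcd
    let Φ : A →ₗ[ℂ] A →ₗ[ℂ] ℂ :=
      (φ.compl₁₂ (LinearMap.mulRight ℂ c) (LinearMap.mulLeft ℂ d)).flip
    have := z_zpd hA Φ (fun a b hab => by
      simp only [Φ, LinearMap.flip_apply, LinearMap.compl₁₂_apply, LinearMap.mulRight_apply,
        LinearMap.mulLeft_apply]
      apply h
      · rw [show b * c * (d * a) = b * (c * d) * a by noncomm_ring, hcd]; simp
      · rw [show d * a * (b * c) = d * (a * b) * c by noncomm_ring, hab]; simp) 1 b
    simp [Φ] at this
    rw [this, sub_self]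
  let Ψ : A →ₗ[ℂ] A →ₗ[ℂ] ℂ := φ.comp (LinearMap.mulLeft ℂ b)
    - φ.compl₁₂ LinearMap.id (LinearMap.mulRight ℂ b)
  have := z_zpd hA Ψ (fun c d hcd => by simpa [Ψ] using h1 b c d hcd) c d
  simpa [Ψ] using this

noncomputable def zfn {A : Type*} [NormedRing A] [NormedAlgebra ℂ A] (ψ : A →ₗ[ℂ] A →ₗ[ℂ] ℂ)
    (hc : Continuous (fun p : A × A => ψ p.1 p.2)) (b : A) : A →L[ℂ] ℂ :=
  ⟨ψ.flip b, by
    show Continuous (fun x => ψ x b)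
    exact hc.comp (continuous_id.prodMk continuous_const)⟩

@[simp] lemma zfn_apply {A : Type*} [NormedRing A] [NormedAlgebra ℂ A] (ψ : A →ₗ[ℂ] A →ₗ[ℂ] ℂ)
    (hc : Continuous (fun p : A × A => ψ p.1 p.2)) (b x : A) : zfn ψ hc b x = ψ x b := rfl

lemma z_main {A : Type*} [NormedRing A] [NormedAlgebra ℂ A] (hA : ZIdem A) (hW : ZWA A)
    (φ : A →ₗ[ℂ] A →ₗ[ℂ] ℂ) (hc : Continuous (fun p : A × A => φ p.1 p.2))
    (h : ∀ x y, x * y = 0 → y * x = 0 → φ x y = 0) : ZGood φ := by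
  let ψ : A →ₗ[ℂ] A →ₗ[ℂ] ℂ := φ - (LinearMap.mul ℂ A).compr₂ (φ.flip 1)
  have hψ : ∀ x y, ψ x y = φ x y - φ (x * y) 1 := fun x y => by simp [ψ]
  obtain ⟨t1, t2, ht⟩ := hW ψ (by
    simp only [hψ]
    exact hc.sub (hc.comp ((continuous_fst.mul continuous_snd).prodMk continuous_const))) (by
    intro b c d
    simp only [hψ]
    have := z_cocycle hA φ h b c d
    rw [← mul_assoc] at this
    rw [← mul_assoc]
    linear_combination -this)
  refine ⟨t1 + zfn φ hc 1, t2, fun x y => ?_⟩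
  have := ht x y
  rw [hψ] at this
  simp
  linear_combination this

lemma z_swindle {B : Type*} [NormedRing B] [NormedAlgebra ℂ B] (s s' v v' : B) (β : B →L[ℂ] B)
    (hs : s' * s = 1) (hv : v' * v = 1) (hsv : s' * v = 0) (hvs : v' * s = 0)
    (hβm : ∀ x y, β (x * y) = β x * β y) (hβ : ∀ d, β d = s * d * s' + v * β d * v') :
    ZWA B := by
  intro ψ hc hψ
  let L := ContinuousLinearMap.mul ℂ B
  refine ⟨-((zfn ψ hc s').comp (L s) + (zfn ψ hc v').comp ((L v).comp β)),
    -((zfn ψ hc s).comp (L.flip s') + (zfn ψ hc v).comp ((L.flip v').comp β)), fun c d => ?_⟩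
  simp only [L, neg_apply, add_apply,
    ContinuousLinearMap.comp_apply, ContinuousLinearMap.flip_apply, ContinuousLinearMap.mul_apply',
    zfn_apply]
  have e1 : ∀ c, s' * β c = c * s' := fun c => by
    rw [hβ c, mul_add, show s' * (s * c * s') = s' * s * (c * s') by noncomm_ring,
      show s' * (v * β c * v') = s' * v * (β c * v') by noncomm_ring, hs, hsv]; simp
  have e2 : ∀ c, β c * s = s * c := fun c => by
    rw [hβ c, add_mul, show (s * c * s') * s = s * c * (s' * s) by noncomm_ring,
      show (v * β c * v') * s = v * β c * (v' * s) by noncomm_ring, hs, hvs]; simp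
  have e3 : ∀ c, v' * β c = β c * v' := fun c => by
    conv_lhs => rw [hβ c]
    rw [mul_add, show v' * (s * c * s') = v' * s * (c * s') by noncomm_ring,
      show v' * (v * β c * v') = v' * v * (β c * v') by noncomm_ring, hv, hvs]; simp
  have e4 : ∀ c, β c * v = v * β c := fun c => by
    conv_lhs => rw [hβ c]
    rw [add_mul, show (s * c * s') * v = s * c * (s' * v) by noncomm_ring,
      show (v * β c * v') * v = v * β c * (v' * v) by noncomm_ring, hv, hsv]; simp
  have h0 : ψ (β c) (β d) = ψ (β c) (s * d * s') + ψ (β c) (v * β d * v') := by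
    rw [← map_add, ← hβ]
  rw [hψ s' (β c) (s * d), hψ d (s' * β c) s, hψ v' (β c) (v * β d), hψ (β d) (v' * β c) v,
    e1, e3] at h0
  rw [mul_assoc c s' s, hs, mul_one, ← mul_assoc (β c) s d, e2, ← mul_assoc (β c) v, e4,
    mul_assoc (β c) v' v, hv, mul_one] at h0
  simp only [hβm, mul_assoc] at h0 ⊢
  linear_combination -h0

lemma z_idem_of_split {B : Type*} [Ring B] [Algebra ℂ B] (s s' v v' : B)
    (hs : s' * s = 1) (hv : v' * v = 1) (hsv : s' * v = 0) (hvs : v' * s = 0)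
    (h1 : s * s' + v * v' = 1) : ZIdem B := by
  set G := Algebra.adjoin ℂ {e : B | e * e = e} with hG
  have off : ∀ E F X : B, E * E = E → F * E = 0 → E * X * F ∈ G := by
    intro E F X hE hF
    have m1 : E ∈ G := Algebra.subset_adjoin hE
    have m2 : E + E * X * F ∈ G := Algebra.subset_adjoin (by
      show _ = _
      rw [show (E + E * X * F) * (E + E * X * F) = E * E + E * E * X * F + E * X * (F * E)
        + E * X * (F * E) * X * F by noncomm_ring, hE, hF]; simp)
    simpa using G.sub_mem m2 m1
  have k1 : s * s' * (s * s') = s * s' := by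
    rw [show s * s' * (s * s') = s * (s' * s) * s' by noncomm_ring, hs]; simp
  have k2 : v * v' * (v * v') = v * v' := by
    rw [show v * v' * (v * v') = v * (v' * v) * v' by noncomm_ring, hv]; simp
  have k3 : v * v' * (s * s') = 0 := by
    rw [show v * v' * (s * s') = v * (v' * s) * s' by noncomm_ring, hvs]; simp
  have k4 : s * s' * (v * v') = 0 := by
    rw [show s * s' * (v * v') = s * (s' * v) * v' by noncomm_ring, hsv]; simp
  intro x
  have a1 : s * s' * x * (v * v') ∈ G := off _ _ _ k1 k3
  have a2 : v * v' * x * (s * s') ∈ G := off _ _ _ k2 k4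
  have a3 : s * s' * x * (s * s') ∈ G := by
    have := G.mul_mem (off _ _ (x * s * v') k1 k3) (off _ _ (v * s') k2 k4)
    convert this using 1
    rw [show s * s' * (x * s * v') * (v * v') * (v * v' * (v * s') * (s * s')) =
      s * s' * x * s * ((v' * v) * (v' * v) * (v' * v)) * (s' * s) * s' by noncomm_ring, hs, hv]
    simp [mul_assoc]
  have a4 : v * v' * x * (v * v') ∈ G := by
    have := G.mul_mem (off _ _ (x * v * s') k2 k4) (off _ _ (s * v') k1 k3)
    convert this using 1
    rw [show v * v' * (x * v * s') * (s * s') * (s * s' * (s * v') * (v * v')) =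
      v * v' * x * v * ((s' * s) * (s' * s) * (s' * s)) * (v' * v) * v' by noncomm_ring, hs, hv]
    simp [mul_assoc]
  have : x = s * s' * x * (v * v') + v * v' * x * (s * s') + s * s' * x * (s * s')
      + v * v' * x * (v * v') := by
    conv_lhs => rw [← one_mul x, ← mul_one (1 * x), ← h1]
    noncomm_ring
  rw [this]
  exact G.add_mem (G.add_mem (G.add_mem a1 a2) a3) a4
abbrev ZL (K : Type*) [NormedAddCommGroup K] [InnerProductSpace ℂ K] := lp (fun _ : ℕ => K) 2

section
variable {K : Type*} [NormedAddCommGroup K] [InnerProductSpace ℂ K]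

set_option linter.unusedSectionVars false in
lemma zl_bound (g : ℕ → K) (C : ℝ) (h : ∀ s : Finset ℕ, ∑ n ∈ s, ‖g n‖ ^ 2 ≤ C ^ 2) :
    Memℓp g 2 :=
  memℓp_gen' (C := C ^ 2) (fun s => by simpa using h s)

lemma zl_sum_le (f : ZL K) (s : Finset ℕ) : ∑ n ∈ s, ‖f n‖ ^ 2 ≤ ‖f‖ ^ 2 := by
  have := lp.sum_rpow_le_norm_rpow (p := 2) (by simp) f s
  simpa using this

noncomputable def zlMk (G : (ℕ → K) →ₗ[ℂ] (ℕ → K)) (C : ℝ) (hC : 0 ≤ C)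
    (h : ∀ (f : ZL K) (s : Finset ℕ), ∑ n ∈ s, ‖G f n‖ ^ 2 ≤ (C * ‖f‖) ^ 2) : ZL K →L[ℂ] ZL K :=
  LinearMap.mkContinuous
    { toFun := fun f => ⟨G f, zl_bound _ (C * ‖f‖) (h f)⟩
      map_add' := fun f g => by
        ext n
        show G (⇑(f + g)) n = G f n + G g n
        rw [lp.coeFn_add, map_add]; rfl
      map_smul' := fun c f => by
        ext n
        show G (⇑(c • f)) n = c • G f n
        rw [lp.coeFn_smul, map_smul]; rfl } C
    (fun f => by
      refine lp.norm_le_of_forall_sum_le (p := 2) (by simp) (by positivity) (fun s => ?_)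
      simpa using h f s)

@[simp] lemma zlMk_apply (G : (ℕ → K) →ₗ[ℂ] (ℕ → K)) (C : ℝ) (hC : 0 ≤ C) (h) (f : ZL K) (n : ℕ) :
    zlMk G C hC h f n = G f n := rfl

lemma zlMk_norm (G : (ℕ → K) →ₗ[ℂ] (ℕ → K)) (C : ℝ) (hC : 0 ≤ C) (h) :
    ‖zlMk G C hC h‖ ≤ C := LinearMap.mkContinuous_norm_le _ hC _

noncomputable def zlV : ZL K →L[ℂ] ZL K :=
  zlMk { toFun := fun f n => Nat.casesOn n 0 f
         map_add' := fun f g => by funext n; cases n <;> simp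
         map_smul' := fun f g => by funext n; cases n <;> simp } 1 zero_le_one (fun f s => by
    obtain ⟨N, hN⟩ := s.exists_nat_subset_range
    refine (Finset.sum_le_sum_of_subset_of_nonneg (hN.trans
      (Finset.range_subset_range.2 N.le_succ)) (fun _ _ _ => by positivity)).trans ?_
    rw [Finset.sum_range_succ']
    simpa using zl_sum_le f (Finset.range N))

noncomputable def zlV' : ZL K →L[ℂ] ZL K :=
  zlMk { toFun := fun f n => f (n + 1)
         map_add' := fun f g => rfl
         map_smul' := fun f g => rfl } 1 zero_le_one (fun f s => by
    simpa using zl_sum_le f (s.map ⟨Nat.succ, Nat.succ_injective⟩))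

noncomputable def zlB0 (d : K →L[ℂ] K) : ZL K →L[ℂ] ZL K :=
  zlMk { toFun := fun f n => d (f n)
         map_add' := fun f g => by funext n; simp
         map_smul' := fun f g => by funext n; simp } ‖d‖ (norm_nonneg _) (fun f s => by
    rw [mul_pow]
    refine le_trans ?_ (mul_le_mul_of_nonneg_left (zl_sum_le f s) (by positivity))
    rw [Finset.mul_sum]
    refine Finset.sum_le_sum (fun n _ => ?_)
    rw [← mul_pow]
    exact pow_le_pow_left₀ (norm_nonneg _) (d.le_opNorm _) 2)

lemma zlB0_norm (d : K →L[ℂ] K) : ‖zlB0 d‖ ≤ ‖d‖ := by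
  unfold zlB0; apply zlMk_norm

noncomputable def zlB : (K →L[ℂ] K) →L[ℂ] (ZL K →L[ℂ] ZL K) :=
  LinearMap.mkContinuous
    { toFun := (zlB0 : (K →L[ℂ] K) → (ZL K →L[ℂ] ZL K))
      map_add' := fun a b => by ext f n; rfl
      map_smul' := fun a b => by ext f n; rfl } 1 (fun d => by
      rw [one_mul]; exact zlB0_norm d)

noncomputable def zlS : K →L[ℂ] ZL K := lp.singleContinuousLinearMap ℂ (fun _ : ℕ => K) 2 0

noncomputable def zlS' : ZL K →L[ℂ] K :=
  LinearMap.mkContinuous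
    { toFun := fun f => f 0
      map_add' := fun f g => rfl
      map_smul' := fun c g => rfl } 1 (fun f => by
        rw [one_mul]; exact lp.norm_apply_le_norm (by simp) f 0)

lemma zlV_zero (f : ZL K) : zlV f 0 = 0 := rfl
lemma zlV_succ (f : ZL K) (n : ℕ) : zlV f (n + 1) = f n := rfl
lemma zlV'_apply (f : ZL K) (n : ℕ) : zlV' f n = f (n + 1) := rfl
lemma zlB_apply (d : K →L[ℂ] K) (f : ZL K) (n : ℕ) : zlB d f n = d (f n) := rfl
lemma zlS'_apply (f : ZL K) : zlS' f = f 0 := rfl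
lemma zlS_zero (x : K) : zlS x 0 = x := by simp [zlS]
lemma zlS_succ (x : K) (n : ℕ) : zlS x (n + 1) = 0 := by simp [zlS]

lemma zl_iso [CompleteSpace K] (hK : ¬ FiniteDimensional ℂ K) : Nonempty (ZL K ≃L[ℂ] K) := by
  classical
  obtain ⟨w, b, hb⟩ := exists_hilbertBasis ℂ K
  have hw : Infinite w := by
    by_contra hfin
    rw [not_infinite_iff_finite] at hfin
    have := Fintype.ofFinite w
    exact hK (Module.Basis.finiteDimensional_of_finite b.toOrthonormalBasis.toBasis)
  have hcard : Nonempty (w ≃ ℕ × w) := by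
    rw [← Cardinal.eq]
    simp [Cardinal.mk_prod]
  obtain ⟨e⟩ := hcard
  let u : w → ZL K := fun i => lp.single 2 (e i).1 (b (e i).2)
  have hu : Orthonormal ℂ u := by
    rw [orthonormal_iff_ite]
    intro i j
    have ho := orthonormal_iff_ite.1 b.orthonormal
    show inner ℂ (lp.single 2 (e i).1 (b (e i).2) : ZL K) (lp.single 2 (e j).1 (b (e j).2)) = _
    rw [lp.inner_single_left]
    by_cases h1 : (e i).1 = (e j).1
    · rw [h1, lp.single_apply_self, ho]
      congr 1
      rw [eq_iff_iff]
      exact ⟨fun h2 => e.injective (Prod.ext h1 h2), fun h => by rw [h]⟩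
    · rw [lp.single_apply_ne _ _ _ h1, inner_zero_right, if_neg]
      rintro rfl; exact h1 rfl
  let c : HilbertBasis w ℂ (ZL K) := HilbertBasis.mkOfOrthogonalEqBot hu (by
    rw [Submodule.eq_bot_iff]
    intro f hf
    rw [Submodule.mem_orthogonal] at hf
    ext n
    have : b.repr (f n) = 0 := by
      ext i
      rw [b.repr_apply_apply]
      have := hf (u (e.symm (n, i))) (Submodule.subset_span ⟨_, rfl⟩)
      simpa [u, lp.inner_single_left] using this
    simpa using this)
  exact ⟨(c.repr.trans b.repr.symm).toContinuousLinearEquiv⟩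

end

lemma z_inf {K : Type*} [NormedAddCommGroup K] [InnerProductSpace ℂ K] [CompleteSpace K]
    (hK : ¬ FiniteDimensional ℂ K) : ZWA (K →L[ℂ] K) ∧ ZIdem (K →L[ℂ] K) := by
  obtain ⟨e⟩ := zl_iso hK
  let f : ZL K →L[ℂ] K := e
  let g : K →L[ℂ] ZL K := e.symm
  have fg : ∀ x, f (g x) = x := fun x => e.apply_symm_apply x
  have gf : ∀ x, g (f x) = x := fun x => e.symm_apply_apply x
  let s : K →L[ℂ] K := f ∘L zlS
  let s' : K →L[ℂ] K := zlS' ∘L g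
  let v : K →L[ℂ] K := f ∘L zlV ∘L g
  let v' : K →L[ℂ] K := f ∘L zlV' ∘L g
  let β : (K →L[ℂ] K) →L[ℂ] (K →L[ℂ] K) :=
    (ContinuousLinearMap.compL ℂ K (ZL K) K f) ∘L
      ((ContinuousLinearMap.compL ℂ K (ZL K) (ZL K)).flip g) ∘L zlB
  have hβ : ∀ d x, β d x = f (zlB d (g x)) := fun d x => rfl
  have hs : s' * s = 1 := by
    ext x; simp [s, s', gf, zlS'_apply, zlS_zero]
  have hv : v' * v = 1 := by
    ext x
    simp only [v, v', mul_apply_eq_comp, ContinuousLinearMap.comp_apply, gf]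
    have : zlV' (zlV (g x)) = g x := by ext n; rfl
    rw [this, fg]; rfl
  have hsv : s' * v = 0 := by
    ext x; simp [v, s', gf, zlS'_apply, zlV_zero]
  have hvs : v' * s = 0 := by
    ext x
    simp only [s, v', mul_apply_eq_comp, ContinuousLinearMap.comp_apply, gf]
    have : zlV' (zlS x) = 0 := by ext n; rw [zlV'_apply, zlS_succ]; rfl
    rw [this, map_zero]; rfl
  have h1 : s * s' + v * v' = 1 := by
    ext x
    simp only [s, s', v, v', add_apply, mul_apply_eq_comp,
      ContinuousLinearMap.comp_apply, gf, ← map_add]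
    have : zlS (zlS' (g x)) + zlV (zlV' (g x)) = g x := by
      ext n
      rw [lp.coeFn_add, Pi.add_apply]
      cases n with
      | zero => rw [zlS_zero, zlV_zero, zlS'_apply, add_zero]
      | succ n => rw [zlS_succ, zlV_succ, zlV'_apply, zero_add]
    rw [this, fg]; rfl
  refine ⟨z_swindle s s' v v' β hs hv hsv hvs ?_ ?_, z_idem_of_split s s' v v' hs hv hsv hvs h1⟩
  · intro x y
    ext z
    simp only [mul_apply_eq_comp, hβ, gf]
    rfl
  · intro d
    ext x
    simp only [s, s', v, v', add_apply, mul_apply_eq_comp,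
      ContinuousLinearMap.comp_apply, gf, ← map_add, hβ]
    congr 1
    ext n
    rw [lp.coeFn_add, Pi.add_apply]
    cases n with
    | zero => rw [zlS_zero, zlV_zero, zlS'_apply, add_zero, zlB_apply]
    | succ n => rw [zlS_succ, zlV_succ, zlB_apply, zlB_apply, zlV'_apply, zero_add]

lemma z_fin_wa {B ι : Type*} [Fintype ι] [NormedRing B] [NormedAlgebra ℂ B] (E F : ι → B)
    (h1 : ∑ i, E i * F i = 1) (m : B → ι → ι → ℂ) (hE : ∀ d i, d * E i = ∑ j, m d j i • E j)
    (hF : ∀ d j, F j * d = ∑ i, m d j i • F i) : ZWA B := by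
  intro ψ hc hψ
  let T : B →L[ℂ] ℂ := ∑ i, (zfn ψ hc (E i)).comp (ContinuousLinearMap.mul ℂ B (F i))
  have hT : ∀ z, T z = ∑ i, ψ (F i * z) (E i) := fun z => by simp [T]
  refine ⟨-T, T, fun c d => ?_⟩
  have hψ' : ∀ b c d, ψ c (d * b) = ψ (b * c) d + ψ (c * d) b := hψ
  have l1 : ∑ i, ψ (F i * c) (d * E i) = ψ c d + T (c * d) := by
    rw [hT]
    simp only [hψ', Finset.sum_add_distrib]
    congr 1
    · rw [← LinearMap.sum_apply, ← map_sum]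
      simp only [← mul_assoc]
      rw [← Finset.sum_mul, h1, one_mul]
    · simp only [mul_assoc]
  have l2 : ∑ i, ψ (F i * c) (d * E i) = T (d * c) := by
    rw [hT]
    have hF' : ∀ j, F j * (d * c) = ∑ i, m d j i • (F i * c) := fun j => by
      rw [← mul_assoc, hF, Finset.sum_mul]; simp only [smul_mul_assoc]
    simp only [hE, hF', map_sum, map_smul, LinearMap.sum_apply, LinearMap.smul_apply]
    rw [Finset.sum_comm]
  rw [neg_apply]
  linear_combination l2 - l1

lemma z_fin {K : Type*} [NormedAddCommGroup K] [InnerProductSpace ℂ K] [CompleteSpace K]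
    (hK : FiniteDimensional ℂ K) : ZWA (K →L[ℂ] K) ∧ ZIdem (K →L[ℂ] K) := by
  let b := stdOrthonormalBasis ℂ K
  have hdec : ∀ T : K →L[ℂ] K, T = ∑ i, InnerProductSpace.rankOne ℂ (T (b i)) (b i) := by
    intro T
    ext x
    conv_lhs => rw [← b.sum_repr' x]
    simp
  constructor
  · rcases subsingleton_or_nontrivial K with hs | hn
    · intro ψ _ _
      refine ⟨0, 0, fun x y => ?_⟩
      have : x = 0 := by ext z; exact Subsingleton.elim _ _
      simp [this]
    · obtain ⟨u, hu⟩ := exists_norm_eq K (zero_le_one)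
      have huu : inner ℂ u u = 1 := by simp [inner_self_eq_norm_sq_to_K, hu]
      refine z_fin_wa (fun i => InnerProductSpace.rankOne ℂ (b i) u)
        (fun i => InnerProductSpace.rankOne ℂ u (b i)) ?_ (fun d j i => inner ℂ (b j) (d (b i)))
        ?_ ?_
      · conv_rhs => rw [hdec 1]
        refine Finset.sum_congr rfl fun i _ => ?_
        ext x
        simp [hu]
      · intro d i
        ext x
        simp only [mul_apply_eq_comp, InnerProductSpace.rankOne_apply, map_smul,
          sum_apply, smul_apply]
        conv_lhs => rw [← b.sum_repr' (d (b i))]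
        rw [Finset.smul_sum]
        exact Finset.sum_congr rfl fun j _ => smul_comm _ _ _
      · intro d j
        ext x
        simp only [mul_apply_eq_comp, InnerProductSpace.rankOne_apply, map_smul,
          sum_apply, smul_apply, smul_smul]
        rw [← Finset.sum_smul]
        congr 1
        conv_lhs => rw [← b.sum_repr' x]
        simp only [map_sum, map_smul, inner_sum, inner_smul_right]
        exact Finset.sum_congr rfl fun j _ => mul_comm _ _
  · intro T
    rw [hdec T]
    refine Subalgebra.sum_mem _ fun i _ => ?_
    have key : ∀ x y : K, inner ℂ y x ≠ (0 : ℂ) → InnerProductSpace.rankOne ℂ x y ∈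
        Algebra.adjoin ℂ {e : K →L[ℂ] K | e * e = e} := by
      intro x y hxy
      have : (inner ℂ y x)⁻¹ • InnerProductSpace.rankOne ℂ x y ∈
        Algebra.adjoin ℂ {e : K →L[ℂ] K | e * e = e} := Algebra.subset_adjoin (by
          show _ = _
          ext z
          simp [smul_smul]
          congr 1
          field_simp)
      have := Subalgebra.smul_mem _ this (inner ℂ y x)
      rwa [smul_smul, mul_inv_cancel₀ hxy, one_smul] at this
    have hbb : inner ℂ (b i) (b i) = (1 : ℂ) := by simp [inner_self_eq_norm_sq_to_K]
    by_cases h : inner ℂ (b i) (T (b i)) = (0 : ℂ)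
    · have := Subalgebra.sub_mem _ (key (T (b i) + b i) (b i) (by
        rw [inner_add_right, h, hbb]; simp)) (key (b i) (b i) (by rw [hbb]; simp))
      simpa using this
    · exact key _ _ h

lemma z_BH (K : Type*) [NormedAddCommGroup K] [InnerProductSpace ℂ K] [CompleteSpace K] :
    ZWA (K →L[ℂ] K) ∧ ZIdem (K →L[ℂ] K) := by
  by_cases hK : FiniteDimensional ℂ K
  · exact z_fin hK
  · exact z_inf hK

lemma z_tri {A : Type*} [NormedRing A] [NormedAlgebra ℂ A] {ι : Type*} [Fintype ι] [LinearOrder ι]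
    (p : ι → A) (hp : ∀ i, p i * p i = p i) (hsum : ∑ i, p i = 1)
    (htri : ∀ i j c, j < i → p i * c * p j = 0)
    (B : ι → Type*) [∀ i, NormedRing (B i)] [∀ i, NormedAlgebra ℂ (B i)]
    (σ : ∀ i, B i →L[ℂ] A) (hσ : ∀ i x y, σ i (x * y) = σ i x * σ i y)
    (π : ∀ i, A →L[ℂ] B i) (hπ : ∀ i x y, π i (x * y) = π i x * π i y)
    (hσπ : ∀ i c, σ i (π i c) = p i * c * p i)
    (hB : ∀ i, ZWA (B i) ∧ ZIdem (B i)) : ZWA A ∧ ZIdem A := by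
  constructor
  · intro ψ hc hψ
    have hψ' : ∀ b c d, ψ c (d * b) = ψ (b * c) d + ψ (c * d) b := hψ
    have hg : ∀ i, ∃ τ₁ τ₂ : B i →L[ℂ] ℂ, ∀ x y, ψ (σ i x) (σ i y) = τ₁ (x * y) + τ₂ (y * x) := by
      intro i
      refine (hB i).1 (ψ.compl₁₂ (σ i).toLinearMap (σ i).toLinearMap) ?_ ?_
      · show Continuous (fun q : B i × B i => ψ (σ i q.1) (σ i q.2))
        exact hc.comp (((σ i).continuous.comp continuous_fst).prodMk
          ((σ i).continuous.comp continuous_snd))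
      · intro b c d
        show ψ (σ i c) (σ i (d * b)) = ψ (σ i (b * c)) (σ i d) + ψ (σ i (c * d)) (σ i b)
        simp only [hσ, hψ']
    choose t1 t2 ht using hg
    let T : A →L[ℂ] ℂ := ∑ i, (zfn ψ hc (p i)).comp (ContinuousLinearMap.mul ℂ A (p i))
    have hT : ∀ z, T z = ∑ i, ψ (p i * z) (p i) := fun z => by simp [T]
    refine ⟨-T + ∑ i, (t1 i).comp (π i), T + ∑ i, (t2 i).comp (π i), fun c d => ?_⟩
    have l1 : ∑ i, ψ (p i * c) (d * p i) = ψ c d + T (c * d) := by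
      rw [hT]
      simp only [hψ', Finset.sum_add_distrib]
      congr 1
      · rw [← LinearMap.sum_apply, ← map_sum]
        simp only [← mul_assoc, hp]
        rw [← Finset.sum_mul, hsum, one_mul]
      · simp only [mul_assoc]
    have l2 : ∑ i, ψ (p i * c) (d * p i) = T (d * c) + ∑ i, ψ (p i * c * p i) (p i * d * p i) := by
      have e1 : ∀ i, ψ (p i * c) (d * p i) = ∑ j, (ψ (p j * d * (p i * c)) (p j)
          + ψ (p i * c * p j) (p j * d * p i)) := by
        intro i
        have : d * p i = ∑ j, p j * (p j * d * p i) := by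
          simp only [← mul_assoc, hp]
          rw [← Finset.sum_mul, ← Finset.sum_mul, hsum, one_mul]
        rw [this, map_sum]
        refine Finset.sum_congr rfl fun j _ => ?_
        rw [hψ', show p j * d * p i * (p i * c) = p j * d * (p i * p i * c) by noncomm_ring, hp]
      simp only [e1, Finset.sum_add_distrib]
      congr 1
      · rw [Finset.sum_comm, hT]
        refine Finset.sum_congr rfl fun j _ => ?_
        rw [← LinearMap.sum_apply, ← map_sum, ← Finset.mul_sum, ← Finset.sum_mul, hsum, one_mul,
          mul_assoc]
      · refine Finset.sum_congr rfl fun i _ => ?_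
        refine Finset.sum_eq_single i (fun j _ hji => ?_) (fun h => absurd (Finset.mem_univ i) h)
        rcases lt_or_gt_of_ne hji with h | h
        · rw [htri i j c h]; simp
        · rw [htri j i d h]; simp
    have l3 : ∑ i, ψ (p i * c * p i) (p i * d * p i) =
        ∑ i, t1 i (π i (c * d)) + ∑ i, t2 i (π i (d * c)) := by
      rw [← Finset.sum_add_distrib]
      refine Finset.sum_congr rfl fun i _ => ?_
      rw [← hσπ, ← hσπ, ht, hπ, hπ]
    simp only [add_apply, neg_apply, sum_apply, ContinuousLinearMap.comp_apply]
    linear_combination l2 - l1 + l3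
  · intro x
    have hdec : x = ∑ i, ∑ j, p i * x * p j := by
      simp only [← Finset.mul_sum, ← Finset.sum_mul, hsum, one_mul, mul_one]
    rw [hdec]
    refine Subalgebra.sum_mem _ fun i _ => Subalgebra.sum_mem _ fun j _ => ?_
    rcases lt_trichotomy i j with h | rfl | h
    · have o : p j * p i = 0 := by simpa using htri j i 1 h
      have m1 : p i ∈ Algebra.adjoin ℂ {e : A | e * e = e} := Algebra.subset_adjoin (hp i)
      have m2 : p i + p i * x * p j ∈ Algebra.adjoin ℂ {e : A | e * e = e} :=
        Algebra.subset_adjoin (by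
          show _ = _
          rw [show (p i + p i * x * p j) * (p i + p i * x * p j) = p i * p i + p i * p i * x * p j
            + p i * x * (p j * p i) + p i * x * (p j * p i) * x * p j by noncomm_ring, hp, o]; simp)
      simpa using Subalgebra.sub_mem _ m2 m1
    · rw [← hσπ]
      have key : ∀ z ∈ Algebra.adjoin ℂ {e : B i | e * e = e},
          σ i z ∈ Algebra.adjoin ℂ {e : A | e * e = e} := by
        intro z hz
        induction hz using Algebra.adjoin_induction with
        | mem e he =>
          refine Algebra.subset_adjoin ?_
          show σ i e * σ i e = σ i e
          rw [← hσ, he]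
        | algebraMap r =>
          rw [Algebra.algebraMap_eq_smul_one, map_smul]
          refine Subalgebra.smul_mem _ (Algebra.subset_adjoin ?_) r
          show σ i 1 * σ i 1 = σ i 1
          rw [← hσ, one_mul]
        | add x y _ _ hx hy => rw [map_add]; exact Subalgebra.add_mem _ hx hy
        | mul x y _ _ hx hy => rw [hσ]; exact Subalgebra.mul_mem _ hx hy
      exact key _ ((hB i).2 _)
    · rw [htri i j x h]; exact Subalgebra.zero_mem _

set_option synthInstance.maxHeartbeats 1000000 in
/-- Every finite nest algebra on a complex Hilbert space is two-sided zero product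
determined.  A finite nest is a finite chain `{0} = N₀ ⊊ N₁ ⊊ ⋯ ⊊ N_k = H` of closed
subspaces, and the nest algebra (realized as the subalgebra `S ≤ B(H)`) consists of
all operators leaving each `Nᵢ` invariant. -/
theorem finite_nest_algebra_two_sided_zpd (H : Type*) [NormedAddCommGroup H]
    [InnerProductSpace ℂ H] [CompleteSpace H]
    (k : ℕ) (N : Fin (k + 1) → Submodule ℂ H)
    (hclosed : ∀ i, IsClosed ((N i : Submodule ℂ H) : Set H))
    (hmono : StrictMono N) (hbot : N 0 = ⊥) (htop : N (Fin.last k) = ⊤)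
    (S : Subalgebra ℂ (H →L[ℂ] H))
    (hS : ∀ T : H →L[ℂ] H, T ∈ S ↔ ∀ i, ∀ x ∈ N i, T x ∈ N i) :
    TwoSidedZeroProductDetermined ↥S := by
  have hle : ∀ {i j}, i ≤ j → N i ≤ N j := fun h => hmono.monotone h
  have hcs : ∀ i, CompleteSpace (N i) := fun i => (hclosed i).completeSpace_coe
  let P : Fin (k + 1) → H →L[ℂ] H := fun i => (N i).starProjection
  have P_fix : ∀ i x, x ∈ N i → P i x = x := fun i x hx => Submodule.starProjection_eq_self_iff.2 hx
  have P_mem : ∀ i x, P i x ∈ N i := fun i x => Submodule.starProjection_apply_mem _ _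
  let K : Fin k → Submodule ℂ H := fun i => N i.succ ⊓ (N i.castSucc)ᗮ
  have hKc : ∀ i, CompleteSpace (K i) := fun i =>
    IsClosed.completeSpace_coe (hs := by
      have := (hclosed i.succ).inter (N i.castSucc).isClosed_orthogonal
      exact this)
  let q : Fin k → H →L[ℂ] H := fun i => P i.succ - P i.castSucc
  have hq : ∀ i x, q i x = P i.succ x - P i.castSucc x := fun i x => rfl
  have hcs' : ∀ i : Fin k, N i.castSucc ≤ N i.succ := fun i => hle (Fin.castSucc_le_succ i)
  have q_kill : ∀ i x, x ∈ N i.castSucc → q i x = 0 := fun i x hx => by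
    rw [hq, P_fix _ _ hx, P_fix _ _ (hcs' i hx), sub_self]
  have q_mem : ∀ i x, q i x ∈ K i := fun i x => by
    refine ⟨(N i.succ).sub_mem (P_mem _ _) (hcs' i (P_mem _ _)), ?_⟩
    have e : q i x = (x - P i.castSucc x) - (x - P i.succ x) := by rw [hq]; abel
    rw [e]
    exact Submodule.sub_mem _ (Submodule.sub_starProjection_mem_orthogonal x)
      (Submodule.orthogonal_le (hcs' i) (Submodule.sub_starProjection_mem_orthogonal x))
  have q_fix : ∀ i x, x ∈ K i → q i x = x := fun i x hx => by
    have h0 : P i.castSucc x = 0 := (Submodule.starProjection_apply_eq_zero_iff _).2 hx.2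
    rw [hq, P_fix _ _ hx.1, h0, sub_zero]
  -- operators into `K i` killing `N i.castSucc` lie in `S`
  have inS : ∀ i (T : H →L[ℂ] H), (∀ x, T x ∈ K i) → (∀ x ∈ N i.castSucc, T x = 0) → T ∈ S := by
    intro i T h1 h2
    rw [hS]
    intro j x hx
    rcases le_or_gt j i.castSucc with h | h
    · rw [h2 x (hle h hx)]; exact Submodule.zero_mem _
    · exact hle (Fin.castSucc_lt_iff_succ_le.1 h) (h1 x).1
  let p : Fin k → S := fun i => ⟨q i, inS i _ (q_mem i) (q_kill i)⟩
  let u : ∀ i, H →L[ℂ] K i := fun i => (q i).codRestrict (K i) (q_mem i)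
  let σ : ∀ i, (K i →L[ℂ] K i) →L[ℂ] S := fun i =>
    { toFun := fun T => ⟨(K i).subtypeL ∘L T ∘L u i, inS i _ (fun x => (T (u i x)).2) (by
        intro x hx
        have : u i x = 0 := Subtype.ext (q_kill i x hx)
        simp [this])⟩
      map_add' := fun a b => by ext x; simp
      map_smul' := fun a b => by ext x; simp
      cont := by
        refine Continuous.subtype_mk ?_ _
        exact (continuous_const.clm_comp (continuous_id.clm_comp continuous_const)) }
  let π : ∀ i, S →L[ℂ] (K i →L[ℂ] K i) := fun i =>
    { toFun := fun c => u i ∘L (c : H →L[ℂ] H) ∘L (K i).subtypeL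
      map_add' := fun a b => by ext x; simp
      map_smul' := fun a b => by ext x; simp
      cont := continuous_const.clm_comp (continuous_subtype_val.clm_comp continuous_const) }
  have hσ_app : ∀ i T x, (σ i T : H →L[ℂ] H) x = T (u i x) := fun i T x => rfl
  have hπ_app : ∀ i c x, ((π i c x : K i) : H) = q i ((c : H →L[ℂ] H) x) := fun i c x => rfl
  have hu : ∀ i (x : K i), u i x = x := fun i x => Subtype.ext (q_fix i x x.2)
  have hu' : ∀ i x, ((u i x : K i) : H) = q i x := fun i x => rfl
  have main := z_tri (A := S) p
    (by
      intro i
      ext x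
      exact q_fix i _ (q_mem i x))
    (by
      ext x
      have h1 : ((∑ i, p i : S) : H →L[ℂ] H) = ∑ i, q i := by
        rw [AddSubmonoidClass.coe_finsetSum]
      have h2 : ∑ i, q i = P (Fin.last k) - P 0 := by
        simp only [q, Finset.sum_sub_distrib]
        have a := Fin.sum_univ_succ P
        have b := Fin.sum_univ_castSucc P
        rw [sub_eq_sub_iff_add_eq_add, add_comm, ← a, b, add_comm]
      rw [h1, h2, sub_apply, P_fix (Fin.last k) x (by rw [htop]; trivial)]
      have h3 : P 0 x = 0 := by simpa [hbot] using P_mem 0 x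
      rw [h3, sub_zero]; rfl)
    (by
      intro i j c hji
      ext x
      show q i ((c : H →L[ℂ] H) (q j x)) = 0
      refine q_kill i _ ((hS c).1 c.2 _ _ ?_)
      exact hle (by rw [Fin.le_def]; simpa using hji) (q_mem j x).1)
    (fun i => (K i →L[ℂ] K i)) σ
    (by
      intro i x y
      ext z
      show ((x (y (u i z)) : K i) : H) = x (u i (y (u i z)))
      rw [hu])
    π
    (by
      intro i c d
      ext x
      show q i ((c : H →L[ℂ] H) ((d : H →L[ℂ] H) x)) = q i ((c : H →L[ℂ] H) (q i ((d : H →L[ℂ] H) x)))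
      rw [← sub_eq_zero, ← map_sub, ← map_sub]
      refine q_kill i _ ((hS c).1 c.2 _ _ ?_)
      rw [hq, P_fix i.succ _ ((hS d).1 d.2 _ _ x.2.1), sub_sub_cancel]
      exact P_mem _ _)
    (by
      intro i c
      ext x
      rfl)
    (fun i => z_BH (K i))
  intro φ hc h
  exact z_main main.2 main.1 φ hc h
end
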